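/- arXiv:2007.14231 — 7 statements merged into one kernel-verified Lean document; each statement's English description precedes it below -/
import Mathlib

section
/- Let a ≥ b ≥ c > 0 with a = b + c, let A, B, C ∈ ℝ² be a degenerate triangle configuration with these side lengths, and let (Aₙ, Bₙ, Cₙ) be affinely independent triples in ℝ² with Aₙ → A, Bₙ → B, Cₙ → C. If mₙ is a global minimizer of the perimeter distance functional of the triangle AₙBₙCₙ for each n, then (i) ‖mₙ − Cₙ‖ → a/2 (Cₙ is the common vertex of the sides of lengths close to a and b), and (ii) the ratio infDist(mₙ, affineSpan{Bₙ, Cₙ}) / infDist(mₙ, affineSpan{Cₙ, Aₙ}) of the distances from mₙ to the lines containing these two sides tends to 1. -/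
/-!
For a degenerate triangle the sides `AB` and `CA` together cover `BC` once, so the functional is
twice the distance functional of the segment `BC`, whose only minimizer is the midpoint
(`eq_midpoint_of_segDist_le`). The functional depends continuously on all points and grows at least
linearly, uniformly in `n` (`le_perimDist`); hence the medians converge to the midpoint of `BC`
(`tendsto_median`), which gives the first limit.

For the second limit, use Cartesian coordinates with origin `Cn`, first axis towards `Bn`, and `An`
above it: `Bn = (L, 0)`, `An = (p, h)` with `h > 0` and `h → 0`, and `mn = (x, y)`. The functional is
differentiable even at points of the sides, so the vertical component of the sum of all unit vectors
from the perimeter to `mn` vanishes (`force_eq_zero`). Let `U` be the height of the triangle over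
`x`, and let `G z` be the vertical pull on `(x, z)` of the base `BC`. All points of the two upper
sides have height `U` up to a multiple of `h` times their horizontal distance to `x`, so their pull
is that of a horizontal segment at height `U` up to `O(h)` (`segment_pull`). Thus
`G y - G (U - y) = O(h)`. On the other hand `G` increases with slope of order `log (1 / R)` on
heights of size at most `R` (`log_mul_le_pull_diff`), and `y`, `U - y` tend to `0`, so the
slope tends to infinity and `2 * y - U = o(h)` (`balance`). Since `c ≤ b`, the midpoint of `BC` lies
under the side `CA`, so `U / h → a / (2 * b)`, hence `y / h → a / (4 * b)`, and the distances from
`mn` to the lines `BC` and `CA` are both asymptotic to `h * a / (4 * b)`.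
-/

open MeasureTheory Metric Filter

noncomputable section

abbrev Plane := EuclideanSpace ℝ (Fin 2)

/-- The perimeter distance functional of the triangle `ABC`. -/
noncomputable def perimDist (A B C X : Plane) : ℝ :=
  ‖A - B‖ * (∫ t in (0:ℝ)..1, ‖(1 - t) • A + t • B - X‖) +
  ‖B - C‖ * (∫ t in (0:ℝ)..1, ‖(1 - t) • B + t • C - X‖) +
  ‖C - A‖ * (∫ t in (0:ℝ)..1, ‖(1 - t) • C + t • A - X‖)

/-- A degenerate triangle configuration with side lengths `a ≥ b ≥ c > 0`, `a = b + c`: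
collinear points with `‖B - C‖ = a`, `‖C - A‖ = b`, `‖A - B‖ = c`. -/
def DegenConfig (a b c : ℝ) (A B C : Plane) : Prop :=
  Collinear ℝ ({A, B, C} : Set Plane) ∧ ‖B - C‖ = a ∧ ‖C - A‖ = b ∧ ‖A - B‖ = c

/-! ### The vertical pull of nearly horizontal segments -/

/-- The vertical component of the unit vector from the origin towards `(τ, r)`: the vertical pull
exerted on a point by an element of curve at horizontal distance `τ` and vertical distance `r`.
It is `0` at `τ = r = 0`. -/
def pull (τ r : ℝ) : ℝ := r / √(τ ^ 2 + r ^ 2)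

lemma abs_pull_le_one (τ r : ℝ) : |pull τ r| ≤ 1 := by
  unfold pull
  rw [abs_div, abs_of_nonneg (Real.sqrt_nonneg _)]
  apply div_le_one_of_le₀ _ (Real.sqrt_nonneg _)
  exact Real.abs_le_sqrt (by nlinarith [sq_nonneg τ])

lemma pull_neg (τ r : ℝ) : pull τ (-r) = -pull τ r := by
  simp [pull, neg_div]

lemma measurable_pull : Measurable (fun p : ℝ × ℝ => pull p.1 p.2) := by
  unfold pull
  fun_prop

lemma hasDerivAt_pull {τ : ℝ} (hτ : τ ≠ 0) (r : ℝ) :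
    HasDerivAt (pull τ) (τ ^ 2 / (τ ^ 2 + r ^ 2) / √(τ ^ 2 + r ^ 2)) r := by
  have hp : 0 < τ ^ 2 + r ^ 2 := by positivity
  have h1 : HasDerivAt (fun r : ℝ => τ ^ 2 + r ^ 2) (2 * r) r := by
    simpa using (hasDerivAt_pow 2 r).const_add (τ ^ 2)
  have h2 : HasDerivAt (pull τ) _ r :=
    (hasDerivAt_id r).div (h1.sqrt hp.ne') (Real.sqrt_pos.2 hp).ne'
  refine h2.congr_deriv ?_
  have hs := Real.sq_sqrt hp.le
  have hs0 := Real.sqrt_pos.2 hp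
  set s := √(τ ^ 2 + r ^ 2)
  rw [← hs]
  field_simp
  simp only [id]
  linear_combination hs

lemma pull_mono (τ : ℝ) : Monotone (pull τ) := by
  rcases eq_or_ne τ 0 with rfl | hτ
  · have h : ∀ r, pull 0 r = r / |r| := fun r => by simp [pull, Real.sqrt_sq_eq_abs]
    intro a b hab
    rw [h, h]
    rcases lt_trichotomy a 0 with ha | rfl | ha
    · rw [abs_of_neg ha, div_neg, div_self ha.ne]
      have := abs_le.1 (abs_pull_le_one 0 b)
      rw [h] at this
      exact this.1
    · simp only [zero_div]; positivity
    · rw [abs_of_pos ha, div_self ha.ne', abs_of_pos (ha.trans_le hab),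
        div_self (ha.trans_le hab).ne']
  · exact monotone_of_hasDerivAt_nonneg (fun r => hasDerivAt_pull hτ r) (fun r => by positivity)

/-- `pull τ` is `1/|τ|`-Lipschitz; the assumption forces `r = q` when `τ = 0`. -/
lemma abs_pull_sub_le {τ r q k : ℝ} (h : |r - q| ≤ k * |τ|) (hk : 0 ≤ k) :
    |pull τ r - pull τ q| ≤ k := by
  rcases eq_or_ne τ 0 with rfl | hτ
  · have : r = q := by simpa [sub_eq_zero] using h
    simpa [this] using hk
  have hτ' : 0 < |τ| := abs_pos.2 hτ
  have h1 := Convex.norm_image_sub_le_of_norm_hasDerivWithin_le (f := pull τ) (s := Set.univ)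
    (f' := fun r => τ ^ 2 / (τ ^ 2 + r ^ 2) / √(τ ^ 2 + r ^ 2)) (C := 1 / |τ|) (x := q) (y := r)
    (fun x _ => (hasDerivAt_pull hτ x).hasDerivWithinAt) ?_ convex_univ trivial trivial
  · rw [Real.norm_eq_abs, Real.norm_eq_abs] at h1
    refine h1.trans ?_
    rw [one_div, inv_mul_le_iff₀ hτ']
    linarith
  · intro x _
    have hp : 0 < τ ^ 2 + x ^ 2 := by positivity
    rw [Real.norm_of_nonneg (by positivity)]
    have : |τ| ≤ √(τ ^ 2 + x ^ 2) := Real.abs_le_sqrt (by nlinarith [sq_nonneg x])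
    refine div_le_div₀ zero_le_one ?_ hτ' this
    exact div_le_one_of_le₀ (by nlinarith [sq_nonneg x]) hp.le

/-- Quantitative strict monotonicity of `pull τ` on `[-τ, τ]`. The lower bound is not integrable in
`τ` near `0`, which is what makes a logarithm appear after integration. -/
lemma le_pull_sub {τ r q : ℝ} (hτ : 0 < τ) (hr : |r| ≤ τ) (hq : |q| ≤ τ) (hqr : q ≤ r) :
    (r - q) / 4 * (1 / τ) ≤ pull τ r - pull τ q := by
  have h1 := Convex.mul_sub_le_image_sub_of_le_deriv (D := Set.Icc (-τ) τ) (convex_Icc _ _)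
    (f := pull τ) (C := 1 / (4 * τ))
    (fun x _ => (hasDerivAt_pull hτ.ne' x).continuousAt.continuousWithinAt)
    (fun x _ => (hasDerivAt_pull hτ.ne' x).differentiableAt.differentiableWithinAt)
    ?_ q (abs_le.1 hq) r (abs_le.1 hr) hqr
  · refine le_trans (le_of_eq ?_) h1
    field_simp
  · intro x hx
    rw [(hasDerivAt_pull hτ.ne' x).deriv]
    rw [interior_Icc] at hx
    have hx2 : x ^ 2 ≤ τ ^ 2 := sq_le_sq' hx.1.le hx.2.le
    have hs : √(τ ^ 2 + x ^ 2) ≤ 2 * τ := by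
      rw [Real.sqrt_le_left (by positivity)]; nlinarith
    have hs0 : 0 < √(τ ^ 2 + x ^ 2) := Real.sqrt_pos.2 (by positivity)
    have h2 : 1 / 2 ≤ τ ^ 2 / (τ ^ 2 + x ^ 2) := by
      rw [div_le_div_iff₀ (by norm_num) (by positivity)]; linarith
    calc 1 / (4 * τ) = (1 / 2) / (2 * τ) := by field_simp; norm_num
      _ ≤ _ := div_le_div₀ (by positivity) h2 hs0 hs

lemma intervalIntegrable_of_abs_le {f : ℝ → ℝ} (hf : Measurable f) {M : ℝ} (h : ∀ x, |f x| ≤ M)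
    (a b : ℝ) : IntervalIntegrable f volume a b :=
  (intervalIntegrable_const (c := M)).mono_fun hf.aestronglyMeasurable
    (Eventually.of_forall fun x => by
      simp only [Real.norm_eq_abs]; exact (h x).trans (le_abs_self _))

lemma measurable_pull_comp {f g : ℝ → ℝ} (hf : Measurable f) (hg : Measurable g) :
    Measurable fun t => pull (f t) (g t) := measurable_pull.comp (hf.prodMk hg)

/-- The vertical pull on `(x, y)` of a nearly horizontal segment from `(α, η₀)` to `(β, η₁)` is
that of the horizontal segment over `[α, β]` at height `U`, up to an error linear in the slope
bound `k`, if the points of the segment deviate from height `U` by at most `k` times their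
horizontal distance to `x`. -/
lemma segment_pull {α β η₀ η₁ x y U k : ℝ} (hαβ : α < β) (hk : 0 ≤ k)
    (hη : |η₁ - η₀| ≤ k * (β - α))
    (hU : ∀ t ∈ Set.Icc (0 : ℝ) 1,
      |(1 - t) * η₀ + t * η₁ - U| ≤ k * |x - ((1 - t) * α + t * β)|) :
    |√((β - α) ^ 2 + (η₁ - η₀) ^ 2) *
        (∫ t in (0:ℝ)..1, pull (x - ((1 - t) * α + t * β)) (y - ((1 - t) * η₀ + t * η₁))) -
      ∫ s in α..β, pull (x - s) (y - U)| ≤ 2 * k * (β - α) := by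
  have hd : 0 < β - α := sub_pos.2 hαβ
  set W := √((β - α) ^ 2 + (η₁ - η₀) ^ 2) with hW
  have hW1 : β - α ≤ W := Real.le_sqrt_of_sq_le (by nlinarith [sq_nonneg (η₁ - η₀)])
  have hW2 : W ≤ (β - α) + k * (β - α) := by
    rw [hW, Real.sqrt_le_left (by positivity)]
    have := sq_le_sq' (abs_le.1 hη).1 (abs_le.1 hη).2
    nlinarith [mul_nonneg hk (sq_nonneg (β - α))]
  have hcv : ∫ s in α..β, pull (x - s) (y - U) =
      ∫ t in (0:ℝ)..1, (β - α) * pull (x - ((1 - t) * α + t * β)) (y - U) := by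
    rw [intervalIntegral.integral_const_mul, ← smul_eq_mul]
    have := intervalIntegral.smul_integral_comp_add_mul (a := 0) (b := 1)
      (fun s => pull (x - s) (y - U)) (β - α) α
    simp only [mul_zero, add_zero, mul_one, add_sub_cancel] at this
    rw [← this]
    congr 2
    ext t
    ring_nf
  rw [hcv, ← intervalIntegral.integral_const_mul, ← intervalIntegral.integral_sub]
  · have := intervalIntegral.norm_integral_le_of_norm_le_const (a := 0) (b := 1)
      (f := fun t => W * pull (x - ((1 - t) * α + t * β)) (y - ((1 - t) * η₀ + t * η₁)) -
        (β - α) * pull (x - ((1 - t) * α + t * β)) (y - U)) (C := 2 * k * (β - α)) ?_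
    · simpa using this
    · intro t ht
      rw [Set.uIoc_of_le zero_le_one] at ht
      have hl := abs_pull_sub_le (τ := x - ((1 - t) * α + t * β))
        (r := y - ((1 - t) * η₀ + t * η₁)) (q := y - U) (k := k) (by
          rw [← abs_neg]
          convert hU t ⟨ht.1.le, ht.2⟩ using 2
          ring) hk
      have h1 := abs_pull_le_one (x - ((1 - t) * α + t * β)) (y - ((1 - t) * η₀ + t * η₁))
      set p := pull (x - ((1 - t) * α + t * β)) (y - ((1 - t) * η₀ + t * η₁))
      set q := pull (x - ((1 - t) * α + t * β)) (y - U)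
      rw [Real.norm_eq_abs, show W * p - (β - α) * q = (W - (β - α)) * p + (β - α) * (p - q) by
        ring]
      refine (abs_add_le _ _).trans ?_
      rw [abs_mul, abs_mul, abs_of_nonneg (sub_nonneg.2 hW1), abs_of_pos hd]
      nlinarith [abs_nonneg p, mul_le_mul_of_nonneg_left hl hd.le,
        mul_le_mul_of_nonneg_left h1 (sub_nonneg.2 hW1)]
  · exact (intervalIntegrable_of_abs_le (measurable_pull_comp (by fun_prop) (by fun_prop))
      (fun t => abs_pull_le_one _ _) _ _).const_mul _
  · exact (intervalIntegrable_of_abs_le (measurable_pull_comp (by fun_prop) (by fun_prop))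
      (fun t => abs_pull_le_one _ _) _ _).const_mul _

/-- For `D ≤ x ≤ L`, the vertical pull of the horizontal segment `[0, L]` on `(x, y)` increases in
`y`, at rate at least `log (D / R) / 4` for `|y| ≤ R`. This follows by integrating `le_pull_sub`
over the horizontal distances in `[R, D]`; the rest contributes nonnegatively. -/
lemma log_mul_le_pull_diff {L x D R y δ : ℝ} (hL : x - L ≤ 0) (hx : D ≤ x)
    (hR : 0 < R) (hRD : R ≤ D) (hy : |y| ≤ R) (hδ : |δ| ≤ R) (h : δ ≤ y) :
    (y - δ) / 4 * Real.log (D / R) ≤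
      (∫ s in (0:ℝ)..L, pull (x - s) y) - ∫ s in (0:ℝ)..L, pull (x - s) δ := by
  have hi : ∀ z a b, IntervalIntegrable (fun τ => pull τ z) volume a b := fun z a b =>
    intervalIntegrable_of_abs_le (measurable_pull_comp (by fun_prop) (by fun_prop))
      (fun t => abs_pull_le_one _ _) _ _
  rw [intervalIntegral.integral_comp_sub_left (fun τ => pull τ y),
    intervalIntegral.integral_comp_sub_left (fun τ => pull τ δ),
    ← intervalIntegral.integral_sub (hi _ _ _) (hi _ _ _), sub_zero]
  calc (y - δ) / 4 * Real.log (D / R)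
      = ∫ τ in R..D, (y - δ) / 4 * (1 / τ) := by
        rw [intervalIntegral.integral_const_mul, integral_one_div_of_pos hR (hR.trans_le hRD)]
    _ ≤ ∫ τ in R..D, (pull τ y - pull τ δ) := by
        apply intervalIntegral.integral_mono_on hRD _ ((hi _ _ _).sub (hi _ _ _))
        · intro τ hτ
          exact le_pull_sub (hR.trans_le hτ.1) (hy.trans hτ.1) (hδ.trans hτ.1) h
        · apply ContinuousOn.intervalIntegrable
          rw [Set.uIcc_of_le hRD]
          intro τ hτ
          have : τ ≠ 0 := (hR.trans_le hτ.1).ne'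
          fun_prop (disch := assumption)
    _ ≤ _ := by
        apply intervalIntegral.integral_mono_interval (by linarith) hRD hx _
          ((hi _ _ _).sub (hi _ _ _))
        exact Eventually.of_forall fun τ => sub_nonneg.2 (pull_mono τ h)

lemma abs_mul_log_le_pull_diff {L x D R y δ : ℝ} (hL : x - L ≤ 0) (hx : D ≤ x)
    (hR : 0 < R) (hRD : R ≤ D) (hy : |y| ≤ R) (hδ : |δ| ≤ R) :
    |y - δ| / 4 * Real.log (D / R) ≤
      |(∫ s in (0:ℝ)..L, pull (x - s) y) - ∫ s in (0:ℝ)..L, pull (x - s) δ| := by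
  rcases le_total δ y with h | h
  · rw [abs_of_nonneg (sub_nonneg.2 h)]
    exact (log_mul_le_pull_diff hL hx hR hRD hy hδ h).trans (le_abs_self _)
  · rw [abs_sub_comm y, abs_of_nonneg (sub_nonneg.2 h), abs_sub_comm]
    exact (log_mul_le_pull_diff hL hx hR hRD hδ hy h).trans (le_abs_self _)

/-- If the vertical pulls on `(x, y)` of the sides of the triangle `(0, 0)`, `(p, h)`, `(L, 0)`
cancel, then `y` is close to half the height `U` of the triangle over `x`, relative to `h`. -/
lemma balance {L p h x y D R k U : ℝ} (hp : 0 < p) (hpL : p < L) (hh : 0 < h)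
    (hk1 : h / p ≤ k) (hk2 : h / (L - p) ≤ k) (hU : U = min (h / p * x) (h / (L - p) * (L - x)))
    (hL : x ≤ L) (hx : D ≤ x) (hR : 0 < R) (hRD : R ≤ D) (hy : |y| ≤ R) (hδ : |U - y| ≤ R)
    (heq : √((L - p) ^ 2 + (0 - h) ^ 2) *
        (∫ t in (0:ℝ)..1, pull (x - ((1 - t) * p + t * L)) (y - ((1 - t) * h + t * 0))) +
      √((L - 0) ^ 2 + (0 - 0) ^ 2) *
        (∫ t in (0:ℝ)..1, pull (x - ((1 - t) * 0 + t * L)) (y - ((1 - t) * 0 + t * 0))) +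
      √((p - 0) ^ 2 + (h - 0) ^ 2) *
        (∫ t in (0:ℝ)..1, pull (x - ((1 - t) * 0 + t * p)) (y - ((1 - t) * 0 + t * h))) = 0) :
    |2 * y - U| / 4 * Real.log (D / R) ≤ 2 * k * L := by
  have hLp : 0 < L - p := sub_pos.2 hpL
  have hk : 0 ≤ k := le_trans (by positivity) hk1
  have e1 : h / p * p = h := by field_simp
  have e2 : h / (L - p) * (L - p) = h := by field_simp
  have k1 : h ≤ k * p := by rwa [div_le_iff₀ hp] at hk1
  have k2 : h ≤ k * (L - p) := by rwa [div_le_iff₀ hLp] at hk2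
  set m₁ := h / p with hm1
  set m₂ := h / (L - p) with hm2
  have hm1p : 0 < m₁ := by positivity
  have hm2p : 0 < m₂ := by positivity
  -- The two upper sides form the graph of a minimum of two linear functions, `k`-Lipschitz.
  have lipU : ∀ s, |min (m₁ * s) (m₂ * (L - s)) - U| ≤ k * |x - s| := by
    intro s
    rw [hU]
    refine (abs_min_sub_min_le_max _ _ _ _).trans (max_le ?_ ?_)
    · rw [← mul_sub, abs_mul, abs_of_pos hm1p, abs_sub_comm]
      exact mul_le_mul_of_nonneg_right hk1 (abs_nonneg _)
    · rw [← mul_sub, abs_mul, abs_of_pos hm2p]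
      refine le_trans (le_of_eq ?_) (mul_le_mul_of_nonneg_right hk2 (abs_nonneg _))
      congr 2; ring
  have hs1 := segment_pull (α := p) (β := L) (η₀ := h) (η₁ := 0) (x := x) (y := y) (U := U)
    (k := k) hpL hk (by rw [zero_sub, abs_neg, abs_of_pos hh]; exact k2) (by
      rintro t ⟨h0, h1⟩
      convert lipU ((1 - t) * p + t * L) using 2
      congr 1
      rw [min_eq_right]
      · linear_combination -(1 - t) * e2
      · nlinarith [mul_nonneg h0 hLp.le, mul_nonneg (mul_nonneg h0 hLp.le) hm1p.le])
  have hs3 := segment_pull (α := 0) (β := p) (η₀ := 0) (η₁ := h) (x := x) (y := y) (U := U)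
    (k := k) hp hk (by rw [sub_zero, sub_zero, abs_of_pos hh]; exact k1) (by
      rintro t ⟨h0, h1⟩
      convert lipU ((1 - t) * 0 + t * p) using 2
      congr 1
      rw [min_eq_left]
      · linear_combination -t * e1
      · nlinarith [mul_nonneg (sub_nonneg.2 h1) hm2p.le,
          mul_nonneg (mul_nonneg (sub_nonneg.2 h1) hp.le) hm2p.le])
  have hs2 := segment_pull (α := 0) (β := L) (η₀ := 0) (η₁ := 0) (x := x) (y := y) (U := 0)
    (k := 0) (hp.trans hpL) le_rfl (by simp) (by simp)
  have hi : ∀ z a b, IntervalIntegrable (fun s => pull (x - s) z) volume a b := fun z a b =>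
    intervalIntegrable_of_abs_le (measurable_pull_comp (by fun_prop) (by fun_prop))
      (fun t => abs_pull_le_one _ _) _ _
  have hadd := intervalIntegral.integral_add_adjacent_intervals (hi (y - U) 0 p) (hi (y - U) p L)
  have hneg : ∫ s in (0:ℝ)..L, pull (x - s) (y - U) = -∫ s in (0:ℝ)..L, pull (x - s) (U - y) := by
    rw [← intervalIntegral.integral_neg]
    congr 1; ext s
    rw [← pull_neg, neg_sub]
  -- Up to `O(k)`, the upper sides at height `U` pull with `-G (U - y)` and the base with `G y`,
  -- where `G z` is the pull of the base at height `z`.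
  have key := abs_mul_log_le_pull_diff (L := L) (sub_nonpos.2 hL) hx hR hRD hy hδ
  rw [show y - (U - y) = 2 * y - U by ring] at key
  refine key.trans ?_
  rw [hneg] at hadd
  simp only [sub_zero y] at hs2
  rw [abs_le] at hs1 hs2 hs3 ⊢
  constructor <;> linarith [hs1.1, hs1.2, hs2.1, hs2.2, hs3.1, hs3.2]

/-! ### Convergence of the medians -/

lemma continuous_segDist {ι : Type*} [TopologicalSpace ι] {P Q X : ι → Plane}
    (hP : Continuous P) (hQ : Continuous Q) (hX : Continuous X) :
    Continuous fun i => ∫ t in (0:ℝ)..1, ‖(1 - t) • P i + t • Q i - X i‖ := by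
  apply intervalIntegral.continuous_parametric_intervalIntegral_of_continuous'
  unfold Function.uncurry
  fun_prop

lemma continuous_perimDist :
    Continuous fun q : Plane × Plane × Plane × Plane => perimDist q.1 q.2.1 q.2.2.1 q.2.2.2 := by
  have hA : Continuous fun q : Plane × Plane × Plane × Plane => q.1 := by fun_prop
  have hB : Continuous fun q : Plane × Plane × Plane × Plane => q.2.1 := by fun_prop
  have hC : Continuous fun q : Plane × Plane × Plane × Plane => q.2.2.1 := by fun_prop
  have hX : Continuous fun q : Plane × Plane × Plane × Plane => q.2.2.2 := by fun_prop
  unfold perimDist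
  exact (((hA.sub hB).norm.mul (continuous_segDist hA hB hX)).add
    ((hB.sub hC).norm.mul (continuous_segDist hB hC hX))).add
    ((hC.sub hA).norm.mul (continuous_segDist hC hA hX))

lemma tendsto_of_continuous₄ {f : Plane → Plane → Plane → Plane → ℝ}
    (hf : Continuous fun q : Plane × Plane × Plane × Plane => f q.1 q.2.1 q.2.2.1 q.2.2.2)
    {An Bn Cn Xn : ℕ → Plane} {A B C X : Plane}
    (hA : Tendsto An atTop (nhds A)) (hB : Tendsto Bn atTop (nhds B))
    (hC : Tendsto Cn atTop (nhds C)) (hX : Tendsto Xn atTop (nhds X)) :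
    Tendsto (fun n => f (An n) (Bn n) (Cn n) (Xn n)) atTop (nhds (f A B C X)) :=
  (hf.tendsto (A, B, C, X)).comp (hA.prodMk_nhds (hB.prodMk_nhds (hC.prodMk_nhds hX)))

lemma tendsto_perimDist {An Bn Cn Xn : ℕ → Plane} {A B C X : Plane}
    (hA : Tendsto An atTop (nhds A)) (hB : Tendsto Bn atTop (nhds B))
    (hC : Tendsto Cn atTop (nhds C)) (hX : Tendsto Xn atTop (nhds X)) :
    Tendsto (fun n => perimDist (An n) (Bn n) (Cn n) (Xn n)) atTop
      (nhds (perimDist A B C X)) :=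
  tendsto_of_continuous₄ continuous_perimDist hA hB hC hX

/-- The functional grows at least linearly, uniformly in the triangle. -/
lemma le_perimDist (A B C X : Plane) :
    (‖A - B‖ + ‖B - C‖ + ‖C - A‖) * (‖X - C‖ - (‖A - C‖ + ‖B - C‖)) ≤ perimDist A B C X := by
  have h : ∀ P Q : Plane, ‖P - C‖ ≤ ‖A - C‖ + ‖B - C‖ → ‖Q - C‖ ≤ ‖A - C‖ + ‖B - C‖ →
      ‖X - C‖ - (‖A - C‖ + ‖B - C‖) ≤ ∫ t in (0:ℝ)..1, ‖(1 - t) • P + t • Q - X‖ := by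
    intro P Q hP hQ
    have := intervalIntegral.integral_mono_on (a := 0) (b := 1) (μ := volume)
      (f := fun _ => ‖X - C‖ - (‖A - C‖ + ‖B - C‖)) (g := fun t => ‖(1 - t) • P + t • Q - X‖)
      zero_le_one (by simp) (Continuous.intervalIntegrable (by fun_prop) _ _) ?_
    · simpa using this
    · rintro t ⟨h0, h1⟩
      have e : X - C = ((1 - t) • (P - C) + t • (Q - C)) - ((1 - t) • P + t • Q - X) := by
        module
      have h2 : ‖X - C‖ ≤ (1 - t) * ‖P - C‖ + t * ‖Q - C‖ + ‖(1 - t) • P + t • Q - X‖ := by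
        conv_lhs => rw [e]
        refine (norm_sub_le _ _).trans (add_le_add_left ((norm_add_le _ _).trans ?_) _)
        rw [norm_smul, norm_smul, Real.norm_of_nonneg h0, Real.norm_of_nonneg (by linarith)]
      nlinarith [mul_le_mul_of_nonneg_left hP (sub_nonneg.2 h1), mul_le_mul_of_nonneg_left hQ h0]
  have hA : ‖A - C‖ ≤ ‖A - C‖ + ‖B - C‖ := by linarith [norm_nonneg (B - C)]
  have hB : ‖B - C‖ ≤ ‖A - C‖ + ‖B - C‖ := by linarith [norm_nonneg (A - C)]
  have hC : ‖C - C‖ ≤ ‖A - C‖ + ‖B - C‖ := by simp; positivity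
  have h1 := mul_le_mul_of_nonneg_left (h A B hA hB) (norm_nonneg (A - B))
  have h2 := mul_le_mul_of_nonneg_left (h B C hB hC) (norm_nonneg (B - C))
  have h3 := mul_le_mul_of_nonneg_left (h C A hC hA) (norm_nonneg (C - A))
  unfold perimDist
  linarith

/-- Arc-length reparametrization of the distance integral over a piece of the line `C + ℝ v`. -/
lemma segDist_on_line (C v X : Plane) {α β : ℝ} (h : α ≤ β) :
    ‖(C + α • v) - (C + β • v)‖ *
        (∫ t in (0:ℝ)..1, ‖(1 - t) • (C + α • v) + t • (C + β • v) - X‖) =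
      ‖v‖ * ∫ s in α..β, ‖C + s • v - X‖ := by
  have := intervalIntegral.smul_integral_comp_add_mul (a := 0) (b := 1)
      (fun s => ‖C + s • v - X‖) (β - α) α
  simp only [mul_zero, add_zero, mul_one, add_sub_cancel, smul_eq_mul] at this
  rw [← this, show (C + α • v) - (C + β • v) = (α - β) • v by module, norm_smul,
    Real.norm_of_nonpos (by linarith), neg_sub, mul_comm _ ‖v‖, mul_assoc]
  congr 3
  ext t
  congr 1
  module

lemma segDist_symm (P Q X : Plane) :
    ‖P - Q‖ * (∫ t in (0:ℝ)..1, ‖(1 - t) • P + t • Q - X‖) =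
      ‖Q - P‖ * (∫ t in (0:ℝ)..1, ‖(1 - t) • Q + t • P - X‖) := by
  rw [norm_sub_rev]
  congr 1
  have := intervalIntegral.integral_comp_sub_left (a := 0) (b := 1)
    (fun t => ‖(1 - t) • Q + t • P - X‖) 1
  simp only [sub_self, sub_zero] at this
  rw [← this]
  congr 1
  ext t
  rw [sub_sub_cancel, add_comm]

/-- For a degenerate triangle the functional is twice that of the segment `CB`, since the two
shorter sides together traverse `CB` once. -/
lemma perimDist_degenerate (B C X : Plane) {θ : ℝ} (h0 : 0 ≤ θ) (h1 : θ ≤ 1) :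
    perimDist (C + θ • (B - C)) B C X =
      2 * (‖B - C‖ * ∫ t in (0:ℝ)..1, ‖C + t • (B - C) - X‖) := by
  have e0 : C + (0 : ℝ) • (B - C) = C := by module
  have e1 : C + (1 : ℝ) • (B - C) = B := by module
  have hAB := segDist_on_line C (B - C) X h1
  have hCA := segDist_on_line C (B - C) X h0
  have hCB := segDist_on_line C (B - C) X zero_le_one
  rw [e0] at hCA hCB
  rw [e1] at hAB hCB
  unfold perimDist
  rw [segDist_symm B C, hAB, hCA, hCB]
  have hi : ∀ a b, IntervalIntegrable (fun s : ℝ => ‖C + s • (B - C) - X‖) volume a b :=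
    fun a b => Continuous.intervalIntegrable (by fun_prop) _ _
  rw [← intervalIntegral.integral_add_adjacent_intervals (hi 0 θ) (hi θ 1)]
  ring

/-- Pairing the points `C + t • v` and `C + (1 - t) • v` and using the triangle inequality shows
that the midpoint is the only median of a segment: equality forces equality at `t = 1 / 2`. -/
lemma eq_midpoint_of_segDist_le {C v X : Plane}
    (h : ∫ t in (0:ℝ)..1, ‖C + t • v - X‖ ≤
      ∫ t in (0:ℝ)..1, ‖C + t • v - (C + (1 / 2 : ℝ) • v)‖) : X = C + (1 / 2 : ℝ) • v := by
  have hsymm : ∀ Y : Plane, ∫ t in (0:ℝ)..1, (‖C + t • v - Y‖ + ‖C + (1 - t) • v - Y‖) =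
      2 * ∫ t in (0:ℝ)..1, ‖C + t • v - Y‖ := by
    intro Y
    rw [intervalIntegral.integral_add (Continuous.intervalIntegrable (by fun_prop) _ _)
      (Continuous.intervalIntegrable (by fun_prop) _ _),
      intervalIntegral.integral_comp_sub_left (fun t => ‖C + t • v - Y‖) 1]
    simp only [sub_self, sub_zero]
    ring
  have hM : ∀ t : ℝ,
      ‖C + t • v - (C + (1 / 2 : ℝ) • v)‖ + ‖C + (1 - t) • v - (C + (1 / 2 : ℝ) • v)‖ =
        ‖(C + t • v) - (C + (1 - t) • v)‖ := by
    intro t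
    rw [show C + t • v - (C + (1 / 2 : ℝ) • v) = (t - 1 / 2) • v by module,
      show C + (1 - t) • v - (C + (1 / 2 : ℝ) • v) = (-(t - 1 / 2)) • v by module,
      show (C + t • v) - (C + (1 - t) • v) = (2 * (t - 1 / 2)) • v by module]
    simp only [norm_smul, norm_neg, norm_mul, Real.norm_ofNat]
    ring
  by_contra hne
  have hpos : 0 < ∫ t in (0:ℝ)..1, (‖C + t • v - X‖ + ‖C + (1 - t) • v - X‖ -
      ‖(C + t • v) - (C + (1 - t) • v)‖) := by
    apply intervalIntegral.integral_pos zero_lt_one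
    · fun_prop
    · intro t _
      have := norm_sub_le (C + t • v - X) (C + (1 - t) • v - X)
      rw [sub_sub_sub_cancel_right] at this
      linarith
    · refine ⟨1 / 2, by norm_num, ?_⟩
      rw [show (1 - 1 / 2 : ℝ) = 1 / 2 by norm_num, sub_self, norm_zero, sub_zero]
      have : 0 < ‖C + (1 / 2 : ℝ) • v - X‖ := norm_pos_iff.2 (sub_ne_zero.2 (Ne.symm hne))
      linarith
  rw [intervalIntegral.integral_sub (Continuous.intervalIntegrable (by fun_prop) _ _)
      (Continuous.intervalIntegrable (by fun_prop) _ _), hsymm] at hpos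
  have := hsymm (C + (1 / 2 : ℝ) • v)
  simp only [hM] at this
  linarith

/-- The medians converge to the midpoint of `BC`: they stay bounded by `le_perimDist`, and every
cluster point minimizes the limit functional, whose only minimizer is that midpoint. -/
lemma tendsto_median {a b c : ℝ} (hcb : c ≤ b) (hc : 0 < c) (habc : a = b + c)
    {A B C : Plane} (hcfg : DegenConfig a b c A B C) {An Bn Cn mn : ℕ → Plane}
    (hA : Tendsto An atTop (nhds A)) (hB : Tendsto Bn atTop (nhds B))
    (hC : Tendsto Cn atTop (nhds C))
    (hmin : ∀ n, ∀ X : Plane,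
      perimDist (An n) (Bn n) (Cn n) (mn n) ≤ perimDist (An n) (Bn n) (Cn n) X)
    (hAeq : A = C + (b / a) • (B - C)) :
    Tendsto mn atTop (nhds (C + (1 / 2 : ℝ) • (B - C))) := by
  obtain ⟨-, ha, hb, hc'⟩ := hcfg
  have hmn : ∀ n, (‖An n - Bn n‖ + ‖Bn n - Cn n‖ + ‖Cn n - An n‖) *
      (‖mn n - Cn n‖ - (‖An n - Cn n‖ + ‖Bn n - Cn n‖)) ≤ perimDist (An n) (Bn n) (Cn n) (Cn n) :=
    fun n => (le_perimDist _ _ _ _).trans (hmin n _)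
  have hper : Tendsto (fun n => ‖An n - Bn n‖ + ‖Bn n - Cn n‖ + ‖Cn n - An n‖) atTop
      (nhds (c + a + b)) := by
    rw [← ha, ← hb, ← hc']
    exact ((hA.sub hB).norm.add (hB.sub hC).norm).add (hC.sub hA).norm
  have hf := tendsto_perimDist hA hB hC hC
  have hbd : Tendsto (fun n => perimDist (An n) (Bn n) (Cn n) (Cn n) /
      (‖An n - Bn n‖ + ‖Bn n - Cn n‖ + ‖Cn n - An n‖) + (‖An n - Cn n‖ + ‖Bn n - Cn n‖) +
      ‖Cn n‖) atTop _ :=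
    ((hf.div hper (by linarith)).add ((hA.sub hC).norm.add (hB.sub hC).norm)).add hC.norm
  obtain ⟨K, hK⟩ : ∃ K, ∀ᶠ n in atTop, mn n ∈ closedBall (0 : Plane) K := by
    refine ⟨(perimDist A B C C / (c + a + b) + (‖A - C‖ + ‖B - C‖) + ‖C‖) + 1, ?_⟩
    filter_upwards [hbd.eventually (gt_mem_nhds (lt_add_one _)),
      hper.eventually (lt_mem_nhds (show 0 < c + a + b by linarith))] with n h1 h2
    rw [mem_closedBall_zero_iff]
    have h3 := (le_div_iff₀' h2).2 (hmn n)
    have h4 : ‖mn n‖ ≤ ‖mn n - Cn n‖ + ‖Cn n‖ := norm_le_norm_sub_add _ _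
    linarith
  refine (isCompact_closedBall _ K).tendsto_nhds_of_unique_mapClusterPt hK ?_
  intro X _ hX
  obtain ⟨φ, hφ, hφX⟩ := hX.tendsto_subseq
  have hle : ∀ Y, perimDist A B C X ≤ perimDist A B C Y := fun Y =>
    le_of_tendsto_of_tendsto'
      (tendsto_perimDist (hA.comp hφ.tendsto_atTop) (hB.comp hφ.tendsto_atTop)
        (hC.comp hφ.tendsto_atTop) hφX)
      (tendsto_perimDist (hA.comp hφ.tendsto_atTop) (hB.comp hφ.tendsto_atTop)
        (hC.comp hφ.tendsto_atTop) tendsto_const_nhds) fun n => hmin _ Y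
  have h0 : 0 ≤ b / a := by apply div_nonneg <;> linarith
  have h1 : b / a ≤ 1 := div_le_one_of_le₀ (by linarith) (by linarith)
  apply eq_midpoint_of_segDist_le
  have := hle (C + (1 / 2 : ℝ) • (B - C))
  rw [hAeq, perimDist_degenerate B C _ h0 h1, perimDist_degenerate B C _ h0 h1, ha] at this
  have ha0 : 0 < a := by linarith
  nlinarith

/-! ### Balance of forces at a median -/

/-- Derivative of the distance integral over a segment as the point moves in the direction `ν`;
the integrand is differentiable at all but at most one point of the segment. -/
lemma hasDerivAt_segDist {P Q : Plane} (hPQ : P ≠ Q) (X ν : Plane) :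
    HasDerivAt (fun s : ℝ => ∫ t in (0:ℝ)..1, ‖(1 - t) • P + t • Q - (X + s • ν)‖)
      (∫ t in (0:ℝ)..1, inner ℝ (X - ((1 - t) • P + t • Q)) ν / ‖X - ((1 - t) • P + t • Q)‖) 0 := by
  refine (intervalIntegral.hasDerivAt_integral_of_dominated_loc_of_lip (bound := fun _ => ‖ν‖)
    (s := Set.univ) univ_mem ?_ ?_ ?_ ?_ ?_ ?_).2
  · exact Eventually.of_forall fun s => Continuous.aestronglyMeasurable (by fun_prop)
  · exact Continuous.intervalIntegrable (by fun_prop) _ _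
  · exact Measurable.aestronglyMeasurable
      ((Continuous.measurable (by fun_prop)).div (Continuous.measurable (by fun_prop)))
  · refine Eventually.of_forall fun t _ => ?_
    apply LipschitzWith.lipschitzOnWith
    apply LipschitzWith.of_dist_le_mul
    intro s s'
    rw [Real.dist_eq, Real.dist_eq, Real.coe_nnabs, abs_of_nonneg (norm_nonneg ν)]
    refine (abs_norm_sub_norm_le _ _).trans (le_of_eq ?_)
    rw [show (1 - t) • P + t • Q - (X + s • ν) - ((1 - t) • P + t • Q - (X + s' • ν)) =
      -((s - s') • ν) by module, norm_neg, norm_smul, mul_comm, Real.norm_eq_abs]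
  · simp
  · have hfin : {t : ℝ | (1 - t) • P + t • Q = X}.Subsingleton := by
      intro t ht t' ht'
      have h : (t - t') • (Q - P) = 0 := by
        have := sub_eq_zero.2 (ht.trans ht'.symm)
        rw [← this]; module
      rcases smul_eq_zero.1 h with h | h
      · linarith
      · exact absurd (sub_eq_zero.1 h).symm hPQ
    have hae : ∀ᵐ t : ℝ, t ∉ {t : ℝ | (1 - t) • P + t • Q = X} :=
      compl_mem_ae_iff.2 (hfin.measure_zero _)
    filter_upwards [hae] with t ht _
    have hne : (1 - t) • P + t • Q - X ≠ 0 := fun h => ht (sub_eq_zero.1 h)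
    have h1 : HasDerivAt (fun s : ℝ => (1 - t) • P + t • Q - (X + s • ν)) (-ν) 0 := by
      have := ((hasDerivAt_id (0 : ℝ)).smul_const ν).const_add X |>.const_sub ((1 - t) • P + t • Q)
      simpa using this
    have h2 := h1.norm_sq.sqrt (by simpa using hne)
    simp only [Real.sqrt_sq (norm_nonneg _)] at h2
    refine h2.congr_deriv ?_
    simp only [zero_smul, add_zero]
    rw [inner_neg_right, ← inner_neg_left, neg_sub, norm_sub_rev]
    rw [mul_div_mul_left _ _ two_ne_zero]

/-- At a median, the component in the direction `ν` of the total pull of the sides vanishes. -/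
lemma force_eq_zero {A B C m : Plane} (ν : Plane) (hAB : A ≠ B) (hBC : B ≠ C) (hCA : C ≠ A)
    (hmin : ∀ X, perimDist A B C m ≤ perimDist A B C X) :
    ‖A - B‖ * (∫ t in (0:ℝ)..1,
        inner ℝ (m - ((1 - t) • A + t • B)) ν / ‖m - ((1 - t) • A + t • B)‖) +
      ‖B - C‖ * (∫ t in (0:ℝ)..1,
        inner ℝ (m - ((1 - t) • B + t • C)) ν / ‖m - ((1 - t) • B + t • C)‖) +
      ‖C - A‖ * (∫ t in (0:ℝ)..1,
        inner ℝ (m - ((1 - t) • C + t • A)) ν / ‖m - ((1 - t) • C + t • A)‖) = 0 := by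
  have hd : HasDerivAt (fun s : ℝ => perimDist A B C (m + s • ν)) _ 0 :=
    (((hasDerivAt_segDist hAB m ν).const_mul ‖A - B‖).add
      ((hasDerivAt_segDist hBC m ν).const_mul ‖B - C‖)).add
      ((hasDerivAt_segDist hCA m ν).const_mul ‖C - A‖)
  refine IsLocalMin.hasDerivAt_eq_zero (Eventually.of_forall fun s => ?_) hd
  simpa using hmin (m + s • ν)

/-! ### Orthonormal frames of the plane -/

/-- `u` and `ν` are the vectors of an orthonormal basis of the plane, in the form of Parseval's
identity. -/
def IsFrame (u ν : Plane) : Prop :=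
  ∀ v : Plane, ‖v‖ ^ 2 = (inner ℝ v u) ^ 2 + (inner ℝ v ν) ^ 2

lemma IsFrame.norm_eq {u ν : Plane} (h : IsFrame u ν) (v : Plane) :
    ‖v‖ = √((inner ℝ v u) ^ 2 + (inner ℝ v ν) ^ 2) := by
  rw [← h v, Real.sqrt_sq (norm_nonneg v)]

lemma IsFrame.abs_inner_le {u ν : Plane} (h : IsFrame u ν) (v : Plane) :
    |(inner ℝ v ν : ℝ)| ≤ ‖v‖ := by
  rw [h.norm_eq v]
  exact Real.abs_le_sqrt (by nlinarith [sq_nonneg (inner ℝ v u : ℝ)])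

/-- A frame whose first vector points from `C` to `B`, and in which `A` lies above `BC`. -/
lemma exists_frame {A B C : Plane} (h : AffineIndependent ℝ ![A, B, C]) :
    ∃ u ν : Plane, u = ‖B - C‖⁻¹ • (B - C) ∧ IsFrame u ν ∧ (inner ℝ (B - C) ν : ℝ) = 0 ∧
      0 < (inner ℝ (A - C) ν : ℝ) := by
  have hBC : B ≠ C := fun hh => by
    have := h.injective (a₁ := 1) (a₂ := 2) (by simpa using hh)
    simp at this
  have hL : 0 < ‖B - C‖ := norm_pos_iff.2 (sub_ne_zero.2 hBC)
  obtain ⟨u, hu⟩ : ∃ u : Plane, u = ‖B - C‖⁻¹ • (B - C) := ⟨_, rfl⟩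
  have hBu : B - C = ‖B - C‖ • u := by rw [hu, smul_smul, mul_inv_cancel₀ hL.ne', one_smul]
  have hu1 : ‖u‖ ^ 2 = 1 := by
    rw [hu, norm_smul, norm_inv, norm_norm, inv_mul_cancel₀ hL.ne', one_pow]
  rw [EuclideanSpace.real_norm_sq_eq, Fin.sum_univ_two] at hu1
  have hin : ∀ v w : Plane, (inner ℝ v w : ℝ) = v 0 * w 0 + v 1 * w 1 := fun v w => by
    simp [PiLp.inner_apply, mul_comm]
  -- The second vector is one of the two unit normals to `BC`.
  have key : ∀ σ : ℝ, σ ^ 2 = 1 → IsFrame u !₂[-σ * u 1, σ * u 0] ∧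
      (inner ℝ (B - C) (!₂[-σ * u 1, σ * u 0] : Plane) : ℝ) = 0 := by
    intro σ hσ
    constructor
    · intro v
      rw [EuclideanSpace.real_norm_sq_eq, Fin.sum_univ_two, hin, hin]
      simp only [Matrix.cons_val_zero, Matrix.cons_val_one]
      linear_combination (-(v 0 ^ 2 + v 1 ^ 2)) * hu1 - (v 0 * u 1 - v 1 * u 0) ^ 2 * hσ
    · rw [hBu, inner_smul_left, hin]
      simp only [Matrix.cons_val_zero, Matrix.cons_val_one]
      ring_nf
  have hne : (inner ℝ (A - C) (!₂[-1 * u 1, 1 * u 0] : Plane) : ℝ) ≠ 0 := by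
    intro h0
    apply affineIndependent_iff_not_collinear_set.1 h
    apply collinear_insert_of_mem_affineSpan_pair
    obtain ⟨hfr, hν⟩ := key 1 (by norm_num)
    set ν : Plane := !₂[-1 * u 1, 1 * u 0]
    have huu : (inner ℝ u u : ℝ) = 1 := by rw [hin]; linarith
    have huν : (inner ℝ u ν : ℝ) = 0 := by
      rw [hBu, inner_smul_left] at hν
      simpa [hL.ne'] using hν
    have hz : A - C - (inner ℝ (A - C) u : ℝ) • u = 0 := by
      rw [← norm_eq_zero, ← sq_eq_zero_iff, hfr]
      rw [inner_sub_left _ (_ • u), inner_sub_left _ (_ • u), inner_smul_left, inner_smul_left,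
        huu, huν, h0]
      simp
    rw [Set.pair_comm, mem_affineSpan_pair_iff_exists_lineMap_eq]
    refine ⟨inner ℝ (A - C) u * ‖B - C‖⁻¹, ?_⟩
    rw [AffineMap.lineMap_apply, vsub_eq_sub, vadd_eq_add, mul_smul, ← hu,
      ← sub_eq_zero.1 hz, sub_add_cancel]
  rcases lt_or_gt_of_ne hne with hlt | hgt
  · refine ⟨u, !₂[-(-1) * u 1, (-1) * u 0], hu, (key (-1) (by norm_num)).1,
      (key (-1) (by norm_num)).2, ?_⟩
    rw [hin] at hlt ⊢
    simp only [Matrix.cons_val_zero, Matrix.cons_val_one] at hlt ⊢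
    linarith
  · exact ⟨u, !₂[-1 * u 1, 1 * u 0], hu, (key 1 (by norm_num)).1, (key 1 (by norm_num)).2, hgt⟩

/-- Distance from a point to the line `PQ`, as a determinant of coordinates in the frame. -/
lemma IsFrame.infDist_line {u ν : Plane} (hf : IsFrame u ν) {P Q : Plane} (hPQ : P ≠ Q)
    (X : Plane) :
    infDist X (affineSpan ℝ ({P, Q} : Set Plane) : Set Plane) =
      |inner ℝ (X - P) u * inner ℝ (Q - P) ν - inner ℝ (X - P) ν * inner ℝ (Q - P) u| /
        ‖Q - P‖ := by
  have hw : 0 < ‖Q - P‖ := norm_pos_iff.2 (sub_ne_zero.2 hPQ.symm)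
  have hw2 := hf (Q - P)
  have hd : ∀ s : ℝ, ‖X - (P + s • (Q - P))‖ ^ 2 =
      (inner ℝ (X - P) u - s * inner ℝ (Q - P) u) ^ 2 +
        (inner ℝ (X - P) ν - s * inner ℝ (Q - P) ν) ^ 2 := by
    intro s
    rw [← sub_sub, hf, inner_sub_left _ (s • (Q - P)), inner_sub_left _ (s • (Q - P)),
      inner_smul_left, inner_smul_left]
    simp
  set xv : ℝ := inner ℝ (X - P) u
  set yv : ℝ := inner ℝ (X - P) ν
  set xw : ℝ := inner ℝ (Q - P) u
  set yw : ℝ := inner ℝ (Q - P) ν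
  have hmem : ∀ s : ℝ, P + s • (Q - P) ∈ (affineSpan ℝ ({P, Q} : Set Plane) : Set Plane) := by
    intro s
    rw [SetLike.mem_coe, mem_affineSpan_pair_iff_exists_lineMap_eq]
    exact ⟨s, by rw [AffineMap.lineMap_apply, vsub_eq_sub, vadd_eq_add, add_comm]⟩
  apply le_antisymm
  · -- the foot of the perpendicular
    refine (infDist_le_dist_of_mem (hmem ((xv * xw + yv * yw) / ‖Q - P‖ ^ 2))).trans ?_
    rw [dist_eq_norm]
    refine (sq_le_sq₀ (by positivity) (by positivity)).1 ?_
    rw [hd, div_pow, sq_abs, hw2]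
    have : xw ^ 2 + yw ^ 2 ≠ 0 := by rw [← hw2]; positivity
    apply le_of_eq
    field_simp
    ring
  · rw [le_infDist ⟨P, by simpa using hmem 0⟩]
    intro Z hZ
    rw [SetLike.mem_coe, mem_affineSpan_pair_iff_exists_lineMap_eq] at hZ
    obtain ⟨s, rfl⟩ := hZ
    rw [AffineMap.lineMap_apply, vsub_eq_sub, vadd_eq_add, add_comm, dist_eq_norm,
      div_le_iff₀ hw]
    refine (sq_le_sq₀ (by positivity) (by positivity)).1 ?_
    rw [mul_pow, hd, sq_abs, hw2]
    -- Lagrange's identity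
    nlinarith [sq_nonneg ((xv - s * xw) * xw + (yv - s * yw) * yw)]

/-- The pull of the side `PQ` on `m` in the direction `ν`, in coordinates with origin `O`. -/
lemma IsFrame.segment_force {u ν : Plane} (hf : IsFrame u ν) (O m P Q : Plane) :
    ‖P - Q‖ * (∫ t in (0:ℝ)..1,
        inner ℝ (m - ((1 - t) • P + t • Q)) ν / ‖m - ((1 - t) • P + t • Q)‖) =
      √((inner ℝ (Q - O) u - inner ℝ (P - O) u) ^ 2 +
          (inner ℝ (Q - O) ν - inner ℝ (P - O) ν) ^ 2) *
        ∫ t in (0:ℝ)..1, pull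
          (inner ℝ (m - O) u - ((1 - t) * inner ℝ (P - O) u + t * inner ℝ (Q - O) u))
          (inner ℝ (m - O) ν - ((1 - t) * inner ℝ (P - O) ν + t * inner ℝ (Q - O) ν)) := by
  have e : ∀ (t : ℝ) (w : Plane), (inner ℝ (m - ((1 - t) • P + t • Q)) w : ℝ) =
      inner ℝ (m - O) w - ((1 - t) * inner ℝ (P - O) w + t * inner ℝ (Q - O) w) := by
    intro t w
    simp only [inner_sub_left, inner_add_left, inner_smul_left]
    simp
    ring
  congr 1
  · rw [norm_sub_rev, hf.norm_eq, ← sub_sub_sub_cancel_right Q P O,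
      inner_sub_left _ (P - O), inner_sub_left _ (P - O)]
  · congr 1
    ext t
    rw [hf.norm_eq, pull, e, e]

lemma integral_pull_reverse (x y L : ℝ) :
    (∫ t in (0:ℝ)..1, pull (x - ((1 - t) * L + t * 0)) (y - ((1 - t) * 0 + t * 0))) =
      ∫ t in (0:ℝ)..1, pull (x - ((1 - t) * 0 + t * L)) (y - ((1 - t) * 0 + t * 0)) := by
  have := intervalIntegral.integral_comp_sub_left (a := 0) (b := 1)
    (fun t => pull (x - ((1 - t) * 0 + t * L)) (y - ((1 - t) * 0 + t * 0))) 1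
  simp only [sub_self, sub_zero] at this
  rw [← this]
  congr 1
  ext t
  congr 1 <;> ring

/-! ### Asymptotics of the medians -/

/-- For triangles approximating a degenerate triangle, the geometric medians of the
perimeter lie at distance close to `a/2` from the common vertex of the two longer
sides, and the ratio of their distances to the lines containing the two longer sides
tends to `1`. -/
theorem median_perimeter_degenerate_position
    (a b c : ℝ) (hba : b ≤ a) (hcb : c ≤ b) (hc : 0 < c) (habc : a = b + c)
    (A B C : Plane) (hcfg : DegenConfig a b c A B C)
    (An Bn Cn : ℕ → Plane)
    (hAI : ∀ n, AffineIndependent ℝ ![An n, Bn n, Cn n])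
    (hA : Tendsto An atTop (nhds A)) (hB : Tendsto Bn atTop (nhds B))
    (hC : Tendsto Cn atTop (nhds C))
    (mn : ℕ → Plane)
    (hmin : ∀ n, ∀ X : Plane,
      perimDist (An n) (Bn n) (Cn n) (mn n) ≤ perimDist (An n) (Bn n) (Cn n) X) :
    Tendsto (fun n => ‖mn n - Cn n‖) atTop (nhds (a / 2)) ∧
    Tendsto (fun n =>
        infDist (mn n) (affineSpan ℝ ({Bn n, Cn n} : Set Plane) : Set Plane) /
        infDist (mn n) (affineSpan ℝ ({Cn n, An n} : Set Plane) : Set Plane))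
      atTop (nhds 1) := by
  have hb : 0 < b := hc.trans_le hcb
  have ha : 0 < a := by linarith
  have hBCa : ‖B - C‖ = a := hcfg.2.1
  have hAeq : A = C + (b / a) • (B - C) := by
    obtain ⟨-, h1, h2, h3⟩ := hcfg
    have hw : Wbtw ℝ C A B := by
      rw [← dist_add_dist_eq_iff, dist_eq_norm, dist_eq_norm, dist_eq_norm, h2, h3,
        norm_sub_rev C B, h1, habc]
    obtain ⟨t, ht, rfl⟩ := hw
    rw [AffineMap.lineMap_apply, vsub_eq_sub, vadd_eq_add, add_comm] at h2 ⊢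
    rw [sub_add_cancel_left, norm_neg, norm_smul, Real.norm_of_nonneg ht.1, hBCa] at h2
    rw [← h2, mul_div_cancel_right₀ _ ha.ne']
  have hm := tendsto_median hcb hc habc hcfg hA hB hC hmin hAeq
  have hmC : Tendsto (fun n => mn n - Cn n) atTop (nhds ((1 / 2 : ℝ) • (B - C))) := by
    simpa using hm.sub hC
  have hBC := hB.sub hC
  have hAC : Tendsto (fun n => An n - Cn n) atTop (nhds ((b / a) • (B - C))) := by
    have := hA.sub hC
    rwa [hAeq, add_sub_cancel_left] at this
  have hL : Tendsto (fun n => ‖Bn n - Cn n‖) atTop (nhds a) := hBCa ▸ hBC.norm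
  refine ⟨?_, ?_⟩
  · convert hmC.norm using 2
    rw [norm_smul, hBCa]
    norm_num
    ring
  choose u ν hu hf hν hh using fun n => exists_frame (hAI n)
  have hneBC : ∀ n, Bn n ≠ Cn n := fun n h => by
    have := (hAI n).injective (a₁ := 1) (a₂ := 2) (by simpa using h)
    simp at this
  have hneAB : ∀ n, An n ≠ Bn n := fun n h => by
    have := (hAI n).injective (a₁ := 0) (a₂ := 1) (by simpa using h)
    simp at this
  have hneCA : ∀ n, Cn n ≠ An n := fun n h => by
    have := (hAI n).injective (a₁ := 2) (a₂ := 0) (by simpa using h)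
    simp at this
  have hLu : ∀ n, (inner ℝ (Bn n - Cn n) (u n) : ℝ) = ‖Bn n - Cn n‖ := fun n => by
    have : ‖Bn n - Cn n‖ ≠ 0 := norm_ne_zero_iff.2 (sub_ne_zero.2 (hneBC n))
    rw [hu, inner_smul_right, real_inner_self_eq_norm_sq]
    field_simp
  have hulim : Tendsto u atTop (nhds (a⁻¹ • (B - C))) := by
    rw [funext hu]
    exact (hL.inv₀ ha.ne').smul hBC
  -- Limits of the coordinates with respect to the frames.
  have coord : ∀ {v : ℕ → Plane} {θ : ℝ}, Tendsto v atTop (nhds (θ • (B - C))) →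
      Tendsto (fun n => (inner ℝ (v n) (u n) : ℝ)) atTop (nhds (θ * a)) ∧
      Tendsto (fun n => (inner ℝ (v n) (ν n) : ℝ)) atTop (nhds 0) := by
    intro v θ hv
    constructor
    · convert hv.inner hulim using 2
      rw [inner_smul_left, inner_smul_right, real_inner_self_eq_norm_sq, hBCa]
      simp only [conj_trivial]
      field_simp
    · have h0 : Tendsto (fun n => ‖v n - θ • (Bn n - Cn n)‖) atTop (nhds 0) := by
        simpa using (hv.sub (hBC.const_smul θ)).norm
      refine squeeze_zero_norm (fun n => ?_) h0
      have := (hf n).abs_inner_le (v n - θ • (Bn n - Cn n))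
      rwa [inner_sub_left, inner_smul_left, hν, mul_zero, sub_zero] at this
  obtain ⟨hx, hy⟩ := coord hmC
  obtain ⟨hp, hh0⟩ := coord hAC
  rw [div_mul_cancel₀ _ ha.ne'] at hp
  rw [one_div_mul_eq_div] at hx
  -- The distances to the two lines in coordinates.
  have hd1 : ∀ n, infDist (mn n) (affineSpan ℝ ({Bn n, Cn n} : Set Plane) : Set Plane) =
      |(inner ℝ (mn n - Cn n) (ν n) : ℝ)| := fun n => by
    have : 0 < ‖Bn n - Cn n‖ := norm_pos_iff.2 (sub_ne_zero.2 (hneBC n))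
    rw [Set.pair_comm, (hf n).infDist_line (hneBC n).symm, hν, hLu, mul_zero, zero_sub, abs_neg,
      abs_mul, abs_norm, mul_div_cancel_right₀ _ this.ne']
  have hd2 := fun n => (hf n).infDist_line (hneCA n) (mn n)
  simp only [hd1, hd2]
  have hforce := fun n => force_eq_zero (ν n) (hneAB n) (hneBC n) (hneCA n) (hmin n)
  simp only [fun n => (hf n).segment_force (Cn n), hν, hLu, sub_self, inner_zero_left,
    integral_pull_reverse] at hforce
  set L := fun n => ‖Bn n - Cn n‖ with hLdef
  set p := fun n => (inner ℝ (An n - Cn n) (u n) : ℝ) with hpdef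
  set h := fun n => (inner ℝ (An n - Cn n) (ν n) : ℝ) with hhdef
  set x := fun n => (inner ℝ (mn n - Cn n) (u n) : ℝ) with hxdef
  set y := fun n => (inner ℝ (mn n - Cn n) (ν n) : ℝ) with hydef
  have hACn : Tendsto (fun n => ‖An n - Cn n‖) atTop (nhds b) := by
    convert hAC.norm using 2
    rw [norm_smul, hBCa, Real.norm_of_nonneg (by positivity)]
    field_simp
  have hhp : ∀ n, 0 < h n := hh
  -- Since `c ≤ b`, the midpoint of `BC` lies under the side `CA`, where the triangle has height
  -- `h * (a / 2) / b`; the limit `a / (4 * b)` says that `mn` is halfway between `BC` and `CA`.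
  suffices hyh : Tendsto (fun n => y n / h n) atTop (nhds (a / (4 * b))) by
    have hlim := hyh.abs.div ((hx.sub (hyh.mul hp)).abs.div hACn hb.ne') (by
      rw [show a / 2 - a / (4 * b) * b = a / 4 by field_simp; ring]
      positivity)
    convert hlim using 2 with n
    · have := hhp n
      change |y n| / (|x n * h n - y n * p n| / ‖An n - Cn n‖) =
        |y n / h n| / (|x n - y n / h n * p n| / ‖An n - Cn n‖)
      have hne := this.ne'
      have e : x n - y n / h n * p n = (x n * h n - y n * p n) / h n := by
        field_simp
      rw [e, abs_div, abs_div, abs_of_pos (hhp n)]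
      change |y n| / (|x n * h n - y n * p n| / ‖An n - Cn n‖) =
        |y n| / h n / (|x n * h n - y n * p n| / h n / ‖An n - Cn n‖)
      rw [div_right_comm _ (h n) ‖An n - Cn n‖, div_div_div_cancel_right₀ this.ne']
    · rw [show a / 2 - a / (4 * b) * b = a / 4 by field_simp; ring,
        abs_of_pos (by positivity), abs_of_pos (by positivity)]
      field_simp
  -- `U n` is the height of the triangle over `x n`; both heights relevant to `balance` are at most
  -- `R n`, which tends to `0`.
  set U := fun n => min (h n / p n * x n) (h n / (L n - p n) * (L n - x n)) with hUdef
  set R := fun n => |y n| + |U n - y n| + h n with hRdef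
  have hLp : Tendsto (fun n => L n - p n) atTop (nhds c) := by
    convert hL.sub hp using 2; linarith
  have hU0 : Tendsto U atTop (nhds 0) := by
    have := ((hh0.div hp hb.ne').mul hx).min ((hh0.div hLp hc.ne').mul (hL.sub hx))
    simpa using this
  have hR0 : Tendsto R atTop (nhds 0) := by
    have := (hy.abs.add (hU0.sub hy).abs).add hh0
    simpa using this
  have hRpos : ∀ n, 0 < R n := fun n =>
    add_pos_of_nonneg_of_pos (add_nonneg (abs_nonneg _) (abs_nonneg _)) (hhp n)
  have hUh : Tendsto (fun n => U n / h n) atTop (nhds (a / (2 * b))) := by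
    have := ((hp.inv₀ hb.ne').mul hx).min ((hLp.inv₀ hc.ne').mul (hL.sub hx))
    convert this using 2 with n
    · have := hhp n
      simp only [hUdef]
      rw [← min_div_div_right this.le]
      congr 1
      · have : h n ≠ 0 := this.ne'
        field_simp
      · have : h n ≠ 0 := this.ne'
        field_simp
    · rw [show a - a / 2 = a / 2 by ring, min_eq_left]
      · field_simp
      · exact mul_le_mul_of_nonneg_right (inv_anti₀ hc hcb) (by positivity)
  -- `h n * κ n` bounds the slopes of both upper sides.
  set κ := fun n => (p n)⁻¹ + (L n - p n)⁻¹ with hκdef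
  have hκ : Tendsto κ atTop (nhds (b⁻¹ + c⁻¹)) := (hp.inv₀ hb.ne').add (hLp.inv₀ hc.ne')
  have hlog : Tendsto (fun n => Real.log (a / 4 / R n)) atTop atTop := by
    apply Real.tendsto_log_atTop.comp
    have : Tendsto R atTop (nhdsWithin 0 (Set.Ioi 0)) :=
      tendsto_nhdsWithin_iff.2 ⟨hR0, Eventually.of_forall hRpos⟩
    exact (tendsto_inv_nhdsGT_zero.comp this).const_mul_atTop (by positivity)
  -- `y` is asymptotically half the height of the triangle over `x`.
  have hdiff : Tendsto (fun n => (2 * y n - U n) / h n) atTop (nhds 0) := by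
    refine squeeze_zero_norm' ?_ (((hκ.mul hL).const_mul 8).div_atTop hlog)
    filter_upwards [hp.eventually (lt_mem_nhds hb), hLp.eventually (lt_mem_nhds hc),
      hx.eventually (lt_mem_nhds (show a / 4 < a / 2 by linarith)),
      (hL.sub hx).eventually (lt_mem_nhds (show 0 < a - a / 2 by linarith)),
      hR0.eventually (gt_mem_nhds (show 0 < a / 4 by positivity)),
      hlog.eventually_gt_atTop 0] with n h1 h2 h3 h4 h5 h6
    have hhn : 0 < h n := hhp n
    have hb := balance (L := L n) (p := p n) (h := h n) (x := x n) (y := y n) (D := a / 4)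
      (R := R n) (k := h n * κ n) (U := U n) h1 (by linarith) (hhp n)
      (by rw [div_eq_mul_inv]
          exact mul_le_mul_of_nonneg_left (by simp only [hκdef]; linarith [inv_pos.2 h2]) hhn.le)
      (by rw [div_eq_mul_inv]
          exact mul_le_mul_of_nonneg_left (by simp only [hκdef]; linarith [inv_pos.2 h1]) hhn.le)
      rfl (by linarith) h3.le (hRpos n) h5.le
      (by simp only [hRdef]; linarith [abs_nonneg (U n - y n)])
      (by simp only [hRdef]; linarith [abs_nonneg (y n)]) (by
        have := hforce n
        rw [show (0 - L n) ^ 2 + 0 ^ 2 = (L n - 0) ^ 2 + (0 - 0) ^ 2 by ring] at this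
        exact this)
    rw [Real.norm_eq_abs, abs_div, abs_of_pos hhn, le_div_iff₀ h6, div_mul_eq_mul_div,
      div_le_iff₀ hhn]
    linarith
  have := (hdiff.add hUh).div_const 2
  convert this using 2 with n
  · ring
  · field_simp
    ring
end
end

section
/- Let a ≥ b ≥ c > 0 with a = b + c, let A, B, C ∈ ℝ² be a degenerate triangle configuration with these side lengths, and let (Aₙ, Bₙ, Cₙ) be affinely independent triples in ℝ² with Aₙ → A, Bₙ → B, Cₙ → C. If mₙ is a global minimizer of the perimeter distance functional of the triangle AₙBₙCₙ for each n, and (λ₁ⁿ, λ₂ⁿ, λ₃ⁿ) are the barycentric coordinates of mₙ with respect to (Aₙ, Bₙ, Cₙ), then λ₁ⁿ → a/(4b), λ₂ⁿ → 1/4 and λ₃ⁿ → 3/4 − a/(4b). -/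
/-!
Put `e = B - C`, let `v` be the altitude from `A` to `BC`, and write `X = C + ξ • e + μ • v`. Then
`μ` is the barycentric coordinate of `X` at `A`, and after rescaling by `‖e‖` the functional becomes
`scaledF τ h ξ μ`, with `h = ‖v‖ / ‖e‖ → 0` and `τ → b / a ∈ [1/2, 1)` the foot of the altitude
(`perimDist_eq`).

As `h → 0` the functional tends to twice the functional `ξ ↦ ∫ |ξ - t|` of the unit interval, whose
only minimizer is `1 / 2`; hence `ξ → 1 / 2` (`quarter_add_sq_le_integral`, `le_scaledF`,
`scaledF_le`).

For the vertical position, fix a relative height `κ` and consider the vertical derivative at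
`(ξ, κ)`. Each of the base and the roof formed by the other two sides pulls with a force equal to
the relative vertical offset times the integral of the inverse distance. Both integrals diverge
logarithmically as `h → 0`, and their difference is bounded, because `κ` being fixed keeps the
distances to base and roof comparable with `h` (`log_le_integral`, `slope_estimate`). So the sign
of the derivative is eventually that of `2 * κ - p`, where `p = a / (2 * b)` is the relative height
of the roof above the midpoint. By convexity (`slope_sign`) the minimizer is caught at relative
height `p / 2 = a / (4 * b)` (`scalar_limit`). The other two coordinates follow from
`ξ = μ1 * τ + μ2` and `μ1 + μ2 + μ3 = 1`.
-/

open MeasureTheory Metric Filter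

noncomputable section

/-! ### The normalized functional -/

/-- The length of the vector `(x, y * h)`; the ordinate is measured in units of `h`. -/
def rho (h x y : ℝ) : ℝ := √(x ^ 2 + (y * h) ^ 2)

/-- The graph over `[0, 1]` of the two sides through the apex, for the triangle with vertices
`(0, 0)`, `(1, 0)` and `(τ, 1)`. The minimum is the piecewise linear function that is `t / τ` up
to `τ` and `(1 - t) / (1 - τ)` after it, when `0 < τ < 1` and `t ∈ [0, 1]`. -/
def hat (τ t : ℝ) : ℝ := min (t / τ) ((1 - t) / (1 - τ))

/-- The perimeter distance functional at `(ξ, μ * h)` of the triangle with vertices `(0, 0)`,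
`(1, 0)`, `(τ, h)`, each side being parametrized by the abscissa `t`. The factors in front of the
last two integrals are the arc length elements of the two sides through the apex. -/
def scaledF (τ h ξ μ : ℝ) : ℝ :=
  (∫ t in (0:ℝ)..1, rho h (ξ - t) μ) +
  √(τ ^ 2 + h ^ 2) / τ * (∫ t in (0:ℝ)..τ, rho h (ξ - t) (μ - hat τ t)) +
  √((1 - τ) ^ 2 + h ^ 2) / (1 - τ) * (∫ t in τ..1, rho h (ξ - t) (μ - hat τ t))

/-- The partial derivative of `scaledF τ h ξ` at `κ`, divided by `h ^ 2`, as long as the point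
`(ξ, κ * h)` is off the perimeter. -/
def slopeF (τ h ξ κ : ℝ) : ℝ :=
  (∫ t in (0:ℝ)..1, κ / rho h (ξ - t) κ) +
  √(τ ^ 2 + h ^ 2) / τ * (∫ t in (0:ℝ)..τ, (κ - hat τ t) / rho h (ξ - t) (κ - hat τ t)) +
  √((1 - τ) ^ 2 + h ^ 2) / (1 - τ) *
    (∫ t in τ..1, (κ - hat τ t) / rho h (ξ - t) (κ - hat τ t))

theorem rho_sq (h x y : ℝ) : rho h x y ^ 2 = x ^ 2 + (y * h) ^ 2 :=
  Real.sq_sqrt (by positivity)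

theorem rho_nonneg (h x y : ℝ) : 0 ≤ rho h x y := Real.sqrt_nonneg _

theorem abs_le_rho (h x y : ℝ) : |x| ≤ rho h x y :=
  Real.abs_le_sqrt (by nlinarith [sq_nonneg (y * h)])

theorem abs_mul_le_rho (h x y : ℝ) : |y * h| ≤ rho h x y :=
  Real.abs_le_sqrt (by nlinarith [sq_nonneg x])

theorem rho_le (h x y : ℝ) : rho h x y ≤ |x| + |y * h| := by
  refine Real.sqrt_le_iff.2 ⟨by positivity, ?_⟩
  nlinarith [sq_abs x, sq_abs (y * h), mul_nonneg (abs_nonneg x) (abs_nonneg (y * h))]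

/-- The tangent line inequality for the convex function `rho h x`. -/
theorem rho_subgradient {h x y : ℝ} (y' : ℝ) (hr : 0 < rho h x y) :
    rho h x y + (y' - y) * h ^ 2 * (y / rho h x y) ≤ rho h x y' := by
  have hcs : x ^ 2 + y * y' * h ^ 2 ≤ rho h x y * rho h x y' := by
    refine abs_le_of_sq_le_sq' ?_ (mul_nonneg (rho_nonneg _ _ _) (rho_nonneg _ _ _)) |>.2
    rw [mul_pow, rho_sq, rho_sq]
    nlinarith [sq_nonneg (x * (y * h) - x * (y' * h))]
  have h1 : rho h x y + (y' - y) * h ^ 2 * (y / rho h x y)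
      = (x ^ 2 + y * y' * h ^ 2) / rho h x y := by
    rw [eq_div_iff hr.ne']
    field_simp
    rw [rho_sq]; ring
  rw [h1, div_le_iff₀ hr]
  linarith

theorem continuous_hat (τ : ℝ) : Continuous (hat τ) := by
  unfold hat; fun_prop

theorem continuous_rho (h : ℝ) {f g : ℝ → ℝ} (hf : Continuous f) (hg : Continuous g) :
    Continuous fun t => rho h (f t) (g t) := by
  unfold rho; fun_prop

theorem one_le_weight {τ : ℝ} (hτ : 0 < τ) (h : ℝ) : 1 ≤ √(τ ^ 2 + h ^ 2) / τ := by
  rw [le_div_iff₀ hτ, one_mul]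
  exact Real.le_sqrt_of_sq_le (by nlinarith [sq_nonneg h])

theorem weight_le {τ h : ℝ} (hτ : 0 < τ) (hh : 0 ≤ h) : √(τ ^ 2 + h ^ 2) / τ ≤ 1 + h / τ := by
  rw [div_le_iff₀ hτ, add_mul, one_mul, div_mul_cancel₀ _ hτ.ne']
  exact Real.sqrt_le_iff.2 ⟨by positivity, by nlinarith [mul_nonneg hτ.le hh]⟩

/-- Convexity in the vertical direction: the derivative at height `κ` cannot point away from
a height `μ` at which the functional is no larger. -/
theorem slope_sign {τ h ξ μ κ : ℝ} (hτ : 0 < τ) (hτ1 : τ < 1) (hh : 0 < h)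
    (hmin : scaledF τ h ξ μ ≤ scaledF τ h ξ κ)
    (h0 : ∀ t, 0 < rho h (ξ - t) κ)
    (h1 : ∀ t ∈ Set.Icc (0:ℝ) 1, 0 < rho h (ξ - t) (κ - hat τ t)) :
    (μ - κ) * slopeF τ h ξ κ ≤ 0 := by
  have hxi : Continuous fun t : ℝ => ξ - t := by fun_prop
  have hc := continuous_hat τ
  have hk : Continuous fun t : ℝ => κ - hat τ t := by fun_prop
  have hm : Continuous fun t : ℝ => μ - hat τ t := by fun_prop
  have e0 : (∫ t in (0:ℝ)..1, rho h (ξ - t) κ)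
      + (μ - κ) * h ^ 2 * (∫ t in (0:ℝ)..1, κ / rho h (ξ - t) κ)
      ≤ ∫ t in (0:ℝ)..1, rho h (ξ - t) μ := by
    have i1 : Continuous fun t => rho h (ξ - t) κ := continuous_rho h hxi continuous_const
    have i2 : Continuous fun t => κ / rho h (ξ - t) κ :=
      continuous_const.div i1 fun t => (h0 t).ne'
    rw [← intervalIntegral.integral_const_mul, ← intervalIntegral.integral_add
      (i1.intervalIntegrable _ _) ((i2.const_mul _).intervalIntegrable _ _)]
    refine intervalIntegral.integral_mono_on zero_le_one
      ((i1.add (i2.const_mul _)).intervalIntegrable _ _)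
      ((continuous_rho h hxi continuous_const).intervalIntegrable _ _) fun t _ => ?_
    exact rho_subgradient μ (h0 t)
  have e1 : ∀ l r : ℝ, 0 ≤ l → l ≤ r → r ≤ 1 →
      (∫ t in l..r, rho h (ξ - t) (κ - hat τ t))
      + (μ - κ) * h ^ 2 * (∫ t in l..r, (κ - hat τ t) / rho h (ξ - t) (κ - hat τ t))
      ≤ ∫ t in l..r, rho h (ξ - t) (μ - hat τ t) := by
    intro l r hl hlr hr
    have i1 : Continuous fun t => rho h (ξ - t) (κ - hat τ t) := continuous_rho h hxi hk
    have i2 : IntervalIntegrable (fun t => (κ - hat τ t) / rho h (ξ - t) (κ - hat τ t))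
        volume l r := by
      refine ContinuousOn.intervalIntegrable ?_
      rw [Set.uIcc_of_le hlr]
      exact hk.continuousOn.div i1.continuousOn fun t ht =>
        (h1 t ⟨hl.trans ht.1, ht.2.trans hr⟩).ne'
    rw [← intervalIntegral.integral_const_mul, ← intervalIntegral.integral_add
      (i1.intervalIntegrable _ _) (i2.const_mul _)]
    refine intervalIntegral.integral_mono_on hlr
      ((i1.intervalIntegrable _ _).add (i2.const_mul _))
      ((continuous_rho h hxi hm).intervalIntegrable _ _) fun t ht => ?_
    have := rho_subgradient (μ - hat τ t) (h1 t ⟨hl.trans ht.1, ht.2.trans hr⟩)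
    simpa only [sub_sub_sub_cancel_right] using this
  have e2 := mul_le_mul_of_nonneg_left (e1 0 τ le_rfl hτ.le hτ1.le)
    (zero_le_one.trans (one_le_weight hτ h))
  have e3 := mul_le_mul_of_nonneg_left (e1 τ 1 hτ.le hτ1.le le_rfl)
    (zero_le_one.trans (one_le_weight (sub_pos.2 hτ1) h))
  have : h ^ 2 * ((μ - κ) * slopeF τ h ξ κ) ≤ 0 := by
    unfold scaledF at hmin
    unfold slopeF
    linarith
  exact nonpos_of_mul_nonpos_right this (by positivity)

/-! ### Estimates of the vertical derivative -/

theorem integral_inv_sq_le {ξ d : ℝ} (hξ : 0 ≤ ξ) (hξ1 : ξ ≤ 1) (hd : 0 < d) :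
    ∫ t in (0:ℝ)..1, 1 / (|ξ - t| + d) ^ 2 ≤ 2 / d := by
  have hc : Continuous fun t : ℝ => 1 / (|ξ - t| + d) ^ 2 :=
    continuous_const.div (by fun_prop) fun t => by positivity
  rw [← intervalIntegral.integral_add_adjacent_intervals (hc.intervalIntegrable 0 ξ)
    (hc.intervalIntegrable ξ 1)]
  have e1 : ∫ t in (0:ℝ)..ξ, 1 / (|ξ - t| + d) ^ 2 = 1 / (ξ - ξ + d) - 1 / (ξ - 0 + d) := by
    refine intervalIntegral.integral_eq_sub_of_hasDerivAt
      (f := fun t => 1 / (ξ - t + d)) (fun t ht => ?_) (hc.intervalIntegrable _ _)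
    rw [Set.uIcc_of_le hξ] at ht
    have hp : 0 < ξ - t + d := by linarith [ht.2]
    rw [abs_of_nonneg (by linarith [ht.2])]
    have := ((((hasDerivAt_id t).const_sub ξ).add_const d).inv hp.ne')
    simp only [one_div]
    exact this.congr_deriv (by simp)
  have e2 : ∫ t in ξ..1, 1 / (|ξ - t| + d) ^ 2 = -(1 / (1 - ξ + d)) - -(1 / (ξ - ξ + d)) := by
    refine intervalIntegral.integral_eq_sub_of_hasDerivAt
      (f := fun t => -(1 / (t - ξ + d))) (fun t ht => ?_) (hc.intervalIntegrable _ _)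
    rw [Set.uIcc_of_le hξ1] at ht
    have hp : 0 < t - ξ + d := by linarith [ht.1]
    rw [abs_sub_comm, abs_of_nonneg (by linarith [ht.1])]
    have := ((((hasDerivAt_id t).sub_const ξ).add_const d).inv hp.ne').neg
    convert this using 1
    · ext; simp
    · simp [neg_div]
  rw [e1, e2]
  have p1 : 0 < 1 / (ξ - 0 + d) := by
    apply one_div_pos.2; linarith
  have p2 : 0 < 1 / (1 - ξ + d) := by
    apply one_div_pos.2; linarith
  have : 2 / d = 1 / d + 1 / d := by ring
  rw [this, sub_self, zero_add]
  linarith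

/-- The weight of the base diverges logarithmically as `h → 0`; this is what makes the behaviour
near the median dominate. The part of the base to the right of `ξ` already suffices. -/
theorem log_le_integral {ξ h κ : ℝ} (hξ : 0 ≤ ξ) (hξ1 : ξ ≤ 3 / 4) (hh : 0 < h)
    (hκ : 0 < κ) (hκ1 : κ ≤ 1) :
    Real.log (1 / (4 * h)) ≤ ∫ t in (0:ℝ)..1, 1 / rho h (ξ - t) κ := by
  have hr : ∀ t, 0 < rho h (ξ - t) κ := fun t =>
    (mul_pos hκ hh).trans_le ((le_abs_self _).trans (abs_mul_le_rho h (ξ - t) κ))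
  have hc : Continuous fun t : ℝ => 1 / rho h (ξ - t) κ :=
    continuous_const.div (continuous_rho h (by fun_prop) continuous_const) fun t => (hr t).ne'
  have hξ1' : ξ ≤ 1 := by linarith
  rw [← intervalIntegral.integral_add_adjacent_intervals (hc.intervalIntegrable 0 ξ)
    (hc.intervalIntegrable ξ 1)]
  have e0 : 0 ≤ ∫ t in (0:ℝ)..ξ, 1 / rho h (ξ - t) κ :=
    intervalIntegral.integral_nonneg hξ fun t _ => (one_div_pos.2 (hr t)).le
  have hcont : ContinuousOn (fun t : ℝ => 1 / (t - ξ + h)) (Set.uIcc ξ 1) := by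
    rw [Set.uIcc_of_le hξ1']
    refine continuousOn_const.div (by fun_prop) fun t ht => ?_
    have : 0 < t - ξ + h := by linarith [ht.1]
    exact this.ne'
  have e1 : ∫ t in ξ..1, 1 / (t - ξ + h) = Real.log (1 - ξ + h) - Real.log (ξ - ξ + h) := by
    refine intervalIntegral.integral_eq_sub_of_hasDerivAt
      (f := fun t => Real.log (t - ξ + h)) (fun t ht => ?_) hcont.intervalIntegrable
    rw [Set.uIcc_of_le hξ1'] at ht
    have hp : 0 < t - ξ + h := by linarith [ht.1]
    exact (((hasDerivAt_id t).sub_const ξ).add_const h).log hp.ne'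
  have e2 : ∫ t in ξ..1, 1 / (t - ξ + h) ≤ ∫ t in ξ..1, 1 / rho h (ξ - t) κ := by
    refine intervalIntegral.integral_mono_on hξ1' hcont.intervalIntegrable
      (hc.intervalIntegrable _ _) fun t ht => ?_
    refine one_div_le_one_div_of_le (hr t) ((rho_le _ _ _).trans ?_)
    rw [abs_sub_comm, abs_of_nonneg (by linarith [ht.1]), abs_of_pos (mul_pos hκ hh)]
    nlinarith
  have e3 : Real.log (1 / (4 * h)) ≤ Real.log (1 - ξ + h) - Real.log (ξ - ξ + h) := by
    rw [sub_self, zero_add, ← Real.log_div (by linarith) hh.ne']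
    refine Real.log_le_log (by positivity) ?_
    rw [div_le_div_iff₀ (by positivity) hh]
    nlinarith
  linarith

theorem hat_mem {τ t : ℝ} (hτ : 0 < τ) (hτ1 : τ < 1) (ht : t ∈ Set.Icc (0:ℝ) 1) :
    hat τ t ∈ Set.Icc (0:ℝ) 1 := by
  refine ⟨le_min (div_nonneg ht.1 hτ.le) (div_nonneg (sub_nonneg.2 ht.2) (sub_pos.2 hτ1).le), ?_⟩
  rcases le_total t τ with h | h
  · exact (min_le_left _ _).trans ((div_le_one hτ).2 h)
  · exact (min_le_right _ _).trans ((div_le_one (sub_pos.2 hτ1)).2 (by linarith))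

theorem hat_lipschitz {τ K : ℝ} (hτ : 0 < τ) (hτ1 : τ < 1) (hK : 1 / τ + 1 / (1 - τ) ≤ K)
    (s t : ℝ) : |hat τ s - hat τ t| ≤ K * |s - t| := by
  have hσ : 0 < 1 - τ := sub_pos.2 hτ1
  have p1 : 0 < 1 / τ := one_div_pos.2 hτ
  have p2 : 0 < 1 / (1 - τ) := one_div_pos.2 hσ
  refine (abs_min_sub_min_le_max _ _ _ _).trans (max_le ?_ ?_)
  · rw [← sub_div, abs_div, abs_of_pos hτ, div_eq_mul_one_div, mul_comm]
    exact mul_le_mul_of_nonneg_right (by linarith) (abs_nonneg _)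
  · rw [← sub_div, abs_div, abs_of_pos hσ, div_eq_mul_one_div, mul_comm,
      show 1 - s - (1 - t) = t - s by ring, abs_sub_comm]
    exact mul_le_mul_of_nonneg_right (by linarith) (abs_nonneg _)

/-- A point at fixed relative height `κ` strictly below the roof stays at distance at least
a multiple of `h` from it: since the roof is `K`-Lipschitz, either the horizontal or the vertical
distance is large. -/
theorem mul_le_rho_hat {τ h ξ κ c K : ℝ} (hτ : 0 < τ) (hτ1 : τ < 1) (hh : 0 < h) (hh1 : h ≤ 1)
    (hK : 1 / τ + 1 / (1 - τ) ≤ K) (hc : c * (1 + K) ≤ hat τ ξ - κ) (t : ℝ) :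
    c * h ≤ rho h (ξ - t) (κ - hat τ t) := by
  have hK0 : 0 < K :=
    (add_pos (one_div_pos.2 hτ) (one_div_pos.2 (sub_pos.2 hτ1))).trans_le hK
  have h1 := abs_le_rho h (ξ - t) (κ - hat τ t)
  have h2 := abs_mul_le_rho h (ξ - t) (κ - hat τ t)
  rw [abs_mul, abs_of_pos hh] at h2
  have h3 := (le_abs_self _).trans (hat_lipschitz hτ hτ1 hK ξ t)
  have h4 := neg_abs_le (κ - hat τ t)
  set r := rho h (ξ - t) (κ - hat τ t)
  have h5 : (c * (1 + K) - K * |ξ - t|) * h ≤ r :=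
    (mul_le_mul_of_nonneg_right (by linarith) hh.le).trans h2
  have h6 : K * |ξ - t| * h ≤ K * r := by
    calc K * |ξ - t| * h ≤ K * |ξ - t| * 1 :=
          mul_le_mul_of_nonneg_left hh1 (by positivity)
      _ ≤ K * r := by rw [mul_one]; exact mul_le_mul_of_nonneg_left h1 hK0.le
  refine le_of_mul_le_mul_right (?_ : c * h * (1 + K) ≤ r * (1 + K)) (by linarith)
  nlinarith

/-- The base contributes `κ * I` to the vertical derivative and the roof `(κ - hat τ ξ) * I`, up to
a bounded error, where `I` is the logarithmically divergent integral of the inverse distance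
to the base. -/
theorem slope_estimate {τ h ξ κ c K : ℝ} (hτ : 0 < τ) (hτ1 : τ < 1) (hh : 0 < h) (hh1 : h ≤ 1)
    (hξ : 0 ≤ ξ) (hξ1 : ξ ≤ 1) (hκ1 : κ ≤ 1) (hc0 : 0 < c) (hcκ : c ≤ κ)
    (hK : 1 / τ + 1 / (1 - τ) ≤ K) (hc : c * (1 + K) ≤ hat τ ξ - κ) :
    |slopeF τ h ξ κ - (2 * κ - hat τ ξ) * ∫ t in (0:ℝ)..1, 1 / rho h (ξ - t) κ|
      ≤ 2 + K + 8 / c ^ 2 := by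
  have hκ0 : 0 < κ := hc0.trans_le hcκ
  have hch : 0 < c * h := mul_pos hc0 hh
  have hK0 : 0 < K :=
    (add_pos (one_div_pos.2 hτ) (one_div_pos.2 (sub_pos.2 hτ1))).trans_le hK
  have b0 : ∀ t, c * h ≤ rho h (ξ - t) κ := fun t =>
    (mul_le_mul_of_nonneg_right hcκ hh.le).trans
      ((le_abs_self _).trans (abs_mul_le_rho h (ξ - t) κ))
  have b1 : ∀ t, c * h ≤ rho h (ξ - t) (κ - hat τ t) := mul_le_rho_hat hτ hτ1 hh hh1 hK hc
  have hx : Continuous fun t : ℝ => ξ - t := by fun_prop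
  have hk : Continuous fun t : ℝ => κ - hat τ t := continuous_const.sub (continuous_hat τ)
  have c0 : Continuous fun t => 1 / rho h (ξ - t) κ :=
    continuous_const.div (continuous_rho h hx continuous_const) fun t => (hch.trans_le (b0 t)).ne'
  have c1 : Continuous fun t => (κ - hat τ t) / rho h (ξ - t) (κ - hat τ t) :=
    hk.div (continuous_rho h hx hk) fun t => (hch.trans_le (b1 t)).ne'
  have c2 : Continuous fun t : ℝ => 1 / (|ξ - t| + c * h) ^ 2 :=
    continuous_const.div (by fun_prop) fun t => by positivity
  have r1 : ∀ t, |(κ - hat τ t) / rho h (ξ - t) (κ - hat τ t)| ≤ 1 / h := fun t => by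
    have := abs_mul_le_rho h (ξ - t) (κ - hat τ t)
    rw [abs_mul, abs_of_pos hh] at this
    have hp := hch.trans_le (b1 t)
    rw [abs_div, abs_of_pos hp, div_le_div_iff₀ hp hh]
    linarith
  -- The arc length elements differ from `1` by at most `h / σ`, which compensates the bound `1 / h`.
  have w : ∀ σ l r : ℝ, 0 < σ → σ = r - l →
      |(√(σ ^ 2 + h ^ 2) / σ - 1) *
        ∫ t in l..r, (κ - hat τ t) / rho h (ξ - t) (κ - hat τ t)| ≤ 1 := by
    intro σ l r hσ hlr
    have i1 := intervalIntegral.norm_integral_le_of_norm_le_const (a := l) (b := r)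
      (f := fun t => (κ - hat τ t) / rho h (ξ - t) (κ - hat τ t)) (C := 1 / h)
      fun t _ => r1 t
    rw [Real.norm_eq_abs, ← hlr, abs_of_pos hσ] at i1
    have i2 := weight_le hσ hh.le
    have i3 := one_le_weight hσ h
    rw [abs_mul, abs_of_nonneg (sub_nonneg.2 i3)]
    calc _ ≤ h / σ * (1 / h * σ) :=
          mul_le_mul (by linarith) i1 (abs_nonneg _) (by positivity)
      _ = 1 := by field_simp
  have w1 := w τ 0 τ hτ (by ring)
  have w2 := w (1 - τ) τ 1 (sub_pos.2 hτ1) rfl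
  have p : ∀ t ∈ Set.Icc (0:ℝ) 1,
      |(κ - hat τ t) / rho h (ξ - t) (κ - hat τ t) - (κ - hat τ ξ) * (1 / rho h (ξ - t) κ)|
        ≤ K + 4 * h / c * (1 / (|ξ - t| + c * h) ^ 2) := by
    intro t ht
    have hat1 := hat_mem hτ hτ1 ht
    have hat2 := hat_mem hτ hτ1 (⟨hξ, hξ1⟩ : ξ ∈ Set.Icc (0:ℝ) 1)
    have a0 := b0 t
    have a1 := b1 t
    have s0 := abs_le_rho h (ξ - t) κ
    have s1 := abs_le_rho h (ξ - t) (κ - hat τ t)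
    have q0 := rho_sq h (ξ - t) κ
    have q1 := rho_sq h (ξ - t) (κ - hat τ t)
    have lip := hat_lipschitz hτ hτ1 hK ξ t
    set r0 := rho h (ξ - t) κ
    set r1 := rho h (ξ - t) (κ - hat τ t)
    have p0 : 0 < r0 := hch.trans_le a0
    have p1 : 0 < r1 := hch.trans_le a1
    set d := |ξ - t| + c * h with hd
    have pd : 0 < d := by positivity
    -- Freezing the height of the roof at `ξ` costs at most `K`, because the roof is Lipschitz;
    -- replacing the distance to the roof by the distance to the base costs an integrable kernel.
    have e1 : (κ - hat τ t) / r1 - (κ - hat τ ξ) * (1 / r0)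
        = (hat τ ξ - hat τ t) / r1 + (κ - hat τ ξ) * (1 / r1 - 1 / r0) := by ring
    have e2 : |(hat τ ξ - hat τ t) / r1| ≤ K := by
      rw [abs_div, abs_of_pos p1, div_le_iff₀ p1]
      exact lip.trans (mul_le_mul_of_nonneg_left s1 hK0.le)
    have e3 : |κ - hat τ ξ| ≤ 1 := abs_le.2 ⟨by linarith [hat2.2], by linarith [hat2.1]⟩
    have e4 : |1 / r1 - 1 / r0| ≤ 4 * h / c * (1 / d ^ 2) := by
      have f1 : 1 / r1 - 1 / r0 = (r0 ^ 2 - r1 ^ 2) / (r0 * r1 * (r0 + r1)) := by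
        field_simp; ring
      have f2 : |r0 ^ 2 - r1 ^ 2| ≤ 2 * h ^ 2 := by
        have : r0 ^ 2 - r1 ^ 2 = (hat τ t * (2 * κ - hat τ t)) * h ^ 2 := by
          rw [q0, q1]; ring
        rw [this, abs_mul, abs_of_nonneg (sq_nonneg h), abs_mul, abs_of_nonneg hat1.1]
        refine mul_le_mul_of_nonneg_right ?_ (sq_nonneg h)
        have : |2 * κ - hat τ t| ≤ 2 := abs_le.2 ⟨by linarith [hat1.2], by linarith [hat1.1]⟩
        nlinarith [hat1.1, hat1.2, abs_nonneg (2 * κ - hat τ t)]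
      have f3 : d ^ 2 / 4 * (2 * (c * h)) ≤ r0 * r1 * (r0 + r1) := by
        refine mul_le_mul ?_ (by linarith) (by positivity) (by positivity)
        calc d ^ 2 / 4 = d / 2 * (d / 2) := by ring
          _ ≤ r0 * r1 := mul_le_mul (by linarith) (by linarith) (by positivity) p0.le
      rw [f1, abs_div, abs_of_pos (by positivity : 0 < r0 * r1 * (r0 + r1))]
      calc _ ≤ 2 * h ^ 2 / (d ^ 2 / 4 * (2 * (c * h))) :=
            div_le_div₀ (by positivity) f2 (by positivity) f3
        _ = _ := by field_simp
    rw [e1]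
    refine (abs_add_le _ _).trans (add_le_add e2 ?_)
    rw [abs_mul]
    calc _ ≤ 1 * |1 / r1 - 1 / r0| := mul_le_mul_of_nonneg_right e3 (abs_nonneg _)
      _ ≤ _ := by rw [one_mul]; exact e4
  have m : |∫ t in (0:ℝ)..1, ((κ - hat τ t) / rho h (ξ - t) (κ - hat τ t)
      - (κ - hat τ ξ) * (1 / rho h (ξ - t) κ))| ≤ K + 8 / c ^ 2 := by
    refine (intervalIntegral.abs_integral_le_integral_abs zero_le_one).trans ?_
    calc _ ≤ ∫ t in (0:ℝ)..1, (K + 4 * h / c * (1 / (|ξ - t| + c * h) ^ 2)) :=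
          intervalIntegral.integral_mono_on zero_le_one
            ((c1.sub (c0.const_mul _)).abs.intervalIntegrable _ _)
            ((continuous_const.add (c2.const_mul _)).intervalIntegrable _ _) p
      _ = K + 4 * h / c * ∫ t in (0:ℝ)..1, 1 / (|ξ - t| + c * h) ^ 2 := by
          rw [intervalIntegral.integral_add (by simp)
            ((c2.const_mul _).intervalIntegrable _ _), intervalIntegral.integral_const_mul]
          simp
      _ ≤ K + 4 * h / c * (2 / (c * h)) := by
          gcongr
          exact integral_inv_sq_le hξ hξ1 hch
      _ = K + 8 / c ^ 2 := by field_simp; ring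
  rw [intervalIntegral.integral_sub (c1.intervalIntegrable _ _)
    ((c0.const_mul _).intervalIntegrable _ _), intervalIntegral.integral_const_mul,
    ← intervalIntegral.integral_add_adjacent_intervals (c1.intervalIntegrable 0 τ)
    (c1.intervalIntegrable τ 1)] at m
  have g0 : ∫ t in (0:ℝ)..1, κ / rho h (ξ - t) κ
      = κ * ∫ t in (0:ℝ)..1, 1 / rho h (ξ - t) κ := by
    rw [← intervalIntegral.integral_const_mul]
    simp only [mul_one_div]
  unfold slopeF
  rw [g0]
  rw [abs_le] at m w1 w2 ⊢
  constructor <;> linarith [m.1, m.2, w1.1, w1.2, w2.1, w2.2]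

/-! ### The horizontal coordinate -/

theorem integral_abs_sub {ξ : ℝ} (hξ : 0 ≤ ξ) (hξ1 : ξ ≤ 1) :
    ∫ t in (0:ℝ)..1, |ξ - t| = 1 / 4 + (ξ - 1 / 2) ^ 2 := by
  have hc : Continuous fun t : ℝ => |ξ - t| := by fun_prop
  rw [← intervalIntegral.integral_add_adjacent_intervals (hc.intervalIntegrable 0 ξ)
    (hc.intervalIntegrable ξ 1)]
  have e1 : ∫ t in (0:ℝ)..ξ, |ξ - t| = ∫ t in (0:ℝ)..ξ, (ξ - t) := by
    refine intervalIntegral.integral_congr fun t ht => ?_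
    rw [Set.uIcc_of_le hξ] at ht
    exact abs_of_nonneg (by linarith [ht.2])
  have e2 : ∫ t in ξ..1, |ξ - t| = ∫ t in ξ..1, (t - ξ) := by
    refine intervalIntegral.integral_congr fun t ht => ?_
    rw [Set.uIcc_of_le hξ1] at ht
    rw [abs_sub_comm]
    exact abs_of_nonneg (by linarith [ht.1])
  rw [e1, e2, intervalIntegral.integral_sub (by simp) (by simp),
    intervalIntegral.integral_sub (by simp) (by simp)]
  simp only [intervalIntegral.integral_const, integral_id, smul_eq_mul]
  ring

theorem quarter_add_sq_le_integral {ξ ε : ℝ} (hε : 0 ≤ ε) (hε1 : ε ≤ 1 / 2) (h : ε ≤ |ξ - 1 / 2|) :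
    1 / 4 + ε ^ 2 ≤ ∫ t in (0:ℝ)..1, |ξ - t| := by
  have hc : ∀ ξ : ℝ, IntervalIntegrable (fun t : ℝ => |ξ - t|) volume 0 1 := fun ξ =>
    (by fun_prop : Continuous fun t : ℝ => |ξ - t|).intervalIntegrable _ _
  by_cases h0 : ξ < 0
  · have := integral_abs_sub (ξ := 0) le_rfl zero_le_one
    have h2 : ∫ t in (0:ℝ)..1, |0 - t| ≤ ∫ t in (0:ℝ)..1, |ξ - t| :=
      intervalIntegral.integral_mono_on zero_le_one (hc 0) (hc ξ) fun t ht => by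
        rw [abs_of_nonpos (by linarith [ht.1]), abs_of_nonpos (by linarith [ht.1])]; linarith
    nlinarith
  by_cases h1 : 1 < ξ
  · have := integral_abs_sub (ξ := 1) zero_le_one le_rfl
    have h2 : ∫ t in (0:ℝ)..1, |1 - t| ≤ ∫ t in (0:ℝ)..1, |ξ - t| :=
      intervalIntegral.integral_mono_on zero_le_one (hc 1) (hc ξ) fun t ht => by
        rw [abs_of_nonneg (by linarith [ht.2]), abs_of_nonneg (by linarith [ht.2])]; linarith
    nlinarith
  rw [integral_abs_sub (not_lt.1 h0) (not_lt.1 h1), ← sq_abs (ξ - 1 / 2)]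
  nlinarith

/-- Projecting to the base only decreases distances and arc lengths. -/
theorem le_scaledF {τ h ξ μ : ℝ} (hτ : 0 < τ) (hτ1 : τ < 1) :
    2 * (∫ t in (0:ℝ)..1, |ξ - t|) ≤ scaledF τ h ξ μ := by
  have hx : Continuous fun t : ℝ => ξ - t := by fun_prop
  have hc : Continuous fun t : ℝ => |ξ - t| := by fun_prop
  have hk : Continuous fun t : ℝ => μ - hat τ t := continuous_const.sub (continuous_hat τ)
  have e : ∀ (l r : ℝ) (g : ℝ → ℝ), l ≤ r → Continuous g →
      ∫ t in l..r, |ξ - t| ≤ ∫ t in l..r, rho h (ξ - t) (g t) := fun l r g hlr hg =>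
    intervalIntegral.integral_mono_on hlr (hc.intervalIntegrable _ _)
      ((continuous_rho h hx hg).intervalIntegrable _ _) fun t _ => abs_le_rho _ _ _
  have e0 := e 0 1 (fun _ => μ) zero_le_one continuous_const
  have e1 := e 0 τ _ hτ.le hk
  have e2 := e τ 1 _ hτ1.le hk
  have n1 : 0 ≤ ∫ t in (0:ℝ)..τ, |ξ - t| :=
    intervalIntegral.integral_nonneg hτ.le fun t _ => abs_nonneg _
  have n2 : 0 ≤ ∫ t in τ..1, |ξ - t| :=
    intervalIntegral.integral_nonneg hτ1.le fun t _ => abs_nonneg _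
  have s := intervalIntegral.integral_add_adjacent_intervals (hc.intervalIntegrable 0 τ)
    (hc.intervalIntegrable τ 1) (μ := volume)
  have w1 := le_mul_of_one_le_left (n1.trans e1) (one_le_weight hτ h)
  have w2 := le_mul_of_one_le_left (n2.trans e2) (one_le_weight (sub_pos.2 hτ1) h)
  unfold scaledF
  linarith

theorem scaledF_le {τ h K : ℝ} (hτ : 0 < τ) (hτ1 : τ < 1) (hh : 0 ≤ h)
    (hK : 1 / τ + 1 / (1 - τ) ≤ K) :
    scaledF τ h (1 / 2) 0 ≤ 1 / 4 + (1 + K * h) * (1 / 4 + h) := by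
  have hx : Continuous fun t : ℝ => 1 / 2 - t := by fun_prop
  have hc : Continuous fun t : ℝ => |1 / 2 - t| + h := by fun_prop
  have hk : Continuous fun t : ℝ => 0 - hat τ t := continuous_const.sub (continuous_hat τ)
  have p1 : 0 < 1 / τ := one_div_pos.2 hτ
  have p2 : 0 < 1 / (1 - τ) := one_div_pos.2 (sub_pos.2 hτ1)
  have q := integral_abs_sub (ξ := 1 / 2) (by norm_num) (by norm_num)
  have q' : ∫ t in (0:ℝ)..1, (|1 / 2 - t| + h) = 1 / 4 + h := by
    rw [intervalIntegral.integral_add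
      ((by fun_prop : Continuous fun t : ℝ => |1 / 2 - t|).intervalIntegrable _ _) (by simp), q]
    simp
  have e0 : ∫ t in (0:ℝ)..1, rho h (1 / 2 - t) 0 ≤ 1 / 4 := by
    have : ∀ t, rho h (1 / 2 - t) 0 = |1 / 2 - t| := fun t => by
      simp [rho, Real.sqrt_sq_eq_abs]
    simp only [this, q]; norm_num
  have e : ∀ (l r : ℝ), 0 ≤ l → l ≤ r → r ≤ 1 →
      ∫ t in l..r, rho h (1 / 2 - t) (0 - hat τ t) ≤ ∫ t in l..r, (|1 / 2 - t| + h) :=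
    fun l r hl hlr hr =>
    intervalIntegral.integral_mono_on hlr
      ((continuous_rho h hx hk).intervalIntegrable _ _) (hc.intervalIntegrable _ _) fun t ht => by
        have hm := hat_mem hτ hτ1 (⟨hl.trans ht.1, ht.2.trans hr⟩ : t ∈ Set.Icc (0:ℝ) 1)
        refine (rho_le _ _ _).trans (add_le_add le_rfl ?_)
        rw [zero_sub, neg_mul, abs_neg, abs_of_nonneg (mul_nonneg hm.1 hh)]
        exact mul_le_of_le_one_left hh hm.2
  have n1 : 0 ≤ ∫ t in (0:ℝ)..τ, rho h (1 / 2 - t) (0 - hat τ t) :=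
    intervalIntegral.integral_nonneg hτ.le fun t _ => rho_nonneg _ _ _
  have n2 : 0 ≤ ∫ t in τ..1, rho h (1 / 2 - t) (0 - hat τ t) :=
    intervalIntegral.integral_nonneg hτ1.le fun t _ => rho_nonneg _ _ _
  have s := intervalIntegral.integral_add_adjacent_intervals (hc.intervalIntegrable 0 τ)
    (hc.intervalIntegrable τ 1) (μ := volume)
  have hw : ∀ σ, 0 < σ → 1 / σ ≤ K → √(σ ^ 2 + h ^ 2) / σ ≤ 1 + K * h := fun σ hσ hσK => by
    refine (weight_le hσ hh).trans ?_
    rw [div_eq_mul_one_div, mul_comm]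
    linarith [mul_le_mul_of_nonneg_right hσK hh]
  have hKh : 0 ≤ 1 + K * h := by
    have : 0 < K := by linarith
    positivity
  have w1 := mul_le_mul (hw τ hτ (by linarith)) (e 0 τ le_rfl hτ.le hτ1.le) n1 hKh
  have w2 := mul_le_mul (hw (1 - τ) (sub_pos.2 hτ1) (by linarith)) (e τ 1 hτ.le hτ1.le le_rfl)
    n2 hKh
  unfold scaledF
  rw [q'] at s
  rw [← s]
  linarith

/-! ### The limit of the normalized problem -/

/-- The limiting abscissa is `1 / 2`, where the roof has relative height `1 / (2 * τ0)`, and the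
minimizer ends up at half of that height. The hypothesis `1 / 2 ≤ τ0` says that the midpoint of the
base is not to the right of the apex. -/
theorem scalar_limit {τ h ξ μ : ℕ → ℝ} {τ0 : ℝ} (h12 : 1 / 2 ≤ τ0) (h01 : τ0 < 1)
    (hτ : Tendsto τ atTop (nhds τ0)) (hpos : ∀ᶠ n in atTop, 0 < h n)
    (hh : Tendsto h atTop (nhds 0))
    (hmin : ∀ᶠ n in atTop, ∀ ξ' μ',
      scaledF (τ n) (h n) (ξ n) (μ n) ≤ scaledF (τ n) (h n) ξ' μ') :
    Tendsto ξ atTop (nhds (1 / 2)) ∧ Tendsto μ atTop (nhds (1 / (4 * τ0))) := by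
  have h0 : 0 < τ0 := by linarith
  have hσ0 : 0 < 1 - τ0 := by linarith
  have ev0 : ∀ᶠ n in atTop, 0 < τ n := hτ.eventually_const_lt h0
  have ev1 : ∀ᶠ n in atTop, τ n < 1 := hτ.eventually_lt_const h01
  obtain ⟨K, hK0, evK⟩ : ∃ K : ℝ, 0 < K ∧ ∀ᶠ n in atTop, 1 / τ n + 1 / (1 - τ n) ≤ K := by
    refine ⟨1 / τ0 + 1 / (1 - τ0) + 1, by positivity, ?_⟩
    have : Tendsto (fun n => 1 / τ n + 1 / (1 - τ n)) atTop (nhds (1 / τ0 + 1 / (1 - τ0))) :=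
      (tendsto_const_nhds.div hτ h0.ne').add
        (tendsto_const_nhds.div (tendsto_const_nhds.sub hτ) hσ0.ne')
    exact (this.eventually_lt_const (lt_add_one _)).mono fun n hn => hn.le
  have hξ : Tendsto ξ atTop (nhds (1 / 2)) := by
    rw [Metric.tendsto_nhds]
    intro ε hε
    have hε' : 0 < min ε (1 / 2) := by positivity
    have lim : Tendsto (fun n => 1 / 4 + (1 + K * h n) * (1 / 4 + h n)) atTop
        (nhds (1 / 4 + (1 + K * 0) * (1 / 4 + 0))) :=
      ((((hh.const_mul K).const_add 1)).mul (hh.const_add (1 / 4))).const_add (1 / 4)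
    have ev : ∀ᶠ n in atTop,
        1 / 4 + (1 + K * h n) * (1 / 4 + h n) < 1 / 2 + 2 * min ε (1 / 2) ^ 2 :=
      lim.eventually_lt_const (by nlinarith)
    filter_upwards [ev, ev0, ev1, evK, hpos, hmin] with n hn p0 p1 pK ph pm
    by_contra! hcon
    rw [Real.dist_eq] at hcon
    have q1 := quarter_add_sq_le_integral hε'.le (min_le_right _ _) ((min_le_left _ _).trans hcon)
    have q2 := le_scaledF (h := h n) (ξ := ξ n) (μ := μ n) p0 p1
    have q3 := scaledF_le p0 p1 ph.le pK
    linarith [pm (1 / 2) 0]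
  refine ⟨hξ, ?_⟩
  set p := 1 / (2 * τ0) with hp
  have hp0 : 0 < p := by positivity
  have hp1 : p ≤ 1 := by
    rw [hp, div_le_one (by positivity)]; linarith
  have hφ : Tendsto (fun n => hat (τ n) (ξ n)) atTop (nhds p) := by
    have e : min ((1 / 2) / τ0) ((1 - 1 / 2) / (1 - τ0)) = p := by
      rw [min_eq_left, hp]
      · field_simp
      · rw [div_le_div_iff₀ h0 hσ0]; linarith
    rw [← e]
    exact (hξ.div hτ h0.ne').min
      ((tendsto_const_nhds.sub hξ).div (tendsto_const_nhds.sub hτ) hσ0.ne')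
  have hlog : Tendsto (fun n => Real.log (1 / (4 * h n))) atTop atTop := by
    refine Real.tendsto_log_atTop.comp ?_
    simp only [one_div]
    refine Tendsto.inv_tendsto_nhdsGT_zero (tendsto_nhdsWithin_iff.2 ⟨?_, ?_⟩)
    · simpa using hh.const_mul 4
    · filter_upwards [hpos] with n hn
      exact mul_pos four_pos hn
  -- By `slope_estimate` the vertical derivative at height `κ` is `(2 * κ - p) * I + O(1)` with
  -- `I → ∞`, so its sign is that of `2 * κ - p`.
  have key : ∀ κ, 0 < κ → κ < p → κ ≠ p / 2 → ∀ᶠ n in atTop, (μ n - κ) * (2 * κ - p) ≤ 0 := by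
    intro κ hκ hκp hne
    have hκ1 : κ ≤ 1 := hκp.le.trans hp1
    set c := min κ ((p - κ) / 2 / (1 + K)) with hc
    have hc0 : 0 < c := lt_min hκ (div_pos (by linarith) (by linarith))
    have hδ : 0 < |2 * κ - p| := abs_pos.2 fun h => hne (by linarith)
    have evφ : ∀ᶠ n in atTop, (p + κ) / 2 < hat (τ n) (ξ n) :=
      hφ.eventually_const_lt (by linarith)
    have evφ' : ∀ᶠ n in atTop, |hat (τ n) (ξ n) - p| < |2 * κ - p| / 2 := by
      have := Metric.tendsto_nhds.1 hφ (|2 * κ - p| / 2) (by linarith)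
      simpa only [Real.dist_eq] using this
    have evξ0 : ∀ᶠ n in atTop, 0 < ξ n := hξ.eventually_const_lt (by norm_num)
    have evξ1 : ∀ᶠ n in atTop, ξ n < 3 / 4 := hξ.eventually_lt_const (by norm_num)
    have evL : ∀ᶠ n in atTop,
        (2 + K + 8 / c ^ 2) / (|2 * κ - p| / 2) < Real.log (1 / (4 * h n)) :=
      hlog.eventually_gt_atTop _
    have evh1 : ∀ᶠ n in atTop, h n < 1 := hh.eventually_lt_const one_pos
    filter_upwards [evφ, evφ', evξ0, evξ1, evL, evh1, ev0, ev1, evK, hpos, hmin] with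
      n a1 a2 a3 a4 a5 a6 a7 a8 a9 a10 a11
    have hcK : c * (1 + K) ≤ hat (τ n) (ξ n) - κ := by
      have : c ≤ (p - κ) / 2 / (1 + K) := min_le_right _ _
      rw [le_div_iff₀ (by linarith)] at this
      linarith
    have est := slope_estimate a7 a8 a10 a6.le a3.le (by linarith) hκ1 hc0 (min_le_left _ _) a9 hcK
    have big := log_le_integral a3.le a4.le a10 hκ hκ1
    have sgn := slope_sign a7 a8 a10 (a11 (ξ n) κ)
      (fun t => (mul_pos hκ a10).trans_le ((le_abs_self _).trans (abs_mul_le_rho _ _ _)))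
      (fun t _ => (mul_pos hc0 a10).trans_le (mul_le_rho_hat a7 a8 a10 a6.le a9 hcK t))
    rw [div_lt_iff₀ (by linarith)] at a5
    set I := ∫ t in (0:ℝ)..1, 1 / rho (h n) (ξ n - t) κ
    set S := slopeF (τ n) (h n) (ξ n) κ
    have hI : 2 + K + 8 / c ^ 2 < I * (|2 * κ - p| / 2) :=
      a5.trans_le (mul_le_mul_of_nonneg_right big (by linarith))
    have hI0 : 0 < I := by
      have : 0 < I * (|2 * κ - p| / 2) := lt_trans (by positivity) hI
      exact pos_of_mul_pos_left this (by linarith)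
    rw [abs_le] at est
    rw [abs_lt] at a2
    rcases lt_or_gt_of_ne hne with hlt | hgt
    · rw [abs_of_neg (by linarith)] at hI a2
      have : (2 * κ - hat (τ n) (ξ n)) * I ≤ -(I * (-(2 * κ - p) / 2)) := by nlinarith
      have hS : S < 0 := by linarith [est.2]
      have : 0 ≤ μ n - κ := by
        by_contra! hneg
        linarith [mul_pos_of_neg_of_neg hneg hS]
      exact mul_nonpos_of_nonneg_of_nonpos this (by linarith)
    · rw [abs_of_pos (by linarith)] at hI a2
      have : I * ((2 * κ - p) / 2) ≤ (2 * κ - hat (τ n) (ξ n)) * I := by nlinarith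
      have hS : 0 < S := by linarith [est.1]
      have : μ n - κ ≤ 0 := by
        by_contra! hneg
        linarith [mul_pos hneg hS]
      exact mul_nonpos_of_nonpos_of_nonneg this (by linarith)
  have hp2 : 1 / (4 * τ0) = p / 2 := by rw [hp]; field_simp; norm_num
  rw [hp2]
  refine tendsto_order.2 ⟨fun x hx => ?_, fun x hx => ?_⟩
  · obtain ⟨κ, k1, k2⟩ := exists_between (max_lt hx (half_pos hp0))
    filter_upwards [key κ ((le_max_right _ _).trans_lt k1) (by linarith) k2.ne] with n hn
    have := (le_max_left _ _).trans_lt k1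
    nlinarith
  · obtain ⟨κ, k1, k2⟩ := exists_between (lt_min hx (half_lt_self hp0))
    filter_upwards [key κ (by linarith) (k2.trans_le (min_le_right _ _)) k1.ne'] with n hn
    have := k2.trans_le (min_le_left _ _)
    nlinarith

/-! ### Reduction of the planar problem to the scalar one -/

theorem norm_combo {e v : Plane} (hev : inner ℝ e v = 0) (hL : 0 < ‖e‖) (x y : ℝ) :
    ‖x • e + y • v‖ = ‖e‖ * rho (‖v‖ / ‖e‖) x y := by
  rw [← sq_eq_sq₀ (norm_nonneg _) (mul_nonneg hL.le (rho_nonneg _ _ _)), mul_pow, rho_sq,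
    norm_add_sq_real, inner_smul_left, inner_smul_right, hev, norm_smul, norm_smul, mul_pow,
    mul_pow, Real.norm_eq_abs, Real.norm_eq_abs, sq_abs, sq_abs]
  field_simp
  simp

/-- The similarity that turns the side `BC` into the unit interval. Here `e = B - C`, `τ` is the
position along `e` of the foot of the altitude from `A`, and `v ⟂ e` is that altitude. -/
theorem perimDist_eq {e v : Plane} (hev : inner ℝ e v = 0) (hL : 0 < ‖e‖) {τ : ℝ}
    (hτ : 0 < τ) (hτ1 : τ < 1) (C : Plane) (ξ μ : ℝ) :
    perimDist (C + τ • e + v) (C + e) C (C + ξ • e + μ • v)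
      = ‖e‖ ^ 2 * scaledF τ (‖v‖ / ‖e‖) ξ μ := by
  have hσ : 0 < 1 - τ := sub_pos.2 hτ1
  set h := ‖v‖ / ‖e‖ with hh
  have nCA : ‖C - (C + τ • e + v)‖ = ‖e‖ * √(τ ^ 2 + h ^ 2) := by
    rw [show C - (C + τ • e + v) = (-τ) • e + (-1 : ℝ) • v by module, norm_combo hev hL, rho]
    congr 2; ring
  have nAB : ‖C + τ • e + v - (C + e)‖ = ‖e‖ * √((1 - τ) ^ 2 + h ^ 2) := by
    rw [show C + τ • e + v - (C + e) = (τ - 1) • e + (1 : ℝ) • v by module,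
      norm_combo hev hL, rho]
    congr 2; ring
  have nBC : ‖C + e - C‖ = ‖e‖ := by rw [add_sub_cancel_left]
  have iBC : ∫ t in (0:ℝ)..1, ‖(1 - t) • (C + e) + t • C - (C + ξ • e + μ • v)‖
      = ‖e‖ * ∫ t in (0:ℝ)..1, rho h (ξ - t) μ := by
    have := intervalIntegral.integral_comp_sub_left (a := 0) (b := 1)
      (fun t => rho h (ξ - t) μ) (1:ℝ)
    rw [sub_self, sub_zero] at this
    rw [← this, ← intervalIntegral.integral_const_mul]
    refine intervalIntegral.integral_congr fun t _ => ?_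
    rw [show (1 - t) • (C + e) + t • C - (C + ξ • e + μ • v)
      = (1 - t - ξ) • e + (-μ) • v by module, norm_combo hev hL, rho, rho]
    congr 2; ring
  have iCA : ∫ t in (0:ℝ)..1, ‖(1 - t) • C + t • (C + τ • e + v) - (C + ξ • e + μ • v)‖
      = ‖e‖ * (τ⁻¹ * ∫ t in (0:ℝ)..τ, rho h (ξ - t) (μ - hat τ t)) := by
    have := intervalIntegral.integral_comp_mul_left (a := 0) (b := 1)
      (fun t => rho h (ξ - t) (μ - hat τ t)) hτ.ne'
    rw [mul_zero, mul_one, smul_eq_mul] at this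
    rw [← this, ← intervalIntegral.integral_const_mul]
    refine intervalIntegral.integral_congr fun t ht => ?_
    rw [Set.uIcc_of_le zero_le_one] at ht
    have hhat : hat τ (τ * t) = t := by
      rw [hat, mul_div_cancel_left₀ _ hτ.ne']
      refine min_eq_left ((le_div_iff₀ hσ).2 ?_)
      nlinarith [ht.2]
    simp only [hhat]
    rw [show (1 - t) • C + t • (C + τ • e + v) - (C + ξ • e + μ • v)
      = (τ * t - ξ) • e + (t - μ) • v by module, norm_combo hev hL, rho, rho]
    congr 2; ring
  have iAB : ∫ t in (0:ℝ)..1, ‖(1 - t) • (C + τ • e + v) + t • (C + e) - (C + ξ • e + μ • v)‖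
      = ‖e‖ * ((1 - τ)⁻¹ * ∫ t in τ..1, rho h (ξ - t) (μ - hat τ t)) := by
    have := intervalIntegral.integral_comp_mul_add (a := 0) (b := 1)
      (fun t => rho h (ξ - t) (μ - hat τ t)) hσ.ne' τ
    rw [mul_zero, mul_one, smul_eq_mul, zero_add, sub_add_cancel] at this
    rw [← this, ← intervalIntegral.integral_const_mul]
    refine intervalIntegral.integral_congr fun t ht => ?_
    rw [Set.uIcc_of_le zero_le_one] at ht
    have hhat : hat τ ((1 - τ) * t + τ) = 1 - t := by
      have : 1 - ((1 - τ) * t + τ) = (1 - τ) * (1 - t) := by ring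
      rw [hat, this, mul_div_cancel_left₀ _ hσ.ne']
      refine min_eq_right ((le_div_iff₀ hτ).2 ?_)
      nlinarith [ht.1]
    simp only [hhat]
    rw [show (1 - t) • (C + τ • e + v) + t • (C + e) - (C + ξ • e + μ • v)
      = ((1 - τ) * t + τ - ξ) • e + (1 - t - μ) • v by module, norm_combo hev hL, rho, rho]
    congr 2; ring
  unfold perimDist scaledF
  rw [nCA, nAB, nBC, iBC, iCA, iAB]
  ring

/-- The barycentric coordinates of the geometric medians of the perimeters of triangles
approximating a degenerate triangle converge to `(a/(4b), 1/4, 3/4 − a/(4b))`. -/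
theorem median_perimeter_degenerate_barycentric
    (a b c : ℝ) (hba : b ≤ a) (hcb : c ≤ b) (hc : 0 < c) (habc : a = b + c)
    (A B C : Plane) (hcfg : DegenConfig a b c A B C)
    (An Bn Cn : ℕ → Plane)
    (hAI : ∀ n, AffineIndependent ℝ ![An n, Bn n, Cn n])
    (hA : Tendsto An atTop (nhds A)) (hB : Tendsto Bn atTop (nhds B))
    (hC : Tendsto Cn atTop (nhds C))
    (mn : ℕ → Plane)
    (hmin : ∀ n, ∀ X : Plane,
      perimDist (An n) (Bn n) (Cn n) (mn n) ≤ perimDist (An n) (Bn n) (Cn n) X)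
    (μ1 μ2 μ3 : ℕ → ℝ)
    (hsum : ∀ n, μ1 n + μ2 n + μ3 n = 1)
    (hbar : ∀ n, mn n = μ1 n • An n + μ2 n • Bn n + μ3 n • Cn n) :
    Tendsto μ1 atTop (nhds (a / (4 * b))) ∧
    Tendsto μ2 atTop (nhds (1 / 4)) ∧
    Tendsto μ3 atTop (nhds (3 / 4 - a / (4 * b))) := by
  obtain ⟨-, hBC, hCA, hAB⟩ := hcfg
  have hb : 0 < b := hc.trans_le hcb
  have ha : 0 < a := by linarith
  have hAC : ‖A - C‖ = b := by rw [norm_sub_rev, hCA]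
  -- The three side lengths alone force `A - C = (b / a) • (B - C)`.
  have hin : inner ℝ (A - C) (B - C) = a * b := by
    have := norm_sub_sq_real (A - C) (B - C)
    rw [sub_sub_sub_cancel_right, hAB, hAC, hBC, show c = a - b by linarith] at this
    linarith
  set e : ℕ → Plane := fun n => Bn n - Cn n with he
  set τ : ℕ → ℝ := fun n => inner ℝ (An n - Cn n) (e n) / ‖e n‖ ^ 2 with hτdef
  set v : ℕ → Plane := fun n => An n - Cn n - τ n • e n with hv
  set h : ℕ → ℝ := fun n => ‖v n‖ / ‖e n‖ with hhdef
  have hLn : ∀ n, 0 < ‖e n‖ := fun n => by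
    refine norm_pos_iff.2 (sub_ne_zero.2 fun h0 => ?_)
    have := (hAI n).injective.ne (show (1 : Fin 3) ≠ 2 by decide)
    exact this (by simpa using h0)
  have hev : ∀ n, inner ℝ (e n) (v n) = 0 := fun n => by
    have := (hLn n).ne'
    simp only [hv, hτdef]
    rw [inner_sub_right, inner_smul_right, real_inner_self_eq_norm_sq,
      div_mul_cancel₀ _ (pow_ne_zero 2 this), real_inner_comm, sub_self]
  have hvn : ∀ n, v n ≠ 0 := fun n h0 => by
    refine (affineIndependent_iff_not_collinear_set.1 (hAI n)) ?_
    have hA' : An n = AffineMap.lineMap (Cn n) (Bn n) (τ n) := by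
      rw [AffineMap.lineMap_apply, vsub_eq_sub, vadd_eq_add]
      exact sub_eq_iff_eq_add.1 (sub_eq_zero.1 h0)
    have : An n ∈ line[ℝ, Bn n, Cn n] := by
      rw [hA', Set.pair_comm]
      exact AffineMap.lineMap_mem_affineSpan_pair _ _ _
    exact collinear_insert_of_mem_affineSpan_pair this
  have le : Tendsto e atTop (nhds (B - C)) := hB.sub hC
  have lτ : Tendsto τ atTop (nhds (b / a)) := by
    have := ((hA.sub hC).inner le (𝕜 := ℝ)).div (le.norm.pow 2) (by rw [hBC]; positivity)
    rw [hin, hBC] at this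
    rw [show b / a = a * b / a ^ 2 by field_simp]
    exact this
  have lv : Tendsto v atTop (nhds 0) := by
    have h0 : A - C - (b / a) • (B - C) = 0 := by
      rw [← norm_eq_zero, ← sq_eq_zero_iff, norm_sub_sq_real, inner_smul_right, hin, norm_smul,
        hAC, hBC, Real.norm_eq_abs, abs_of_pos (by positivity)]
      field_simp
      ring
    rw [← h0]
    exact (hA.sub hC).sub (lτ.smul le)
  have lh : Tendsto h atTop (nhds 0) := by
    have := lv.norm.div le.norm (by rw [hBC]; exact ha.ne')
    rw [norm_zero, zero_div] at this
    exact this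
  have hτ0 : 1 / 2 ≤ b / a := by
    rw [div_le_div_iff₀ two_pos ha]; linarith
  have hτ1 : b / a < 1 := (div_lt_one ha).2 (by linarith)
  set ξ : ℕ → ℝ := fun n => μ1 n * τ n + μ2 n with hξ
  -- `mn n = Cn n + ξ n • e n + μ1 n • v n`, so the barycentric coordinate of `An n` is exactly
  -- the relative height of the median above the side `Bn n Cn n`.
  have hm : ∀ᶠ n in atTop, ∀ ξ' μ',
      scaledF (τ n) (h n) (ξ n) (μ1 n) ≤ scaledF (τ n) (h n) ξ' μ' := by
    filter_upwards [lτ.eventually_const_lt (by positivity : 0 < b / a),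
      lτ.eventually_lt_const hτ1] with n t0 t1 ξ' μ'
    have eA : An n = Cn n + τ n • e n + v n := by simp only [hv]; module
    have eB : Bn n = Cn n + e n := by simp only [he]; module
    have em : mn n = Cn n + ξ n • e n + μ1 n • v n := by
      rw [hbar, show μ3 n = 1 - μ1 n - μ2 n by linarith [hsum n]]
      simp only [hv, he, hξ]; module
    have := hmin n (Cn n + ξ' • e n + μ' • v n)
    rw [em, eA, eB, perimDist_eq (hev n) (hLn n) t0 t1, perimDist_eq (hev n) (hLn n) t0 t1] at this
    exact le_of_mul_le_mul_left this (by have := hLn n; positivity)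
  obtain ⟨lξ, lμ⟩ := scalar_limit hτ0 hτ1 lτ
    (Eventually.of_forall fun n => div_pos (norm_pos_iff.2 (hvn n)) (hLn n)) lh hm
  have l1 : Tendsto μ1 atTop (nhds (a / (4 * b))) := by
    convert lμ using 2
    field_simp
  have l2 : Tendsto μ2 atTop (nhds (1 / 4)) := by
    have := lξ.sub (l1.mul lτ)
    convert this using 2
    · simp [hξ]
    · field_simp; norm_num
  refine ⟨l1, l2, ?_⟩
  have := (l1.add l2).const_sub 1
  convert this using 2
  · linarith [hsum ‹_›]
  · ring
end
end

section
/- Let a ≥ b ≥ c > 0 with a = b + c, let A, B, C ∈ ℝ² be a degenerate triangle configuration with these side lengths, and let (Aₙ, Bₙ, Cₙ) be affinely independent triples in ℝ² with Aₙ → A, Bₙ → B, Cₙ → C. If mₙ is a global minimizer of the area distance functional of the triangle AₙBₙCₙ for each n, and (λ₁ⁿ, λ₂ⁿ, λ₃ⁿ) are the barycentric coordinates of mₙ with respect to (Aₙ, Bₙ, Cₙ), then λ₁ⁿ → (1/(2√2))·√(a/b), λ₂ⁿ → (1/(2√2))·√(b/a) and λ₃ⁿ → 1 − (1/(2√2))·(√(a/b)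 + √(b/a)). -/
/-!
A minimizer `m` of `X ↦ ∫_T ‖P - X‖` over the triangle `T = ABC` satisfies the first-order condition
`∫_T (P - m) / ‖P - m‖ = 0` (`first_order`). Write `P = C + s • v + x • e`, where `e` is the unit
vector along `CB` and `v` is the altitude vector at `A`, of length `h`. Then
`‖P - m‖ = √((x - x₀) ^ 2 + (h * (s - s₀)) ^ 2)`, the triangle becomes
`{0 ≤ s, b * s ≤ x ≤ a - (a - b) * s}`, and `s` is the barycentric coordinate at `A`. Integrating
over `x` first turns the two components of the condition into the single integrals `Eq1` and `Eq2`
(`reduction`). These force `0 ≤ x₀ ≤ a` and `0 ≤ s₀ ≤ 1` by sign considerations, so it suffices to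
identify the limits of convergent subsequences as `h → 0`.

The integral in `Eq1` is continuous in its parameters down to `h = 0`, where it states that `x₀` is
the median of the mass of the triangle projected to the long side. As `b ≥ a / 2`, this gives
`x₀ = d := √(a * b / 2) ≤ b` (`eq1_limit`, `median_line`).

The integral in `Eq2` has the form `∫ (s - s₀) * (arsinh (r / (h * |s - s₀|)) -
arsinh (l / (h * |s - s₀|)))`, where `l` and `r` are the positions, relative to `x₀`, of the ends of
the horizontal slice at level `s`. It grows like `log (1 / h)`; dividing by that factor and passing
to the limit by dominated convergence (`arsinh_bound`, `arsinh_limit_pos`, `arsinh_limit_neg`)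
leaves `∫ (s - s₀) * (sign r - sign l) = 0`. The second factor is `2` on the slice `x = d` of the
triangle, which is `0 ≤ s ≤ d / b`, and `0` off it. So `s₀` is the midpoint `d / (2 * b)`
(`eq2_limit`), and the coordinate at `B` tends to `(d - b * s₀) / a = d / (2 * a)`.
-/

open MeasureTheory Metric Filter

noncomputable section

/-- The area distance functional of the triangle `ABC`. -/
noncomputable def areaDist (A B C X : Plane) : ℝ :=
  ∫ P in convexHull ℝ ({A, B, C} : Set Plane), ‖P - X‖

open scoped Topology

/-! ### First-order condition and change of variables -/

/-- First-order condition: at a minimizer `X` of `Y ↦ ∫_S ‖P - Y‖`, every component of the mean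
unit vector pointing from `X` to `P ∈ S` vanishes. -/
lemma first_order {S : Set Plane} (hS : IsCompact S) {X : Plane}
    (hmin : ∀ Y, ∫ P in S, ‖P - X‖ ≤ ∫ P in S, ‖P - Y‖) (v : Plane) :
    ∫ P in S, inner ℝ (P - X) v / ‖P - X‖ = 0 := by
  have : IsFiniteMeasure (volume.restrict S) := ⟨by simpa using hS.measure_lt_top⟩
  have key := hasDerivAt_integral_of_dominated_loc_of_lip (μ := volume.restrict S) (𝕜 := ℝ)
    (F := fun (τ : ℝ) (P : Plane) => ‖P - (X + τ • v)‖)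
    (F' := fun P => -(inner ℝ (P - X) v / ‖P - X‖)) (x₀ := 0) (s := Set.univ)
    (bound := fun _ => ‖v‖) univ_mem
    (Eventually.of_forall fun τ => by fun_prop)
    (by
      have : Continuous fun P : Plane => ‖P - (X + (0 : ℝ) • v)‖ := by fun_prop
      exact this.continuousOn.integrableOn_compact hS)
    (by
      refine Measurable.aestronglyMeasurable ?_
      have h1 : Continuous fun P : Plane => inner ℝ (P - X) v := by fun_prop
      have h2 : Continuous fun P : Plane => ‖P - X‖ := by fun_prop
      exact (h1.measurable.div h2.measurable).neg)
    (Eventually.of_forall fun P => by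
      rw [lipschitzOnWith_univ]
      refine LipschitzWith.of_dist_le_mul fun x y => ?_
      have h1 : |‖P - (X + x • v)‖ - ‖P - (X + y • v)‖|
          ≤ ‖(P - (X + x • v)) - (P - (X + y • v))‖ := abs_norm_sub_norm_le _ _
      have h2 : (P - (X + x • v)) - (P - (X + y • v)) = (y - x) • v := by module
      rw [h2, norm_smul] at h1
      simp only [Real.dist_eq, Real.coe_nnabs, abs_norm]
      rw [abs_sub_comm x y, mul_comm]
      simpa using h1)
    (integrable_const _)
    (by
      have hne : ∀ᵐ P ∂(volume.restrict S), P ≠ X := by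
        apply ae_restrict_of_ae
        rw [ae_iff]; simp
      filter_upwards [hne] with P hP
      have hline : HasDerivAt (fun τ : ℝ => P - (X + τ • v)) (-v) 0 := by
        have := (((hasDerivAt_id (0 : ℝ)).smul_const v).const_add X).const_sub P
        simpa using this
      have h1 := hline.norm_sq
      have hpos : 0 < ‖P - X‖ := norm_pos_iff.2 (sub_ne_zero.2 hP)
      have h2 := h1.sqrt (by simpa using hpos.ne')
      have heq : (fun τ : ℝ => ‖P - (X + τ • v)‖) = fun τ => √(‖P - (X + τ • v)‖ ^ 2) := by
        funext τ; rw [Real.sqrt_sq (norm_nonneg _)]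
      rw [heq]
      refine HasDerivAt.congr_deriv h2 ?_
      rw [Real.sqrt_sq (norm_nonneg _)]
      simp only [zero_smul, add_zero, inner_neg_right]
      field_simp)
  have hloc : IsLocalMin (fun τ : ℝ => ∫ P in S, ‖P - (X + τ • v)‖) 0 :=
    Eventually.of_forall fun τ => by simpa using hmin (X + τ • v)
  have := hloc.hasDerivAt_eq_zero key.2
  rw [integral_neg] at this
  linarith

/-- Linear change of variables `(s, x) ↦ C + s • v + x • e` for orthogonal nonzero `v`, `e`. -/
lemma change_vars {e v : Plane} (he : e ≠ 0) (hv : v ≠ 0) (hev : inner ℝ v e = (0 : ℝ))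
    (C : Plane) : ∃ k : ℝ, k ≠ 0 ∧ ∀ g : Plane → ℝ,
      ∫ P, g P = k * ∫ p : ℝ × ℝ, g (C + (p.1 • v + p.2 • e)) := by
  let L₀ : ℝ × ℝ →ₗ[ℝ] Plane :=
    (LinearMap.toSpanSingleton ℝ Plane v).coprod (LinearMap.toSpanSingleton ℝ Plane e)
  have hL₀ : ∀ p, L₀ p = p.1 • v + p.2 • e := fun p => by simp [L₀]
  have hinj : Function.Injective L₀ := by
    rw [← LinearMap.ker_eq_bot, LinearMap.ker_eq_bot']
    rintro ⟨s, x⟩ h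
    rw [hL₀] at h
    have h1 : inner ℝ (s • v + x • e) v = (0 : ℝ) := by simp only at h; rw [h, inner_zero_left]
    have h2 : inner ℝ (s • v + x • e) e = (0 : ℝ) := by simp only at h; rw [h, inner_zero_left]
    have hve : inner ℝ e v = (0 : ℝ) := by rw [real_inner_comm]; exact hev
    simp [inner_add_left, inner_smul_left, hev, hve, he, hv] at h1 h2
    simp [h1, h2]
  let L : (ℝ × ℝ) ≃L[ℝ] Plane :=
    (LinearEquiv.ofInjectiveOfFinrankEq L₀ hinj (by simp)).toContinuousLinearEquiv
  have hL : ∀ p, L p = p.1 • v + p.2 • e := fun p => hL₀ p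
  have : (Measure.map L (volume : Measure (ℝ × ℝ))).IsAddHaarMeasure :=
    L.isAddHaarMeasure_map _
  have hvol := Measure.isAddLeftInvariant_eq_smul (volume : Measure Plane)
    (Measure.map L (volume : Measure (ℝ × ℝ)))
  set k := Measure.addHaarScalarFactor (volume : Measure Plane)
    (Measure.map L (volume : Measure (ℝ × ℝ)))
  refine ⟨k, ?_, fun g => ?_⟩
  · intro h0
    have : k = 0 := by exact_mod_cast h0
    rw [this, zero_smul] at hvol
    exact (NeZero.ne (volume : Measure Plane)) hvol
  · rw [← integral_add_left_eq_self g C]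
    conv_lhs => rw [hvol]
    rw [integral_smul_nnreal_measure]
    have := L.toHomeomorph.toMeasurableEquiv.measurableEmbedding.integral_map
      (μ := (volume : Measure (ℝ × ℝ))) (fun P => g (C + P))
    simp only [← hL]
    rw [NNReal.smul_def, smul_eq_mul]
    congr 1

/-! ### Reduction to two scalar equations -/

/-- In the coordinates `(s, x)`, the triangle with vertices `A = (1, b)`, `B = (0, a)`,
`C = (0, 0)`. -/
def flatTri (a b : ℝ) : Set (ℝ × ℝ) :=
  {p | 0 ≤ p.1 ∧ b * p.1 ≤ p.2 ∧ p.2 ≤ a - (a - b) * p.1}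

lemma isClosed_flatTri (a b : ℝ) : IsClosed (flatTri a b) := by
  have h1 : IsClosed {p : ℝ × ℝ | 0 ≤ p.1} := isClosed_le (by fun_prop) (by fun_prop)
  have h2 : IsClosed {p : ℝ × ℝ | b * p.1 ≤ p.2} := isClosed_le (by fun_prop) (by fun_prop)
  have h3 : IsClosed {p : ℝ × ℝ | p.2 ≤ a - (a - b) * p.1} :=
    isClosed_le (by fun_prop) (by fun_prop)
  exact h1.inter (h2.inter h3)

lemma flatTri_subset {a b : ℝ} (ha : 0 < a) (hb : 0 ≤ b) (hba : b ≤ a) :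
    flatTri a b ⊆ Set.Icc 0 1 ×ˢ Set.Icc 0 a := by
  rintro ⟨s, x⟩ ⟨h1, h2, h3⟩
  simp only at h1 h2 h3
  have : 0 ≤ (a - b) * s := mul_nonneg (by linarith) h1
  have : 0 ≤ b * s := mul_nonneg hb h1
  refine ⟨⟨h1, ?_⟩, ⟨by linarith, by linarith⟩⟩
  have : a * s ≤ a * 1 := by linarith
  exact le_of_mul_le_mul_left this ha

lemma flatTri_volume_lt_top {a b : ℝ} (ha : 0 < a) (hb : 0 ≤ b) (hba : b ≤ a) :
    volume (flatTri a b) < ⊤ :=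
  (measure_mono (flatTri_subset ha hb hba)).trans_lt
    (isCompact_Icc.prod isCompact_Icc).measure_lt_top

/-- Fubini on `flatTri a b`. -/
lemma integral_flatTri {a b : ℝ} (ha : 0 < a) (hb : 0 ≤ b) (hba : b ≤ a) {F : ℝ × ℝ → ℝ}
    (hF : Measurable F) {M : ℝ} (hM : ∀ p, |F p| ≤ M) :
    ∫ p in flatTri a b, F p =
      ∫ s in (0 : ℝ)..1, ∫ x in (b * s)..(a - (a - b) * s), F (s, x) := by
  have hmeas := (isClosed_flatTri a b).measurableSet
  have hint : IntegrableOn F (flatTri a b) :=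
    Measure.integrableOn_of_bounded (M := M) (flatTri_volume_lt_top ha hb hba).ne
      hF.aestronglyMeasurable (Eventually.of_forall fun p => hM p)
  rw [← integral_indicator hmeas, Measure.volume_eq_prod, integral_prod _
    ((integrable_indicator_iff hmeas).2 hint), intervalIntegral.integral_of_le zero_le_one,
    ← integral_Icc_eq_integral_Ioc, ← integral_indicator measurableSet_Icc]
  congr 1
  funext s
  by_cases hs : s ∈ Set.Icc (0 : ℝ) 1
  · rw [Set.indicator_of_mem hs]
    have hle : b * s ≤ a - (a - b) * s := by nlinarith [hs.2]
    rw [intervalIntegral.integral_of_le hle, ← integral_Icc_eq_integral_Ioc,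
      ← integral_indicator measurableSet_Icc]
    congr 1
    funext x
    have : (s, x) ∈ flatTri a b ↔ x ∈ Set.Icc (b * s) (a - (a - b) * s) :=
      ⟨fun h => h.2, fun h => ⟨hs.1, h⟩⟩
    by_cases hx : x ∈ Set.Icc (b * s) (a - (a - b) * s)
    · rw [Set.indicator_of_mem hx, Set.indicator_of_mem (this.2 hx)]
    · rw [Set.indicator_of_notMem hx, Set.indicator_of_notMem (fun h => hx (this.1 h))]
  · rw [Set.indicator_of_notMem hs]
    have : ∀ x, (flatTri a b).indicator F (s, x) = 0 := fun x =>
      Set.indicator_of_notMem (fun h => hs (flatTri_subset ha hb hba h).1) _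
    simp [this]

lemma mem_hull_iff {a b : ℝ} (ha : 0 < a) {e v : Plane} (he : ‖e‖ = 1) (hv : v ≠ 0)
    (hev : inner ℝ v e = (0 : ℝ)) (C : Plane) (p : ℝ × ℝ) :
    C + (p.1 • v + p.2 • e) ∈
      convexHull ℝ ({C + (v + b • e), C + a • e, C} : Set Plane) ↔ p ∈ flatTri a b := by
  constructor
  · intro h
    let T : Set Plane := {P | ∃ q ∈ flatTri a b, P = C + (q.1 • v + q.2 • e)}
    have hT : Convex ℝ T := by
      rintro _ ⟨q, ⟨hq1, hq2, hq3⟩, rfl⟩ _ ⟨r, ⟨hr1, hr2, hr3⟩, rfl⟩ α β hα hβ hαβ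
      refine ⟨α • q + β • r, ⟨?_, ?_, ?_⟩, ?_⟩
      · simp only [Prod.fst_add, Prod.smul_fst, smul_eq_mul]; positivity
      · simp only [Prod.fst_add, Prod.smul_fst, smul_eq_mul, Prod.snd_add, Prod.smul_snd]
        nlinarith [mul_le_mul_of_nonneg_left hq2 hα, mul_le_mul_of_nonneg_left hr2 hβ]
      · simp only [Prod.fst_add, Prod.smul_fst, smul_eq_mul, Prod.snd_add, Prod.smul_snd]
        have : a = α * a + β * a := by rw [← add_mul, hαβ, one_mul]
        nlinarith [mul_le_mul_of_nonneg_left hq3 hα, mul_le_mul_of_nonneg_left hr3 hβ]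
      · have hβ' : β = 1 - α := by linarith
        subst hβ'
        simp only [Prod.fst_add, Prod.smul_fst, smul_eq_mul, Prod.snd_add, Prod.smul_snd]
        module
    have hsub : ({C + (v + b • e), C + a • e, C} : Set Plane) ⊆ T := by
      rintro P (rfl | rfl | rfl)
      · exact ⟨(1, b), ⟨by simp, by simp, by simp⟩, by simp⟩
      · exact ⟨(0, a), ⟨by simp, by simpa using ha.le, by simp⟩, by simp⟩
      · exact ⟨(0, 0), ⟨by simp, by simp, by simpa using ha.le⟩, by simp⟩
    obtain ⟨q, hq, hqp⟩ := convexHull_min hsub hT h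
    have hqp := add_left_cancel hqp
    have hve : inner ℝ e v = (0 : ℝ) := by rw [real_inner_comm]; exact hev
    have he0 : e ≠ 0 := by rintro rfl; simp at he
    have h1 := congrArg (fun P => inner ℝ P v) hqp
    have h2 := congrArg (fun P => inner ℝ P e) hqp
    simp [inner_add_left, inner_smul_left, hev, hve, he0, hv] at h1 h2
    rwa [show p = q from Prod.ext h1 h2]
  · rintro ⟨h1, h2, h3⟩
    have hc := convex_convexHull ℝ ({C + (v + b • e), C + a • e, C} : Set Plane)
    have hA : C + (v + b • e) ∈ convexHull ℝ ({C + (v + b • e), C + a • e, C} : Set Plane) :=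
      subset_convexHull _ _ (by simp)
    have hB : C + a • e ∈ convexHull ℝ ({C + (v + b • e), C + a • e, C} : Set Plane) :=
      subset_convexHull _ _ (by simp)
    have hC : C ∈ convexHull ℝ ({C + (v + b • e), C + a • e, C} : Set Plane) :=
      subset_convexHull _ _ (by simp)
    have key := hc.sum_mem (t := (Finset.univ : Finset (Fin 3)))
      (w := ![p.1, (p.2 - b * p.1) / a, 1 - p.1 - (p.2 - b * p.1) / a])
      (z := ![C + (v + b • e), C + a • e, C])
      (by
        intro i _
        fin_cases i
        · exact h1
        · exact div_nonneg (by linarith) ha.le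
        · have : (p.2 - b * p.1) / a ≤ 1 - p.1 := by rw [div_le_iff₀ ha]; linarith
          simp; linarith)
      (by simp [Fin.sum_univ_three])
      (by intro i _; fin_cases i <;> simp [hA, hB, hC])
    simp only [Fin.sum_univ_three, Matrix.cons_val] at key
    convert key using 1
    match_scalars <;> field_simp <;> ring

lemma integral_fst {l r x₀ q : ℝ} (hq : q ≠ 0) :
    ∫ x in l..r, (x - x₀) / √((x - x₀) ^ 2 + q ^ 2) =
      √((r - x₀) ^ 2 + q ^ 2) - √((l - x₀) ^ 2 + q ^ 2) := by
  have hpos : ∀ x : ℝ, 0 < (x - x₀) ^ 2 + q ^ 2 := fun x => by positivity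
  have hne : ∀ x : ℝ, √((x - x₀) ^ 2 + q ^ 2) ≠ 0 := fun x => (Real.sqrt_pos.2 (hpos x)).ne'
  rw [intervalIntegral.integral_eq_sub_of_hasDerivAt
    (f := fun x => √((x - x₀) ^ 2 + q ^ 2))]
  · intro x _
    have h1 : HasDerivAt (fun x : ℝ => (x - x₀) ^ 2 + q ^ 2) (2 * (x - x₀)) x := by
      simpa using (((hasDerivAt_id x).sub_const x₀).pow 2).add_const (q ^ 2)
    have := h1.sqrt (hpos x).ne'
    refine HasDerivAt.congr_deriv this ?_
    have := hne x
    field_simp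
  · apply Continuous.intervalIntegrable
    exact Continuous.div (by fun_prop) (by fun_prop) hne

lemma integral_snd {l r x₀ h σ : ℝ} (hh : 0 < h) (hσ : σ ≠ 0) :
    ∫ x in l..r, σ / √((x - x₀) ^ 2 + (h * σ) ^ 2) =
      σ * (Real.arsinh ((r - x₀) / (h * |σ|)) - Real.arsinh ((l - x₀) / (h * |σ|))) := by
  have hq : 0 < h * |σ| := mul_pos hh (abs_pos.2 hσ)
  have hsq : (h * σ) ^ 2 = (h * |σ|) ^ 2 := by rw [mul_pow, mul_pow, sq_abs]
  rw [hsq]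
  set q := h * |σ|
  have hpos : ∀ x : ℝ, 0 < (x - x₀) ^ 2 + q ^ 2 := fun x => by positivity
  have hne : ∀ x : ℝ, √((x - x₀) ^ 2 + q ^ 2) ≠ 0 := fun x => (Real.sqrt_pos.2 (hpos x)).ne'
  rw [intervalIntegral.integral_eq_sub_of_hasDerivAt
    (f := fun x => σ * Real.arsinh ((x - x₀) / q))]
  · ring
  · intro x _
    have h1 : HasDerivAt (fun x : ℝ => (x - x₀) / q) (1 / q) x :=
      ((hasDerivAt_id x).sub_const x₀).div_const q
    have := (h1.arsinh).const_mul σ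
    refine HasDerivAt.congr_deriv this ?_
    have h2 : √((x - x₀) ^ 2 + q ^ 2) = q * √(1 + ((x - x₀) / q) ^ 2) := by
      rw [show (x - x₀) ^ 2 + q ^ 2 = q ^ 2 * (1 + ((x - x₀) / q) ^ 2) by field_simp; ring,
        Real.sqrt_mul (sq_nonneg q), Real.sqrt_sq hq.le]
    have h3 : √(1 + ((x - x₀) / q) ^ 2) ≠ 0 := (Real.sqrt_pos.2 (by positivity)).ne'
    rw [h2, smul_eq_mul]
    field_simp
  · apply Continuous.intervalIntegrable
    exact Continuous.div (by fun_prop) (by fun_prop) hne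

/-- First component of the first-order condition, along the side `CB`, for the triangle
`flatTri a b` with altitude `h` and the point with coordinates `(s₀, x₀)`, after integration over
`x`. -/
def Eq1 (a b h x₀ s₀ : ℝ) : Prop :=
  ∫ s in (0 : ℝ)..1, (√((a - (a - b) * s - x₀) ^ 2 + (h * (s - s₀)) ^ 2)
    - √((b * s - x₀) ^ 2 + (h * (s - s₀)) ^ 2)) = 0

/-- Second component of the first-order condition, across the side `CB`, after integration over
`x`. At `s = s₀` the integrand
is `0` because of the factor `s - s₀`, whatever the junk values of the quotients. -/
def Eq2 (a b h x₀ s₀ : ℝ) : Prop :=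
  ∫ s in (0 : ℝ)..1, (s - s₀) * (Real.arsinh ((a - (a - b) * s - x₀) / (h * |s - s₀|))
    - Real.arsinh ((b * s - x₀) / (h * |s - s₀|))) = 0

/-- A minimizer with coordinates `(s₀, x₀)` satisfies both scalar equations. -/
lemma reduction {a b s₀ x₀ : ℝ} (hb : 0 ≤ b) (hba : b < a) {e v C : Plane}
    (he : ‖e‖ = 1) (hv : v ≠ 0) (hev : inner ℝ v e = (0 : ℝ))
    (hmin : ∀ Y, areaDist (C + (v + b • e)) (C + a • e) C (C + (s₀ • v + x₀ • e)) ≤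
      areaDist (C + (v + b • e)) (C + a • e) C Y) :
    Eq1 a b ‖v‖ x₀ s₀ ∧ Eq2 a b ‖v‖ x₀ s₀ := by
  have ha : 0 < a := by linarith
  have he0 : e ≠ 0 := by rintro rfl; simp at he
  have hve : inner ℝ e v = (0 : ℝ) := by rw [real_inner_comm]; exact hev
  have hh : 0 < ‖v‖ := norm_pos_iff.2 hv
  set S := convexHull ℝ ({C + (v + b • e), C + a • e, C} : Set Plane) with hS
  have hSc : IsCompact S := by
    apply Set.Finite.isCompact_convexHull
    exact Set.toFinite _
  obtain ⟨k, hk, hcv⟩ := change_vars he0 hv hev C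
  -- the displacement from the minimizer, in coordinates
  have hdisp : ∀ p : ℝ × ℝ, C + (p.1 • v + p.2 • e) - (C + (s₀ • v + x₀ • e)) =
      (p.1 - s₀) • v + (p.2 - x₀) • e := fun p => by module
  have hnorm : ∀ s x : ℝ, ‖s • v + x • e‖ = √(x ^ 2 + (‖v‖ * s) ^ 2) := fun s x => by
    rw [← Real.sqrt_sq (norm_nonneg (s • v + x • e)), norm_add_sq_real]
    simp only [norm_smul, inner_smul_left, inner_smul_right, hev, he, mul_pow, Real.norm_eq_abs,
      sq_abs]
    congr 1
    simp; ring
  have hfo : ∀ w : Plane, ∫ p in flatTri a b,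
      inner ℝ ((p.1 - s₀) • v + (p.2 - x₀) • e) w
        / √((p.2 - x₀) ^ 2 + (‖v‖ * (p.1 - s₀)) ^ 2) = 0 := fun w => by
    have h1 := first_order hSc hmin w
    rw [← integral_indicator hSc.isClosed.measurableSet, hcv] at h1
    have h2 := (mul_eq_zero.1 h1).resolve_left hk
    rw [← integral_indicator (isClosed_flatTri a b).measurableSet, ← h2]
    congr 1
    funext p
    by_cases hp : p ∈ flatTri a b
    · rw [Set.indicator_of_mem hp, Set.indicator_of_mem ((mem_hull_iff ha he hv hev C p).2 hp),
        hdisp, hnorm]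
    · rw [Set.indicator_of_notMem hp,
        Set.indicator_of_notMem (fun h => hp ((mem_hull_iff ha he hv hev C p).1 h))]
  -- the slice `s = s₀`, on which the distance is not smooth in `x`, is negligible
  have hae : ∀ᵐ s : ℝ, s ≠ s₀ := by rw [ae_iff]; simp
  constructor
  · have h1 := hfo e
    simp only [inner_add_left, inner_smul_left, hev, real_inner_self_eq_norm_sq, he] at h1
    simp only [conj_trivial, mul_zero, one_pow, mul_one, zero_add] at h1
    rw [integral_flatTri ha hb hba.le (M := 1) (by fun_prop)] at h1
    · rw [Eq1]
      refine Eq.trans ?_ h1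
      refine intervalIntegral.integral_congr_ae ?_
      filter_upwards [hae] with s hs _
      rw [integral_fst (mul_ne_zero hh.ne' (sub_ne_zero.2 hs))]
    · intro p
      rw [abs_div, abs_of_nonneg (Real.sqrt_nonneg _)]
      refine div_le_one_of_le₀ (Real.abs_le_sqrt ?_) (Real.sqrt_nonneg _)
      nlinarith [sq_nonneg (‖v‖ * (p.1 - s₀))]
  · have hc : ∀ t : ℝ, (‖v‖ ^ 2)⁻¹ * (t * ‖v‖ ^ 2) = t := fun t => by field_simp
    -- the factor `(‖v‖ ^ 2)⁻¹` makes the inner product exactly `s - s₀`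
    have h1 := hfo ((‖v‖ ^ 2)⁻¹ • v)
    simp only [inner_add_left, inner_smul_left, inner_smul_right, hve,
      real_inner_self_eq_norm_sq] at h1
    simp only [conj_trivial, mul_zero, add_zero, hc] at h1
    rw [integral_flatTri ha hb hba.le (M := 1 / ‖v‖) (by fun_prop)] at h1
    · rw [Eq2]
      refine Eq.trans ?_ h1
      refine intervalIntegral.integral_congr_ae ?_
      filter_upwards [hae] with s hs _
      rw [integral_snd hh (sub_ne_zero.2 hs)]
    · intro p
      rw [abs_div, abs_of_nonneg (Real.sqrt_nonneg _)]
      refine div_le_of_le_mul₀ (Real.sqrt_nonneg _) (by positivity) ?_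
      rw [div_mul_eq_mul_div, one_mul, le_div_iff₀ hh]
      refine Real.le_sqrt_of_sq_le ?_
      rw [mul_pow, sq_abs]
      nlinarith [sq_nonneg (p.2 - x₀)]

/-! ### Bounds for the solutions -/

lemma eq1_bounds {a b h x₀ s₀ : ℝ} (hb : 0 < b) (hba : b < a) (hE : Eq1 a b h x₀ s₀) :
    x₀ ∈ Set.Icc 0 a := by
  have hcont : Continuous fun s : ℝ => √((a - (a - b) * s - x₀) ^ 2 + (h * (s - s₀)) ^ 2)
    - √((b * s - x₀) ^ 2 + (h * (s - s₀)) ^ 2) := by fun_prop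
  rw [Eq1] at hE
  constructor
  · by_contra! hx
    refine (intervalIntegral.intervalIntegral_pos_of_pos_on (hcont.intervalIntegrable 0 1)
      (fun s hs => ?_) zero_lt_one).ne' hE
    obtain ⟨hs0, hs1⟩ := hs
    refine sub_pos.2 (Real.sqrt_lt_sqrt (by positivity) ?_)
    have h1 : 0 < b * s - x₀ := by nlinarith
    have h2 : b * s - x₀ < a - (a - b) * s - x₀ := by nlinarith
    nlinarith
  · by_contra! hx
    have hneg := intervalIntegral.intervalIntegral_pos_of_pos_on
      (hcont.neg.intervalIntegrable 0 1) (fun s hs => ?_) zero_lt_one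
    · simp only [Pi.neg_apply] at hneg
      rw [intervalIntegral.integral_neg, hE] at hneg
      simp at hneg
    · obtain ⟨hs0, hs1⟩ := hs
      refine neg_pos.2 (sub_neg.2 (Real.sqrt_lt_sqrt (by positivity) ?_))
      have h1 : a - (a - b) * s - x₀ < 0 := by nlinarith
      have h2 : b * s - x₀ < a - (a - b) * s - x₀ := by nlinarith
      nlinarith

lemma eq2_bounds {a b h x₀ s₀ : ℝ} (hb : 0 < b) (hba : b < a) (hh : 0 < h)
    (hE : Eq2 a b h x₀ s₀) : s₀ ∈ Set.Icc (0 : ℝ) 1 := by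
  rw [Eq2] at hE
  have hcont : s₀ ∉ Set.Icc (0 : ℝ) 1 → ContinuousOn (fun s : ℝ => (s - s₀) *
      (Real.arsinh ((a - (a - b) * s - x₀) / (h * |s - s₀|))
        - Real.arsinh ((b * s - x₀) / (h * |s - s₀|)))) (Set.uIcc 0 1) := by
    intro hs₀
    rw [Set.uIcc_of_le zero_le_one]
    have hne : ∀ s ∈ Set.Icc (0 : ℝ) 1, h * |s - s₀| ≠ 0 := fun s hs =>
      mul_ne_zero hh.ne' (abs_ne_zero.2 (sub_ne_zero.2 (fun h => hs₀ (h ▸ hs))))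
    refine ContinuousOn.mul (by fun_prop) (ContinuousOn.sub ?_ ?_)
    · exact (ContinuousOn.div (by fun_prop) (by fun_prop) hne).arsinh
    · exact (ContinuousOn.div (by fun_prop) (by fun_prop) hne).arsinh
  have hpos : ∀ s ∈ Set.Ioo (0 : ℝ) 1, s ≠ s₀ →
      0 < Real.arsinh ((a - (a - b) * s - x₀) / (h * |s - s₀|))
        - Real.arsinh ((b * s - x₀) / (h * |s - s₀|)) := by
    intro s hs hne
    have hq : 0 < h * |s - s₀| := mul_pos hh (abs_pos.2 (sub_ne_zero.2 hne))
    refine sub_pos.2 (Real.arsinh_lt_arsinh.2 ?_)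
    gcongr
    nlinarith [hs.1, hs.2]
  by_contra hs₀
  rcases lt_or_ge s₀ 0 with h0 | h0
  · refine (intervalIntegral.intervalIntegral_pos_of_pos_on (hcont hs₀).intervalIntegrable
      (fun s hs => ?_) zero_lt_one).ne' hE
    exact mul_pos (by linarith [hs.1]) (hpos s hs (by linarith [hs.1]))
  · have h1 : 1 < s₀ := by
      by_contra! h1
      exact hs₀ ⟨h0, h1⟩
    have hneg := intervalIntegral.intervalIntegral_pos_of_pos_on
      (hcont hs₀).neg.intervalIntegrable (fun s hs => ?_) zero_lt_one
    · have h2 := intervalIntegral.integral_neg (μ := volume) (a := 0) (b := 1)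
        (f := fun s : ℝ => (s - s₀) *
          (Real.arsinh ((a - (a - b) * s - x₀) / (h * |s - s₀|))
            - Real.arsinh ((b * s - x₀) / (h * |s - s₀|))))
      rw [hE, neg_zero] at h2
      exact hneg.ne' h2
    · have := hpos s hs (by linarith [hs.2])
      have h3 : s - s₀ < 0 := by linarith [hs.2]
      exact neg_pos.2 (mul_neg_of_neg_of_pos h3 this)

/-! ### The limit of the first equation -/

lemma integral_abs_linear {c : ℝ} (hc : 0 < c) (y : ℝ) :
    ∫ s in (0 : ℝ)..1, |c * s - y| = ((c - y) * |c - y| + y * |y|) / (2 * c) := by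
  rw [integral_eq_of_hasDerivAt_off_countable (fun s => (c * s - y) * |c * s - y| / (2 * c)) _
    (Set.countable_singleton (y / c))]
  · simp only [mul_one, mul_zero, zero_sub, abs_neg]; ring
  · fun_prop
  · rintro s ⟨-, hs⟩
    have hne : c * s - y ≠ 0 := by
      intro h
      apply hs
      rw [Set.mem_singleton_iff, eq_div_iff hc.ne']
      linarith
    have h1 : HasDerivAt (fun s : ℝ => c * s - y) c s := by
      simpa using ((hasDerivAt_id s).const_mul c).sub_const y
    have h2 := (h1.mul ((hasDerivAt_abs hne).comp s h1)).div_const (2 * c)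
    refine HasDerivAt.congr_deriv h2 ?_
    rcases lt_or_gt_of_ne hne with hlt | hgt
    · simp [abs_of_neg hlt, sign_neg hlt]; field_simp; ring
    · simp [abs_of_pos hgt, sign_pos hgt]; field_simp; ring
  · apply Continuous.intervalIntegrable
    fun_prop

/-- The median condition for the mass of the triangle projected to the long side has at most the
solution `√(a * b / 2)`. -/
lemma median_line {a b x : ℝ} (hb : 0 < b) (hba : b < a) (hab : a ≤ 2 * b)
    (hx : x ∈ Set.Icc 0 a)
    (hE : ∫ s in (0 : ℝ)..1, (|a - (a - b) * s - x| - |b * s - x|) = 0) :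
    x = √(a * b / 2) := by
  have hc : 0 < a - b := by linarith
  have h1 : ∀ s : ℝ, |a - (a - b) * s - x| = |(a - b) * s - (a - x)| := fun s => by
    rw [abs_sub_comm ((a - b) * s)]; congr 1; ring
  simp only [h1] at hE
  rw [intervalIntegral.integral_sub (Continuous.intervalIntegrable (by fun_prop) _ _)
    (Continuous.intervalIntegrable (by fun_prop) _ _), integral_abs_linear hc,
    integral_abs_linear hb, abs_of_nonneg (sub_nonneg.2 hx.2), abs_of_nonneg hx.1] at hE
  have h2 : a - b - (a - x) = x - b := by ring
  rw [h2] at hE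
  symm
  rcases le_or_gt x b with hxb | hxb
  · rw [abs_of_nonpos (by linarith : x - b ≤ 0), abs_of_nonneg (by linarith : 0 ≤ b - x)] at hE
    have h3 : 2 * x ^ 2 = a * b := by
      field_simp at hE
      have : (a - b) * (2 * x ^ 2 - a * b) = 0 := by linear_combination -hE
      have := (mul_eq_zero.1 this).resolve_left hc.ne'
      linarith
    rw [← h3, mul_div_cancel_left₀ _ two_ne_zero, Real.sqrt_sq hx.1]
  · exfalso
    rw [abs_of_pos (by linarith : 0 < x - b), abs_of_neg (by linarith : b - x < 0)] at hE
    field_simp at hE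
    have h4 : b * (2 * (x - b) * ((x - b) - 2 * (a - b)) + (a - b) * (a - 2 * b)) = 0 := by
      linear_combination hE
    have h5 := (mul_eq_zero.1 h4).resolve_left hb.ne'
    have h6 : 0 < (x - b) * (2 * (a - b) - (x - b)) :=
      mul_pos (by linarith) (by linarith [hx.2])
    nlinarith

/-- The integral in `Eq1` is continuous in all parameters, including at `h = 0`. -/
lemma eq1_limit {α : Type*} {l : Filter α} [l.NeBot] {a b x s : ℝ} {a' b' h' x' s' : α → ℝ}
    (ha : Tendsto a' l (𝓝 a)) (hb : Tendsto b' l (𝓝 b)) (hh : Tendsto h' l (𝓝 0))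
    (hx : Tendsto x' l (𝓝 x)) (hs : Tendsto s' l (𝓝 s))
    (hE : ∀ᶠ n in l, Eq1 (a' n) (b' n) (h' n) (x' n) (s' n)) :
    ∫ t in (0 : ℝ)..1, (|a - (a - b) * t - x| - |b * t - x|) = 0 := by
  have hcont : Continuous fun q : ℝ × ℝ × ℝ × ℝ × ℝ => ∫ t in (0 : ℝ)..1,
      (√((q.1 - (q.1 - q.2.1) * t - q.2.2.2.1) ^ 2 + (q.2.2.1 * (t - q.2.2.2.2)) ^ 2)
        - √((q.2.1 * t - q.2.2.2.1) ^ 2 + (q.2.2.1 * (t - q.2.2.2.2)) ^ 2)) := by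
    apply intervalIntegral.continuous_parametric_intervalIntegral_of_continuous'
    unfold Function.uncurry
    fun_prop
  have hlim := (hcont.tendsto (a, b, 0, x, s)).comp
    (ha.prodMk_nhds (hb.prodMk_nhds (hh.prodMk_nhds (hx.prodMk_nhds hs))))
  have h0 := tendsto_nhds_unique_of_eventuallyEq hlim (tendsto_const_nhds (x := (0 : ℝ)))
    (hE.mono fun n hn => hn)
  simpa [Real.sqrt_sq_eq_abs] using h0

/-! ### The limit of the second equation -/

/-- Logarithmic growth of `arsinh`, in a form that is uniform in `σ`. -/
lemma arsinh_bound {h σ y M : ℝ} (hh : 0 < h) (hΛ : 1 ≤ -Real.log h) (hy : |y| ≤ M) :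
    |σ * Real.arsinh (y / (h * |σ|))| ≤ -Real.log h * (|σ| + 2 * M) := by
  have hM : 0 ≤ M := (abs_nonneg y).trans hy
  rcases eq_or_ne σ 0 with rfl | hσ
  · simp only [zero_mul, abs_zero, zero_add]
    positivity
  have hσ' : 0 < |σ| := abs_pos.2 hσ
  have hh1 : h ≤ 1 := by
    by_contra! h1
    linarith [Real.log_pos h1]
  have habs : ∀ z : ℝ, |Real.arsinh z| = Real.arsinh |z| := fun z => by
    rcases le_total 0 z with hz | hz
    · rw [abs_of_nonneg hz, abs_of_nonneg (Real.arsinh_nonneg_iff.2 hz)]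
    · rw [abs_of_nonpos hz, abs_of_nonpos (Real.arsinh_nonpos_iff.2 hz), Real.arsinh_neg]
  set w := M / |σ|
  have hw : 0 ≤ w := by positivity
  have h1 : |y / (h * |σ|)| ≤ w / h := by
    rw [abs_div, abs_of_pos (mul_pos hh hσ'), div_div, mul_comm |σ| h]
    gcongr
  have h2 : Real.arsinh (w / h) ≤ -Real.log h + 2 * w := by
    have hz : 0 ≤ w / h := by positivity
    have h3 : √(1 + (w / h) ^ 2) ≤ 1 + w / h := by
      rw [Real.sqrt_le_left (by positivity)]; nlinarith
    have h5 : Real.exp (Real.arsinh (w / h)) ≤ Real.exp (-Real.log h + 2 * w) := by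
      rw [Real.exp_arsinh, Real.exp_add, Real.exp_neg, Real.exp_log hh]
      calc w / h + √(1 + (w / h) ^ 2) ≤ h⁻¹ * (h + 2 * w) := by
            rw [mul_add, inv_mul_cancel₀ hh.ne']
            have : h⁻¹ * (2 * w) = w / h + w / h := by field_simp; ring
            linarith
        _ ≤ h⁻¹ * Real.exp (2 * w) := by
            gcongr
            linarith [Real.add_one_le_exp (2 * w)]
    exact Real.exp_le_exp.1 h5
  rw [abs_mul, habs]
  calc |σ| * Real.arsinh |y / (h * |σ|)| ≤ |σ| * (-Real.log h + 2 * w) := by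
        gcongr
        exact (Real.arsinh_le_arsinh.2 h1).trans h2
    _ = -Real.log h * |σ| + 2 * M := by
        simp only [w]; field_simp
    _ ≤ -Real.log h * (|σ| + 2 * M) := by nlinarith

/-- With `w = y / |σ|`, this follows from
`arsinh (w / h) = log (1 / h) + log (w + √(h ^ 2 + w ^ 2))`, whose last term stays bounded. -/
lemma arsinh_limit_pos {α : Type*} {l : Filter α} {y σ : ℝ} {h' y' σ' : α → ℝ}
    (hh : Tendsto h' l (𝓝 0)) (hpos : ∀ᶠ n in l, 0 < h' n)
    (hy : Tendsto y' l (𝓝 y)) (hσ : Tendsto σ' l (𝓝 σ)) (hy0 : 0 < y) (hσ0 : σ ≠ 0) :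
    Tendsto (fun n => Real.arsinh (y' n / (h' n * |σ' n|)) / -Real.log (h' n)) l (𝓝 1) := by
  have hσ' : 0 < |σ| := abs_pos.2 hσ0
  have hΛ : Tendsto (fun n => -Real.log (h' n)) l atTop :=
    tendsto_neg_atBot_atTop.comp (Real.tendsto_log_nhdsGT_zero.comp
      (tendsto_nhdsWithin_iff.2 ⟨hh, hpos⟩))
  have hw : Tendsto (fun n => y' n / |σ' n|) l (𝓝 (y / |σ|)) := hy.div hσ.abs hσ'.ne'
  have hw0 : 0 < y / |σ| := by positivity
  have hlog : Tendsto (fun n => Real.log (y' n / |σ' n| + √(h' n ^ 2 + (y' n / |σ' n|) ^ 2))) l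
      (𝓝 (Real.log (y / |σ| + √(0 ^ 2 + (y / |σ|) ^ 2)))) := by
    refine Tendsto.log (hw.add (((hh.pow 2).add (hw.pow 2)).sqrt)) ?_
    positivity
  have hquot := (hlog.div_atTop hΛ).const_add 1
  rw [add_zero] at hquot
  refine hquot.congr' ?_
  filter_upwards [hpos, hw.eventually (lt_mem_nhds hw0), hΛ.eventually_gt_atTop 0]
    with n hn hwn hΛn
  set w := y' n / |σ' n|
  have h1 : y' n / (h' n * |σ' n|) = w / h' n := by
    simp only [w]; rw [div_div, mul_comm]
  have h2 : Real.arsinh (w / h' n) = -Real.log (h' n) + Real.log (w + √(h' n ^ 2 + w ^ 2)) := by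
    have h3 : √(1 + (w / h' n) ^ 2) = √(h' n ^ 2 + w ^ 2) / h' n := by
      rw [← Real.sqrt_sq hn.le, ← Real.sqrt_div' _ (by positivity), Real.sqrt_sq hn.le]
      congr 1
      field_simp
    rw [Real.arsinh, h3, ← add_div, Real.log_div (by positivity) hn.ne']
    ring
  rw [h1, h2, add_div, div_self hΛn.ne']

lemma arsinh_limit_neg {α : Type*} {l : Filter α} {y σ : ℝ} {h' y' σ' : α → ℝ}
    (hh : Tendsto h' l (𝓝 0)) (hpos : ∀ᶠ n in l, 0 < h' n)
    (hy : Tendsto y' l (𝓝 y)) (hσ : Tendsto σ' l (𝓝 σ)) (hy0 : y < 0) (hσ0 : σ ≠ 0) :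
    Tendsto (fun n => Real.arsinh (y' n / (h' n * |σ' n|)) / -Real.log (h' n)) l (𝓝 (-1)) := by
  have := (arsinh_limit_pos hh hpos hy.neg hσ (neg_pos.2 hy0) hσ0).neg
  refine this.congr fun n => ?_
  rw [neg_div, Real.arsinh_neg, neg_div, neg_neg]

/-- Dividing the second equation by `log (1 / h)`, the kernel `arsinh (y / (h * |σ|))` becomes
`sign y`, so the limit only sees the slice of the triangle through the minimizer. With
`d = √(a * b / 2) ≤ b`, that slice is `0 ≤ t ≤ d / b`, and `s` is its midpoint. -/
lemma eq2_limit {α : Type*} {l : Filter α} [l.NeBot] [l.IsCountablyGenerated]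
    {a b s d : ℝ} {a' b' h' x' s' : α → ℝ}
    (hd0 : 0 < d) (hdb : d ≤ b) (hba : b < a)
    (ha : Tendsto a' l (𝓝 a)) (hb : Tendsto b' l (𝓝 b)) (hh : Tendsto h' l (𝓝 0))
    (hpos : ∀ᶠ n in l, 0 < h' n)
    (hx : Tendsto x' l (𝓝 d)) (hs : Tendsto s' l (𝓝 s))
    (hE : ∀ᶠ n in l, Eq2 (a' n) (b' n) (h' n) (x' n) (s' n)) : s = d / (2 * b) := by
  have hb0 : 0 < b := hd0.trans_le hdb
  have hΛ : Tendsto (fun n => -Real.log (h' n)) l atTop :=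
    tendsto_neg_atBot_atTop.comp (Real.tendsto_log_nhdsGT_zero.comp
      (tendsto_nhdsWithin_iff.2 ⟨hh, hpos⟩))
  have hκ : d / b ∈ Set.Icc (0 : ℝ) 1 := ⟨by positivity, by rwa [div_le_one hb0]⟩
  -- a common bound for the numerators `y` and for `|t - s' n|` on `[0, 1]`
  set M := |a| + |b| + |d| + |s| + 4 with hM
  let G : α → ℝ → ℝ := fun n t => (t - s' n) *
    (Real.arsinh ((a' n - (a' n - b' n) * t - x' n) / (h' n * |t - s' n|))
      - Real.arsinh ((b' n * t - x' n) / (h' n * |t - s' n|)))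
  have hlim : Tendsto (fun n => ∫ t in (0 : ℝ)..1, G n t / -Real.log (h' n)) l
      (𝓝 (∫ t in (0 : ℝ)..1, Set.indicator {t | t ≤ d / b} (fun t => 2 * (t - s)) t)) := by
    refine intervalIntegral.tendsto_integral_filter_of_dominated_convergence
      (fun _ => 2 * (M + 2 * M)) ?_ ?_ intervalIntegrable_const ?_
    · refine Eventually.of_forall fun n => Measurable.aestronglyMeasurable ?_
      have h1 := Real.continuous_arsinh.measurable
      refine Measurable.div_const (Measurable.mul (by fun_prop) (Measurable.sub ?_ ?_)) _
      · exact h1.comp (by fun_prop)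
      · exact h1.comp (by fun_prop)
    · filter_upwards [hpos, hΛ.eventually_ge_atTop 1,
        ha.abs.eventually (gt_mem_nhds (lt_add_one |a|)),
        hb.abs.eventually (gt_mem_nhds (lt_add_one |b|)),
        hx.abs.eventually (gt_mem_nhds (lt_add_one |d|)),
        hs.abs.eventually (gt_mem_nhds (lt_add_one |s|))] with n hn hΛn han hbn hxn hsn
      refine Eventually.of_forall fun t ht => ?_
      rw [Set.uIoc_of_le zero_le_one] at ht
      obtain ⟨ht0, ht1⟩ := ht
      rw [abs_lt] at han hbn hxn hsn
      have nn := abs_nonneg a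
      have nb := abs_nonneg b
      have nd := abs_nonneg d
      have ns := abs_nonneg s
      have hσ : |t - s' n| ≤ M := by rw [abs_le]; constructor <;> linarith
      have hy1 : |a' n - (a' n - b' n) * t - x' n| ≤ M := by
        have e1 : a' n - (a' n - b' n) * t - x' n = a' n * (1 - t) + b' n * t - x' n := by ring
        rw [e1, abs_le]; constructor <;> nlinarith
      have hy2 : |b' n * t - x' n| ≤ M := by
        rw [abs_le]; constructor <;> nlinarith
      have b1 := arsinh_bound (σ := t - s' n) hn hΛn hy1
      have b2 := arsinh_bound (σ := t - s' n) hn hΛn hy2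
      rw [Real.norm_eq_abs, abs_div, abs_of_pos (by linarith : 0 < -Real.log (h' n)),
        div_le_iff₀ (by linarith)]
      simp only [G]
      rw [mul_sub]
      refine (abs_sub _ _).trans ?_
      nlinarith
    · have hne : ∀ c : ℝ, ∀ᵐ t : ℝ, t ≠ c := fun c => by rw [ae_iff]; simp
      filter_upwards [hne s, hne (d / b), hne 1] with t hts htd ht1 ht
      rw [Set.uIoc_of_le zero_le_one] at ht
      have ht1 : t < 1 := lt_of_le_of_ne ht.2 ht1
      have hσ : Tendsto (fun n => t - s' n) l (𝓝 (t - s)) := hs.const_sub t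
      have hσ0 : t - s ≠ 0 := sub_ne_zero.2 hts
      have hr := arsinh_limit_pos hh hpos
        (((ha.sub ((ha.sub hb).mul_const t)).sub hx)) hσ (by nlinarith) hσ0
      have hl := (hb.mul_const t).sub hx
      rcases lt_or_gt_of_ne htd with htd | htd
      · rw [Set.indicator_of_mem (show t ∈ {t | t ≤ d / b} from htd.le)]
        rw [lt_div_iff₀ hb0] at htd
        have hl' := arsinh_limit_neg hh hpos hl hσ (by linarith) hσ0
        have := hσ.mul (hr.sub hl')
        rw [show (t - s) * (1 - -1) = 2 * (t - s) by ring] at this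
        refine this.congr fun n => ?_
        simp only [G]; ring
      · rw [Set.indicator_of_notMem (show t ∉ {t | t ≤ d / b} from not_le.2 htd)]
        have htd : d < b * t := by rwa [div_lt_iff₀' hb0] at htd
        have hl' := arsinh_limit_pos hh hpos hl hσ (by linarith) hσ0
        have := hσ.mul (hr.sub hl')
        rw [sub_self, mul_zero] at this
        refine this.congr fun n => ?_
        simp only [G]; ring
  have h0 := tendsto_nhds_unique_of_eventuallyEq hlim (tendsto_const_nhds (x := (0 : ℝ)))
    (hE.mono fun n hn => by
      beta_reduce
      rw [intervalIntegral.integral_div]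
      have : ∫ t in (0 : ℝ)..1, G n t = 0 := hn
      rw [this, zero_div])
  rw [intervalIntegral.integral_indicator hκ, intervalIntegral.integral_const_mul,
    intervalIntegral.integral_sub (by simp) (by simp), integral_id,
    intervalIntegral.integral_const] at h0
  simp only [sub_zero, smul_eq_mul] at h0
  have hκ0 : d / b ≠ 0 := by positivity
  have h1 : (d / b) * (d / b - 2 * s) = 0 := by linear_combination h0
  have h2 := (mul_eq_zero.1 h1).resolve_left hκ0
  have h3 : s = (d / b) / 2 := by linarith
  rw [h3, div_div, mul_comm b]

/-- Solutions of the two scalar equations converge as the height `h` tends to `0`. -/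
lemma solutions_tendsto {a b : ℝ} {a' b' h' x' s' : ℕ → ℝ}
    (hb0 : 0 < b) (hba : b < a) (hab : a ≤ 2 * b)
    (ha : Tendsto a' atTop (𝓝 a)) (hb : Tendsto b' atTop (𝓝 b)) (hh : Tendsto h' atTop (𝓝 0))
    (hpos : ∀ᶠ n in atTop, 0 < h' n)
    (hE1 : ∀ᶠ n in atTop, Eq1 (a' n) (b' n) (h' n) (x' n) (s' n))
    (hE2 : ∀ᶠ n in atTop, Eq2 (a' n) (b' n) (h' n) (x' n) (s' n)) :
    Tendsto (fun n => (x' n, s' n)) atTop (𝓝 (√(a * b / 2), √(a * b / 2) / (2 * b))) := by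
  have hbd : ∀ᶠ n in atTop, (x' n, s' n) ∈ Set.Icc (0 : ℝ) (a + 1) ×ˢ Set.Icc (0 : ℝ) 1 := by
    filter_upwards [hE1, hE2, hpos, hb.eventually (lt_mem_nhds hb0), (hb.eventually_lt ha hba),
      ha.eventually (gt_mem_nhds (lt_add_one a))] with n h1 h2 h3 h4 h5 h6
    have h7 := eq1_bounds h4 h5 h1
    exact ⟨⟨h7.1, h7.2.trans h6.le⟩, eq2_bounds h4 h5 h3 h2⟩
  refine tendsto_of_subseq_tendsto fun ns hns => ?_
  obtain ⟨⟨x, s⟩, -, φ, hφ, hlim⟩ := (isCompact_Icc.prod isCompact_Icc).tendsto_subseq'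
    (hns.eventually hbd).frequently
  refine ⟨φ, ?_⟩
  have hm : Tendsto (fun k => ns (φ k)) atTop atTop := hns.comp hφ.tendsto_atTop
  have hx : Tendsto (fun k => x' (ns (φ k))) atTop (𝓝 x) :=
    (continuous_fst.tendsto _).comp hlim
  have hs : Tendsto (fun k => s' (ns (φ k))) atTop (𝓝 s) :=
    (continuous_snd.tendsto _).comp hlim
  have hxmem : x ∈ Set.Icc 0 a := by
    have hev : ∀ᶠ k in atTop, 0 ≤ x' (ns (φ k)) ∧ x' (ns (φ k)) ≤ a' (ns (φ k)) := by
      refine hm.eventually (p := fun n => 0 ≤ x' n ∧ x' n ≤ a' n) ?_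
      filter_upwards [hE1, hb.eventually (lt_mem_nhds hb0), (hb.eventually_lt ha hba)]
        with n h1 h4 h5
      exact eq1_bounds h4 h5 h1
    exact ⟨ge_of_tendsto hx (hev.mono fun k hk => hk.1),
      le_of_tendsto_of_tendsto hx (ha.comp hm) (hev.mono fun k hk => hk.2)⟩
  have hx_eq : x = √(a * b / 2) := median_line hb0 hba hab hxmem
    (eq1_limit (ha.comp hm) (hb.comp hm) (hh.comp hm) hx hs (hm.eventually hE1))
  have hd0 : 0 < √(a * b / 2) := Real.sqrt_pos.2 (by nlinarith)
  have hdb : √(a * b / 2) ≤ b := by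
    rw [Real.sqrt_le_left hb0.le]; nlinarith
  have hs_eq : s = √(a * b / 2) / (2 * b) :=
    eq2_limit hd0 hdb hba (ha.comp hm) (hb.comp hm) (hh.comp hm) (hm.eventually hpos)
      (hx_eq ▸ hx) hs (hm.eventually hE2)
  rw [← hx_eq, ← (hx_eq ▸ hs_eq : s = x / (2 * b))]
  exact hlim

/-! ### Limits of the barycentric coordinates -/

/-- The barycentric coordinates of the geometric medians of the triangular regions of
triangles approximating a degenerate triangle converge to
`((1/(2√2))√(a/b), (1/(2√2))√(b/a), 1 − (1/(2√2))(√(a/b) + √(b/a)))`. -/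
theorem median_area_degenerate_barycentric
    (a b c : ℝ) (hba : b ≤ a) (hcb : c ≤ b) (hc : 0 < c) (habc : a = b + c)
    (A B C : Plane) (hcfg : DegenConfig a b c A B C)
    (An Bn Cn : ℕ → Plane)
    (hAI : ∀ n, AffineIndependent ℝ ![An n, Bn n, Cn n])
    (hA : Tendsto An atTop (nhds A)) (hB : Tendsto Bn atTop (nhds B))
    (hC : Tendsto Cn atTop (nhds C))
    (mn : ℕ → Plane)
    (hmin : ∀ n, ∀ X : Plane,
      areaDist (An n) (Bn n) (Cn n) (mn n) ≤ areaDist (An n) (Bn n) (Cn n) X)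
    (μ1 μ2 μ3 : ℕ → ℝ)
    (hsum : ∀ n, μ1 n + μ2 n + μ3 n = 1)
    (hbar : ∀ n, mn n = μ1 n • An n + μ2 n • Bn n + μ3 n • Cn n) :
    Tendsto μ1 atTop (nhds (1 / (2 * Real.sqrt 2) * Real.sqrt (a / b))) ∧
    Tendsto μ2 atTop (nhds (1 / (2 * Real.sqrt 2) * Real.sqrt (b / a))) ∧
    Tendsto μ3 atTop
      (nhds (1 - 1 / (2 * Real.sqrt 2) * (Real.sqrt (a / b) + Real.sqrt (b / a)))) := by
  obtain ⟨-, hBC, hCA, hAB⟩ := hcfg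
  have hb0 : 0 < b := by linarith
  have ha0 : 0 < a := by linarith
  have hba' : b < a := by linarith
  -- coordinates adapted to the side `CₙBₙ`: `e n` is its direction, `v n` the altitude at `Aₙ`
  set u : ℕ → Plane := fun n => An n - Cn n with hu
  set w : ℕ → Plane := fun n => Bn n - Cn n with hw
  set a' : ℕ → ℝ := fun n => ‖w n‖ with ha'
  set b' : ℕ → ℝ := fun n => inner ℝ (u n) (w n) / ‖w n‖ with hb'
  set e : ℕ → Plane := fun n => (a' n)⁻¹ • w n with he
  set v : ℕ → Plane := fun n => u n - b' n • e n with hv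
  have hw0 : ∀ n, w n ≠ 0 := fun n h => by
    have h1 : Bn n = Cn n := sub_eq_zero.1 h
    have := (hAI n).injective.ne (show (1 : Fin 3) ≠ 2 by decide)
    exact this (by simpa using h1)
  have ha'0 : ∀ n, 0 < a' n := fun n => norm_pos_iff.2 (hw0 n)
  have hwe : ∀ n, w n = a' n • e n := fun n => by
    simp only [he]; rw [smul_smul, mul_inv_cancel₀ (ha'0 n).ne', one_smul]
  have henorm : ∀ n, ‖e n‖ = 1 := fun n => by
    simp only [he]
    rw [norm_smul, norm_inv, Real.norm_eq_abs, abs_of_pos (ha'0 n)]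
    exact inv_mul_cancel₀ (ha'0 n).ne'
  have hb'e : ∀ n, inner ℝ (u n) (e n) = b' n := fun n => by
    simp only [he, hb', inner_smul_right]
    rw [div_eq_inv_mul]
  have hve : ∀ n, inner ℝ (v n) (e n) = (0 : ℝ) := fun n => by
    simp only [hv]
    rw [inner_sub_left, inner_smul_left, hb'e, real_inner_self_eq_norm_sq, henorm]
    simp
  have hv0 : ∀ n, v n ≠ 0 := fun n h => by
    have h1 : u n = (b' n * (a' n)⁻¹) • w n := by
      have := sub_eq_zero.1 h
      rw [this]; simp only [he]; rw [smul_smul]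
    refine affineIndependent_iff_not_collinear_set.1 (hAI n) ?_
    rw [collinear_iff_of_mem (p₀ := Cn n) (by simp)]
    refine ⟨w n, ?_⟩
    rintro P (rfl | rfl | rfl)
    · exact ⟨b' n * (a' n)⁻¹, by rw [← h1]; simp [hu]⟩
    · exact ⟨1, by simp [hw]⟩
    · exact ⟨0, by simp⟩
  have hAn : ∀ n, An n = Cn n + (v n + b' n • e n) := fun n => by simp [hv, hu]
  have hBn : ∀ n, Bn n = Cn n + a' n • e n := fun n => by rw [← hwe]; simp [hw]
  have hmn : ∀ n, mn n = Cn n + (μ1 n • v n + (b' n * μ1 n + a' n * μ2 n) • e n) := fun n => by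
    rw [hbar, hAn, hBn, show μ3 n = 1 - μ1 n - μ2 n by linarith [hsum n]]
    module
  -- limits of the parameters
  have hut : Tendsto u atTop (𝓝 (A - C)) := hA.sub hC
  have hwt : Tendsto w atTop (𝓝 (B - C)) := hB.sub hC
  have ha't : Tendsto a' atTop (𝓝 a) := hBC ▸ hwt.norm
  have hCA' : ‖A - C‖ = b := by rw [norm_sub_rev]; exact hCA
  have hinner : inner ℝ (A - C) (B - C) = a * b := by
    have h1 := norm_sub_sq_real (A - C) (B - C)
    rw [sub_sub_sub_cancel_right, hAB, hBC, hCA'] at h1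
    have : c = a - b := by linarith
    rw [this] at h1
    linarith
  have hb't : Tendsto b' atTop (𝓝 b) := by
    have := (hut.inner (𝕜 := ℝ) hwt).div hwt.norm (by rw [hBC]; exact ha0.ne')
    rwa [hinner, hBC, mul_div_cancel_left₀ _ ha0.ne'] at this
  have hvsq : ∀ n, ‖v n‖ = √(‖u n‖ ^ 2 - b' n ^ 2) := fun n => by
    rw [← Real.sqrt_sq (norm_nonneg (v n))]
    congr 1
    simp only [hv]
    rw [norm_sub_sq_real, inner_smul_right, hb'e, norm_smul, henorm, Real.norm_eq_abs, mul_one,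
      sq_abs]
    ring
  have hvt : Tendsto (fun n => ‖v n‖) atTop (𝓝 0) := by
    simp only [hvsq]
    have := ((hut.norm.pow 2).sub (hb't.pow 2)).sqrt
    rwa [hCA', sub_self, Real.sqrt_zero] at this
  have hred : ∀ᶠ n in atTop, Eq1 (a' n) (b' n) ‖v n‖ (b' n * μ1 n + a' n * μ2 n) (μ1 n) ∧
      Eq2 (a' n) (b' n) ‖v n‖ (b' n * μ1 n + a' n * μ2 n) (μ1 n) := by
    filter_upwards [hb't.eventually (lt_mem_nhds hb0), hb't.eventually_lt ha't hba'] with n h1 h2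
    refine reduction h1.le h2 (henorm n) (hv0 n) (hve n) (C := Cn n) fun Y => ?_
    rw [← hmn, ← hAn, ← hBn]
    exact hmin n Y
  have hlim := solutions_tendsto hb0 hba' (by linarith) ha't hb't hvt
    (Eventually.of_forall fun n => norm_pos_iff.2 (hv0 n))
    (hred.mono fun n h => h.1) (hred.mono fun n h => h.2)
  have hx := (continuous_fst.tendsto _).comp hlim
  have hs := (continuous_snd.tendsto _).comp hlim
  simp only [Function.comp_def] at hx hs
  -- rewriting the limits
  have hsa : √a ^ 2 = a := Real.sq_sqrt ha0.le
  have hsb : √b ^ 2 = b := Real.sq_sqrt hb0.le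
  have hsa0 : √a ≠ 0 := (Real.sqrt_pos.2 ha0).ne'
  have hsb0 : √b ≠ 0 := (Real.sqrt_pos.2 hb0).ne'
  have hd : √(a * b / 2) = √a * √b / √2 := by
    rw [Real.sqrt_div (by positivity), Real.sqrt_mul ha0.le]
  have hL1 : √(a * b / 2) / (2 * b) = 1 / (2 * √2) * √(a / b) := by
    rw [hd, Real.sqrt_div ha0.le]
    nth_rewrite 2 [← hsb]
    field_simp
  have hL2 : √(a * b / 2) / (2 * a) = 1 / (2 * √2) * √(b / a) := by
    rw [hd, Real.sqrt_div hb0.le]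
    nth_rewrite 2 [← hsa]
    field_simp
  have h1 : Tendsto μ1 atTop (𝓝 (1 / (2 * √2) * √(a / b))) := hL1 ▸ hs
  have h2 : Tendsto μ2 atTop (𝓝 (1 / (2 * √2) * √(b / a))) := by
    have := (hx.sub (hb't.mul hs)).div ha't ha0.ne'
    rw [← hL2]
    have hval : (√(a * b / 2) - b * (√(a * b / 2) / (2 * b))) / a = √(a * b / 2) / (2 * a) := by
      field_simp; ring
    rw [hval] at this
    refine this.congr fun n => ?_
    have := (ha'0 n).ne'
    simp only [Pi.div_apply]
    rw [add_sub_cancel_left, mul_div_cancel_left₀ _ this]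
  refine ⟨h1, h2, ?_⟩
  have h3 := (h1.const_sub 1).sub h2
  rw [mul_add, ← sub_sub]
  refine h3.congr fun n => ?_
  linarith [hsum n]
end
end

section
/- Let A, B ∈ ℝ² with A ≠ B. Then the midpoint (A + B)/2 is the unique global minimizer of the function f(X) = ∫₀¹ ‖(1−t)·A + t·B − X‖ dt (the total distance from X to the segment AB): for every X ∈ ℝ² with X ≠ (A + B)/2 one has f((A + B)/2) < f(X). -/
/-!
The reflection `t ↦ 1 - t` preserves `∫₀¹` and exchanges the points `M ± s • (B - A)`, `s = t - 1/2`,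
where `M` is the midpoint. So the integral for `X` may be averaged with its reflection: pointwise,
`2 ‖P(t) - M‖ = ‖P(t) - P(1 - t)‖ ≤ ‖P(t) - X‖ + ‖P(1 - t) - X‖` by the triangle inequality, with
`P(t) = (1 - t) • A + t • B`. At `t = 1/2` the left side is `0` and the right side is `2 ‖M - X‖ > 0`,
and strictness at one point suffices because the integrands are continuous.
-/

open MeasureTheory Metric Filter

noncomputable section

/-- The midpoint `(A + B)/2` is the unique global minimizer of the total distance
`X ↦ ∫₀¹ ‖(1−t)A + tB − X‖ dt` to the segment `AB`. -/
theorem segment_distance_min_midpoint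
    (A B : Plane) (hAB : A ≠ B) (X : Plane) (hX : X ≠ (2⁻¹ : ℝ) • (A + B)) :
    (∫ t in (0:ℝ)..1, ‖(1 - t) • A + t • B - (2⁻¹ : ℝ) • (A + B)‖) <
      ∫ t in (0:ℝ)..1, ‖(1 - t) • A + t • B - X‖ := by
  set g : ℝ → ℝ := fun t => ‖(1 - t) • A + t • B - X‖ with hg
  have hgc : Continuous g := by fun_prop
  have hrc : Continuous fun t => g (1 - t) := by fun_prop
  have hsc : Continuous fun t => g t + g (1 - t) := hgc.add hrc
  have hmc : Continuous fun t : ℝ => 2 * ‖(1 - t) • A + t • B - (2⁻¹ : ℝ) • (A + B)‖ := by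
    fun_prop
  have hrefl : ∫ t in (0:ℝ)..1, g (1 - t) = ∫ t in (0:ℝ)..1, g t := by
    simp [intervalIntegral.integral_comp_sub_left]
  have hle : ∀ t : ℝ, 2 * ‖(1 - t) • A + t • B - (2⁻¹ : ℝ) • (A + B)‖ ≤ g t + g (1 - t) := by
    intro t
    have hdiff : (2 : ℝ) • ((1 - t) • A + t • B - (2⁻¹ : ℝ) • (A + B)) =
        ((1 - t) • A + t • B - X) - ((1 - (1 - t)) • A + (1 - t) • B - X) := by
      module
    calc 2 * ‖(1 - t) • A + t • B - (2⁻¹ : ℝ) • (A + B)‖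
        = ‖(2 : ℝ) • ((1 - t) • A + t • B - (2⁻¹ : ℝ) • (A + B))‖ := by
          rw [norm_smul]; norm_num
      _ ≤ g t + g (1 - t) := by
          rw [hdiff]; exact norm_sub_le _ _
  have hlt : 2 * ‖(1 - (2⁻¹ : ℝ)) • A + (2⁻¹ : ℝ) • B - (2⁻¹ : ℝ) • (A + B)‖ <
      g 2⁻¹ + g (1 - 2⁻¹) := by
    have hz : (1 - (2⁻¹ : ℝ)) • A + (2⁻¹ : ℝ) • B - (2⁻¹ : ℝ) • (A + B) = 0 := by module
    have hhalf : (1 - 2⁻¹ : ℝ) = 2⁻¹ := by norm_num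
    have hpos : 0 < g 2⁻¹ := by
      have hp : (1 - (2⁻¹ : ℝ)) • A + (2⁻¹ : ℝ) • B - X = (2⁻¹ : ℝ) • (A + B) - X := by module
      simp only [hg, hp]
      exact norm_pos_iff.2 (sub_ne_zero.2 hX.symm)
    rw [hz, hhalf, norm_zero]
    linarith
  have hint := intervalIntegral.integral_lt_integral_of_continuousOn_of_le_of_exists_lt
    (zero_lt_one' ℝ) hmc.continuousOn hsc.continuousOn (fun t _ => hle t)
    ⟨2⁻¹, by norm_num, hlt⟩
  rw [intervalIntegral.integral_const_mul, intervalIntegral.integral_add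
    (hgc.intervalIntegrable _ _) (hrc.intervalIntegrable _ _), hrefl] at hint
  linarith
end
end

section
/- Let A, B, C ∈ ℝ² be affinely independent and let m be a global minimizer of the area distance functional f₂ of the triangle ABC. Then the average distances from m to the three sides are equal: ∫₀¹ ‖(1−t)·B + t·C − m‖ dt = ∫₀¹ ‖(1−t)·C + t·A − m‖ dt = ∫₀¹ ‖(1−t)·A + t·B − m‖ dt. (Equivalently, (1/a)∫_{side a} ‖P − m‖ dP = (1/b)∫_{side b} ‖P − m‖ dP = (1/c)∫_{side c} ‖P − m‖ dP, where a, b, c are the side lengths.) -/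
/-!
In affine coordinates `P = A + v (C - A) + u (B - A)` the area distance functional is, up to a
positive constant, the integral of `‖P - X‖` over the unit right triangle
(`exists_areaDist_eq`). Moving `X` from `m` to `m + s (B - A)` amounts to replacing `u` by `u - s`,
that is, to sliding the domain of the inner integral. The fundamental theorem of calculus, applied
under the outer integral, gives the derivative at `s = 0` as the integral of `‖P - m‖` over the side
`AC` (`u = 0`) minus that over the side `BC` (`u = 1 - v`), both parametrized by `v`
(`hasDerivAt_integral_shift`). No differentiability of the norm is needed. At a minimizer this
derivative vanishes, so the two averages agree (`average_eq`); permuting the vertices gives the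
remaining equality.
-/

open MeasureTheory Metric Filter

noncomputable section

/-- Differentiating the integral over the unit right triangle along a translation in the second
variable leaves the difference of the integrals over the two sides which that translation
crosses. -/
lemma hasDerivAt_integral_shift (g : ℝ → ℝ → ℝ) (hg : Continuous (Function.uncurry g)) :
    HasDerivAt (fun s : ℝ => ∫ v in (0:ℝ)..1, ∫ u in (0:ℝ)..(1 - v), g v (u - s))
      (∫ v in (0:ℝ)..1, (g v 0 - g v (1 - v))) 0 := by
  have hgv : ∀ v, Continuous (g v) := fun v => hg.comp (by fun_prop : Continuous fun u => (v, u))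
  obtain ⟨C, hC⟩ : ∃ C, ∀ p ∈ Set.Icc (-1:ℝ) 1 ×ˢ Set.Icc (0:ℝ) 1,
      ‖g p.2 (-p.1) - g p.2 (1 - p.2 - p.1)‖ ≤ C := by
    refine (isCompact_Icc.prod isCompact_Icc).exists_bound_of_continuousOn ?_
    refine Continuous.continuousOn (Continuous.sub ?_ ?_)
    · exact hg.comp (by fun_prop : Continuous fun p : ℝ × ℝ => (p.2, -p.1))
    · exact hg.comp (by fun_prop : Continuous fun p : ℝ × ℝ => (p.2, 1 - p.2 - p.1))
  have hFc : ∀ s : ℝ, Continuous fun v : ℝ => ∫ u in (0:ℝ)..(1 - v), g v (u - s) := by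
    intro s
    refine intervalIntegral.continuous_parametric_intervalIntegral_of_continuous
      (f := fun v u => g v (u - s)) ?_ (by fun_prop)
    exact hg.comp (by fun_prop : Continuous fun p : ℝ × ℝ => (p.1, p.2 - s))
  have hF'c : Continuous fun v : ℝ => g v (-0) - g v (1 - v - 0) :=
    (hg.comp (by fun_prop : Continuous fun v : ℝ => (v, -(0:ℝ)))).sub
      (hg.comp (by fun_prop : Continuous fun v : ℝ => (v, 1 - v - 0)))
  have key := (intervalIntegral.hasDerivAt_integral_of_dominated_loc_of_deriv_le
    (μ := volume) (a := 0) (b := 1) (x₀ := (0:ℝ)) (s := Metric.ball 0 1)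
    (F := fun s v => ∫ u in (0:ℝ)..(1 - v), g v (u - s))
    (F' := fun s v => g v (-s) - g v (1 - v - s)) (bound := fun _ => C)
    (Metric.ball_mem_nhds _ one_pos)
    (Eventually.of_forall fun s => (hFc s).aestronglyMeasurable)
    ((hFc 0).intervalIntegrable _ _) hF'c.aestronglyMeasurable ?_ (by simp) ?_).2
  · simpa using key
  · refine Eventually.of_forall fun v hv s hs => ?_
    rw [Set.uIoc_of_le zero_le_one] at hv
    rw [Metric.mem_ball, dist_zero_right, Real.norm_eq_abs, abs_lt] at hs
    exact hC (s, v) ⟨⟨hs.1.le, hs.2.le⟩, hv.1.le, hv.2⟩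
  · refine Eventually.of_forall fun v _ s _ => ?_
    -- after translating the variable only the endpoints depend on `s`
    have hEq : (fun s : ℝ => ∫ u in (0:ℝ)..(1 - v), g v (u - s)) =
        fun s => (∫ u in (0:ℝ)..(1 - v - s), g v u) - ∫ u in (0:ℝ)..(-s), g v u := by
      funext s
      rw [intervalIntegral.integral_comp_sub_right (fun u => g v u) s, zero_sub,
        intervalIntegral.integral_interval_sub_left ((hgv v).intervalIntegrable _ _)
          ((hgv v).intervalIntegrable _ _)]
    rw [hEq]
    have h1 : HasDerivAt (fun s : ℝ => ∫ u in (0:ℝ)..(1 - v - s), g v u)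
        (g v (1 - v - s) * (-1)) s :=
      HasDerivAt.comp s ((hgv v).integral_hasStrictDerivAt 0 (1 - v - s)).hasDerivAt
        ((hasDerivAt_id s).const_sub (1 - v))
    have h2 : HasDerivAt (fun s : ℝ => ∫ u in (0:ℝ)..(-s), g v u) (g v (-s) * (-1)) s :=
      HasDerivAt.comp s ((hgv v).integral_hasStrictDerivAt 0 (-s)).hasDerivAt (hasDerivAt_neg s)
    refine (h1.sub h2).congr_deriv ?_
    ring

/-- The right triangle with vertices `(0, 0)`, `(1, 0)`, `(0, 1)`. -/
def stdTriangle : Set (ℝ × ℝ) := {p | 0 ≤ p.1 ∧ 0 ≤ p.2 ∧ p.1 + p.2 ≤ 1}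

lemma isCompact_stdTriangle : IsCompact stdTriangle := by
  refine (isCompact_Icc (a := ((0:ℝ), (0:ℝ))) (b := (1, 1))).of_isClosed_subset ?_ ?_
  · exact (isClosed_le continuous_const continuous_fst).inter
      ((isClosed_le continuous_const continuous_snd).inter
        (isClosed_le (continuous_fst.add continuous_snd) continuous_const))
  · rintro ⟨x, y⟩ ⟨h1, h2, h3⟩
    simp only at h1 h2 h3
    exact ⟨⟨h1, h2⟩, by simp; linarith, by simp; linarith⟩

lemma integral_stdTriangle (h : ℝ × ℝ → ℝ) (hh : Continuous h) :
    ∫ p in stdTriangle, h p = ∫ v in (0:ℝ)..1, ∫ u in (0:ℝ)..(1 - v), h (v, u) := by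
  have hm : MeasurableSet stdTriangle := isCompact_stdTriangle.measurableSet
  have hint : Integrable (stdTriangle.indicator h) :=
    (integrable_indicator_iff hm).2 (hh.continuousOn.integrableOn_compact isCompact_stdTriangle)
  rw [← integral_indicator hm, Measure.volume_eq_prod, integral_prod _ hint,
    intervalIntegral.integral_of_le zero_le_one, ← integral_Icc_eq_integral_Ioc,
    ← integral_indicator measurableSet_Icc]
  congr 1
  funext v
  by_cases hv : v ∈ Set.Icc (0:ℝ) 1
  · rw [Set.indicator_of_mem hv, intervalIntegral.integral_of_le (by linarith [hv.2]),
      ← integral_Icc_eq_integral_Ioc, ← integral_indicator measurableSet_Icc]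
    congr 1
    funext u
    have : (v, u) ∈ stdTriangle ↔ u ∈ Set.Icc 0 (1 - v) :=
      ⟨fun ⟨_, b, c⟩ => ⟨b, by simp only at c; linarith⟩,
        fun ⟨b, c⟩ => ⟨hv.1, b, by simp only; linarith⟩⟩
    by_cases hu : u ∈ Set.Icc 0 (1 - v)
    · rw [Set.indicator_of_mem hu, Set.indicator_of_mem (this.2 hu)]
    · rw [Set.indicator_of_notMem hu, Set.indicator_of_notMem (fun k => hu (this.1 k))]
  · rw [Set.indicator_of_notMem hv]
    refine integral_eq_zero_of_ae (Eventually.of_forall fun u => ?_)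
    refine Set.indicator_of_notMem ?_ _
    rintro ⟨a, b, c⟩
    simp only at a b c
    exact hv ⟨a, by linarith⟩

lemma convexHull_eq_image_stdTriangle (A B C : Plane) :
    convexHull ℝ ({A, B, C} : Set Plane) =
      (fun p : ℝ × ℝ => A + (p.1 • (C - A) + p.2 • (B - A))) '' stdTriangle := by
  apply Set.Subset.antisymm
  · refine convexHull_min ?_ ?_
    · rintro P (rfl | rfl | rfl)
      · exact ⟨(0, 0), by simp [stdTriangle], by simp⟩
      · exact ⟨(0, 1), by simp [stdTriangle], by simp⟩
      · exact ⟨(1, 0), by simp [stdTriangle], by simp⟩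
    · rintro _ ⟨⟨x, y⟩, ⟨h1, h2, h3⟩, rfl⟩ _ ⟨⟨z, w⟩, ⟨k1, k2, k3⟩, rfl⟩ a b ha hb hab
      simp only at h1 h2 h3 k1 k2 k3
      refine ⟨(a * x + b * z, a * y + b * w), ⟨by positivity, by positivity, ?_⟩, ?_⟩
      · simp only
        nlinarith
      · obtain rfl : b = 1 - a := by linarith
        simp only
        module
  · rintro _ ⟨⟨x, y⟩, ⟨h1, h2, h3⟩, rfl⟩
    simp only at h1 h2 h3
    have hA : A ∈ convexHull ℝ ({A, B, C} : Set Plane) := subset_convexHull _ _ (by simp)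
    have hB : B ∈ convexHull ℝ ({A, B, C} : Set Plane) := subset_convexHull _ _ (by simp)
    have hC : C ∈ convexHull ℝ ({A, B, C} : Set Plane) := subset_convexHull _ _ (by simp)
    have := (convex_convexHull ℝ ({A, B, C} : Set Plane)).sum_mem (t := Finset.univ)
      (w := ![1 - x - y, y, x]) (z := ![A, B, C])
      (by intro i _; fin_cases i <;> simp <;> linarith)
      (by simp [Fin.sum_univ_three])
      (by intro i _; fin_cases i <;> simpa)
    simp only [Fin.sum_univ_three, Matrix.cons_val] at this
    convert this using 1
    simp only
    module

/-- In affine coordinates on a nondegenerate triangle, Lebesgue measure is a positive multiple of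
Lebesgue measure on `ℝ × ℝ`, by uniqueness of Haar measure; the multiple is immaterial. -/
lemma exists_areaDist_eq (A B C : Plane) (hAI : AffineIndependent ℝ ![A, B, C]) :
    ∃ k : ℝ, 0 < k ∧ ∀ X : Plane, areaDist A B C X =
      k * ∫ v in (0:ℝ)..1, ∫ u in (0:ℝ)..(1 - v), ‖A + (v • (C - A) + u • (B - A)) - X‖ := by
  have hinj : ∀ x y : ℝ, x • (C - A) + y • (B - A) = 0 → x = 0 ∧ y = 0 := by
    have h := (affineIndependent_iff_linearIndependent_vsub ℝ _ (0 : Fin 3)).1 hAI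
    let e : Fin 2 → {x : Fin 3 // x ≠ 0} := ![⟨2, by decide⟩, ⟨1, by decide⟩]
    have he : Function.Injective e := by decide
    have h2 := h.comp e he
    intro x y hxy
    have := Fintype.linearIndependent_iff.1 h2 ![x, y]
      (by simpa [Fin.sum_univ_two, e] using hxy)
    exact ⟨this 0, this 1⟩
  let L₀ : ℝ × ℝ →ₗ[ℝ] Plane :=
    (LinearMap.fst ℝ ℝ ℝ).smulRight (C - A) + (LinearMap.snd ℝ ℝ ℝ).smulRight (B - A)
  have hL₀ : Function.Injective L₀ := by
    rw [← LinearMap.ker_eq_bot, LinearMap.ker_eq_bot']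
    rintro ⟨x, y⟩ h
    obtain ⟨rfl, rfl⟩ := hinj x y (by simpa [L₀] using h)
    rfl
  let L : (ℝ × ℝ) ≃L[ℝ] Plane :=
    (L₀.linearEquivOfInjective hL₀ (by simp)).toContinuousLinearEquiv
  have hL : ∀ p : ℝ × ℝ, L p = p.1 • (C - A) + p.2 • (B - A) := fun p => by
    simp [L, L₀]
  let e : (ℝ × ℝ) ≃ₜ Plane := L.toHomeomorph.trans (Homeomorph.addLeft A)
  have he : ∀ p, e p = A + (p.1 • (C - A) + p.2 • (B - A)) := fun p => by
    simp [e, hL]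
  have hmap : Measure.map e volume = Measure.map L (volume : Measure (ℝ × ℝ)) := by
    have : (e : ℝ × ℝ → Plane) = (fun y => A + y) ∘ L := by
      funext p; simp [e]
    rw [this, ← Measure.map_map (by fun_prop) (by fun_prop), map_add_left_eq_self]
  have : (Measure.map L (volume : Measure (ℝ × ℝ))).IsAddHaarMeasure := inferInstance
  set c := Measure.addHaarScalarFactor (volume : Measure Plane) (Measure.map L volume) with hc
  have hvol : (volume : Measure Plane) = c • Measure.map L volume :=
    Measure.isAddLeftInvariant_eq_smul _ _
  have hcpos : 0 < c := Measure.addHaarScalarFactor_pos_of_isAddHaarMeasure _ _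
  refine ⟨c, by exact_mod_cast hcpos, fun X => ?_⟩
  have hS : convexHull ℝ ({A, B, C} : Set Plane) = e '' stdTriangle := by
    rw [convexHull_eq_image_stdTriangle]
    exact Set.image_congr fun p _ => (he p).symm
  rw [areaDist, hvol, Measure.restrict_smul, integral_smul_nnreal_measure, ← hmap,
    e.measurableEmbedding.setIntegral_map, hS, Set.preimage_image_eq _ e.injective,
    integral_stdTriangle _ (by fun_prop), NNReal.smul_def, smul_eq_mul]
  simp only [he]

/-- Stationarity of the area distance at `m` in the direction `B - A`. -/
lemma average_eq (A B C m : Plane) (hAI : AffineIndependent ℝ ![A, B, C])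
    (hmin : ∀ X : Plane, areaDist A B C m ≤ areaDist A B C X) :
    (∫ t in (0:ℝ)..1, ‖(1 - t) • A + t • C - m‖) =
      ∫ t in (0:ℝ)..1, ‖(1 - t) • B + t • C - m‖ := by
  obtain ⟨k, hk, hX⟩ := exists_areaDist_eq A B C hAI
  obtain ⟨g, hgdef⟩ : ∃ g : ℝ → ℝ → ℝ,
      ∀ v u, g v u = ‖A + (v • (C - A) + u • (B - A)) - m‖ := ⟨_, fun _ _ => rfl⟩
  have hg : Continuous (Function.uncurry g) := by
    simp only [Function.uncurry_def, hgdef]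
    fun_prop
  have hd := hasDerivAt_integral_shift g hg
  have hloc : IsLocalMin
      (fun s : ℝ => ∫ v in (0:ℝ)..1, ∫ u in (0:ℝ)..(1 - v), g v (u - s)) 0 := by
    refine Eventually.of_forall fun s => ?_
    have h := hmin (m + s • (B - A))
    rw [hX, hX] at h
    have h' := le_of_mul_le_mul_left h hk
    have hs : ∀ v u : ℝ, A + (v • (C - A) + u • (B - A)) - (m + s • (B - A)) =
        A + (v • (C - A) + (u - s) • (B - A)) - m := fun v u => by module
    simp only [hs] at h'
    simpa only [hgdef, sub_zero] using h'
  have h0 := hloc.hasDerivAt_eq_zero hd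
  have hc₁ : Continuous fun v => g v 0 :=
    hg.comp (by fun_prop : Continuous fun v : ℝ => (v, (0:ℝ)))
  have hc₂ : Continuous fun v => g v (1 - v) :=
    hg.comp (by fun_prop : Continuous fun v : ℝ => (v, 1 - v))
  rw [intervalIntegral.integral_sub (hc₁.intervalIntegrable _ _)
    (hc₂.intervalIntegrable _ _)] at h0
  have e₁ : ∀ t : ℝ, g t 0 = ‖(1 - t) • A + t • C - m‖ := fun t =>
    (hgdef _ _).trans (congrArg norm (by module))
  have e₂ : ∀ t : ℝ, g t (1 - t) = ‖(1 - t) • B + t • C - m‖ := fun t =>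
    (hgdef _ _).trans (congrArg norm (by module))
  have h1 := sub_eq_zero.1 h0
  simp only [e₁, e₂] at h1
  exact h1

lemma average_symm (A B m : Plane) :
    (∫ t in (0:ℝ)..1, ‖(1 - t) • A + t • B - m‖) =
      ∫ t in (0:ℝ)..1, ‖(1 - t) • B + t • A - m‖ := by
  have h := intervalIntegral.integral_comp_sub_left (a := 0) (b := 1)
    (fun t : ℝ => ‖(1 - t) • B + t • A - m‖) 1
  simp only [sub_sub_cancel, sub_self, sub_zero] at h
  rw [← h]
  simp only [add_comm]

/-- First-order optimality condition for the geometric median of a triangular region: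
the average distances from the median to the three sides are equal. -/
theorem median_area_equal_average_side_distances
    (A B C m : Plane) (hAI : AffineIndependent ℝ ![A, B, C])
    (hmin : ∀ X : Plane, areaDist A B C m ≤ areaDist A B C X) :
    (∫ t in (0:ℝ)..1, ‖(1 - t) • B + t • C - m‖) =
      (∫ t in (0:ℝ)..1, ‖(1 - t) • C + t • A - m‖) ∧
    (∫ t in (0:ℝ)..1, ‖(1 - t) • C + t • A - m‖) =
      (∫ t in (0:ℝ)..1, ‖(1 - t) • A + t • B - m‖) := by
  have hset : ({C, B, A} : Set Plane) = {A, B, C} := by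
    ext x
    simp only [Set.mem_insert_iff, Set.mem_singleton_iff]
    tauto
  have h₁ := average_eq A B C m hAI hmin
  have h₂ := average_eq C B A m hAI.comm_left.comm_right.comm_left
    (by simpa only [areaDist, hset] using hmin)
  exact ⟨by rw [← h₁, average_symm A C], by rw [h₂, average_symm B A]⟩
end
end

section
/- For all reals λ₁, λ₂, λ₃ > 0 with λ₁ + λ₂ + λ₃ = 1, there exist affinely independent points A, B, C ∈ ℝ² and a global minimizer m of the function X ↦ ‖A − X‖ + ‖B − X‖ + ‖C − X‖ such that m = λ₁·A + λ₂·B + λ₃·C. In other words, every point with strictly positive barycentric coordinates is realized as the Fermat–Torricelli point of some nondegenerate triangle. -/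
/-!
Three unit vectors `u`, `v`, `w` at mutual angles of 120 degrees sum to zero. Take the triangle with
vertices `u / l1`, `v / l2`, `w / l3`. Its barycentric combination with weights `l1, l2, l3` is
`u + v + w = 0`, and the origin minimizes the sum of distances, because bounding each distance
`‖c • u - X‖` below by its component `c - ⟪u, X⟫` along the unit vector `u` and summing makes the
terms in `X` cancel.
-/

open MeasureTheory Metric Filter

noncomputable section

lemma sub_inner_le_norm_smul_sub {u : Plane} (hu : ‖u‖ = 1) (c : ℝ) (X : Plane) :
    c - inner ℝ u X ≤ ‖c • u - X‖ := by
  have h := real_inner_le_norm u (c • u - X)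
  rw [inner_sub_right, real_inner_smul_right, real_inner_self_eq_norm_sq, hu] at h
  linarith

/-- First-order optimality: if unit vectors sum to zero, the origin is a geometric median of any
points on the rays they span. -/
lemma zero_minimizes_sum_norm {u v w : Plane} (hu : ‖u‖ = 1) (hv : ‖v‖ = 1) (hw : ‖w‖ = 1)
    (huvw : u + v + w = 0) {a b c : ℝ} (ha : 0 ≤ a) (hb : 0 ≤ b) (hc : 0 ≤ c) (X : Plane) :
    ‖a • u - 0‖ + ‖b • v - 0‖ + ‖c • w - 0‖ ≤ ‖a • u - X‖ + ‖b • v - X‖ + ‖c • w - X‖ := by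
  have hX : inner ℝ u X + inner ℝ v X + inner ℝ w X = 0 := by
    rw [← inner_add_left, ← inner_add_left, huvw, inner_zero_left]
  have h1 := sub_inner_le_norm_smul_sub hu a X
  have h2 := sub_inner_le_norm_smul_sub hv b X
  have h3 := sub_inner_le_norm_smul_sub hw c X
  simp only [sub_zero, norm_smul, hu, hv, hw, Real.norm_eq_abs, abs_of_nonneg ha,
    abs_of_nonneg hb, abs_of_nonneg hc]
  linarith

/-- Every triple of strictly positive barycentric coordinates summing to `1` is realized
by the Fermat–Torricelli point of some nondegenerate triangle. -/
theorem fermat_torricelli_surjective_on_positive_barycentric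
    (l1 l2 l3 : ℝ) (h1 : 0 < l1) (h2 : 0 < l2) (h3 : 0 < l3)
    (hsum : l1 + l2 + l3 = 1) :
    ∃ A B C m : Plane, AffineIndependent ℝ ![A, B, C] ∧
      (∀ X : Plane, ‖A - m‖ + ‖B - m‖ + ‖C - m‖ ≤ ‖A - X‖ + ‖B - X‖ + ‖C - X‖) ∧
      m = l1 • A + l2 • B + l3 • C := by
  have hs : (√3 / 2) ^ 2 = (3 / 4 : ℝ) := by
    rw [div_pow, Real.sq_sqrt (by norm_num)]
    norm_num
  have hs0 : (0 : ℝ) < √3 / 2 := by positivity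
  generalize √3 / 2 = s at hs hs0
  have hu : ‖(!₂[1, 0] : Plane)‖ = 1 := by
    simp [EuclideanSpace.norm_eq, Fin.sum_univ_two]
  have hv : ‖(!₂[-1 / 2, s] : Plane)‖ = 1 := by
    simp only [EuclideanSpace.norm_eq, Fin.sum_univ_two, Real.norm_eq_abs, sq_abs]
    norm_num [hs]
  have hw : ‖(!₂[-1 / 2, -s] : Plane)‖ = 1 := by
    simp only [EuclideanSpace.norm_eq, Fin.sum_univ_two, Real.norm_eq_abs, sq_abs]
    norm_num [hs]
  have huvw : (!₂[1, 0] + !₂[-1 / 2, s] + !₂[-1 / 2, -s] : Plane) = 0 := by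
    ext i
    fin_cases i <;> norm_num
  refine ⟨l1⁻¹ • !₂[1, 0], l2⁻¹ • !₂[-1 / 2, s], l3⁻¹ • !₂[-1 / 2, -s], 0, ?_,
    zero_minimizes_sum_norm hu hv hw huvw (by positivity) (by positivity) (by positivity), ?_⟩
  · rw [affineIndependent_iff_of_fintype]
    intro x hx hx0
    rw [Finset.weightedVSub_eq_linear_combination _ hx] at hx0
    have e0 := congrArg (fun p : Plane => p 0) hx0
    have e1 := congrArg (fun p : Plane => p 1) hx0
    simp [Fin.sum_univ_three] at hx e0 e1
    -- The relation among `u`, `v`, `w` is unique up to scale, so `x i / l i` is constant;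
    -- since the `x i` sum to 0 and the `l i` to 1, that constant is 0.
    have k1 : x 1 * l2⁻¹ = x 2 * l3⁻¹ := by
      apply mul_right_cancel₀ hs0.ne'
      linarith
    have k0 : x 0 * l1⁻¹ = x 2 * l3⁻¹ := by linarith
    rw [← div_eq_mul_inv, div_eq_iff h2.ne'] at k1
    rw [← div_eq_mul_inv, div_eq_iff h1.ne'] at k0
    have k2 : x 2 = x 2 * l3⁻¹ * l3 := by field_simp
    have hz : x 2 * l3⁻¹ = 0 := by
      linear_combination hx - k0 - k1 - k2 - x 2 * l3⁻¹ * hsum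
    rw [hz, zero_mul] at k0 k1 k2
    intro i
    fin_cases i <;> assumption
  · rw [smul_inv_smul₀ h1.ne', smul_inv_smul₀ h2.ne', smul_inv_smul₀ h3.ne', huvw]
end
end

section
/- Let A, B, C ∈ ℝ² be affinely independent. Then the perimeter distance functional f₁ of the triangle ABC attains a global minimum on ℝ², and the global minimizer is unique: there exists exactly one m ∈ ℝ² with f₁(m) ≤ f₁(X) for all X ∈ ℝ². -/
/-!
The functional is continuous (the integrands are jointly continuous in `t` and `X`) and tends to
infinity at infinity (each side contributes at least its length times `‖X‖` minus a constant), so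
by properness of the plane it attains its minimum.

For uniqueness, `norm_sub_midpoint_le` shows that every integrand, hence the functional, is
midpoint convex. If two distinct minimizers `X`, `Y` existed, all three sides would have to satisfy
the midpoint inequality with equality. The integrands being continuous, `sideDist_midpoint_lt`
turns a strict inequality at the initial vertex of a side into a strict inequality for that side;
hence there is equality at each vertex `P`, that is `‖(P - X) + (P - Y)‖ = ‖P - X‖ + ‖P - Y‖`. By
strict convexity of the Euclidean norm `P - X` and `P - Y` lie on a common ray, so `P` lies on the
line `XY` (`exists_smul_add_of_sameRay`). Then `A`, `B`, `C` are collinear, a contradiction.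
-/

open MeasureTheory Metric Filter

noncomputable section

/-- The mean distance from `X` to the points of the segment `PQ`. -/
def sideDist (P Q X : Plane) : ℝ := ∫ t in (0:ℝ)..1, ‖(1 - t) • P + t • Q - X‖

lemma perimDist_eq_s14 (A B C X : Plane) : perimDist A B C X =
    ‖A - B‖ * sideDist A B X + ‖B - C‖ * sideDist B C X + ‖C - A‖ * sideDist C A X := rfl

lemma continuous_sideDist (P Q : Plane) : Continuous (sideDist P Q) := by
  unfold sideDist
  apply intervalIntegral.continuous_parametric_intervalIntegral_of_continuous'
  fun_prop

lemma norm_sub_le_sideDist (P Q X : Plane) : ‖X‖ - (‖P‖ + ‖Q‖) ≤ sideDist P Q X := by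
  have h : ∫ _t in (0:ℝ)..1, (‖X‖ - (‖P‖ + ‖Q‖)) ≤ sideDist P Q X := by
    apply intervalIntegral.integral_mono_on zero_le_one (by simp)
      (Continuous.intervalIntegrable (by fun_prop) _ _)
    rintro t ⟨h0, h1⟩
    have e1 : ‖X‖ - ‖(1 - t) • P + t • Q‖ ≤ ‖(1 - t) • P + t • Q - X‖ := by
      rw [norm_sub_rev]; exact norm_sub_norm_le _ _
    have e2 : ‖(1 - t) • P + t • Q‖ ≤ ‖(1 - t) • P‖ + ‖t • Q‖ := norm_add_le _ _
    rw [norm_smul, norm_smul, Real.norm_of_nonneg h0, Real.norm_of_nonneg (by linarith)] at e2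
    nlinarith [norm_nonneg P, norm_nonneg Q]
  simpa using h

lemma norm_sub_midpoint (Z X Y : Plane) :
    ‖Z - midpoint ℝ X Y‖ = ‖(Z - X) + (Z - Y)‖ / 2 := by
  have : Z - midpoint ℝ X Y = (1 / 2 : ℝ) • ((Z - X) + (Z - Y)) := by
    rw [midpoint_eq_smul_add, invOf_eq_inv]; module
  rw [this, norm_smul]; norm_num; ring

lemma norm_sub_midpoint_le (Z X Y : Plane) :
    ‖Z - midpoint ℝ X Y‖ ≤ (‖Z - X‖ + ‖Z - Y‖) / 2 := by
  rw [norm_sub_midpoint]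
  linarith [norm_add_le (Z - X) (Z - Y)]

lemma integral_half_add (P Q X Y : Plane) :
    ∫ t in (0:ℝ)..1, (‖(1 - t) • P + t • Q - X‖ + ‖(1 - t) • P + t • Q - Y‖) / 2 =
      (sideDist P Q X + sideDist P Q Y) / 2 := by
  rw [intervalIntegral.integral_div, intervalIntegral.integral_add, sideDist, sideDist] <;>
    exact Continuous.intervalIntegrable (by fun_prop) _ _

lemma sideDist_midpoint_le (P Q X Y : Plane) :
    sideDist P Q (midpoint ℝ X Y) ≤ (sideDist P Q X + sideDist P Q Y) / 2 := by
  rw [← integral_half_add]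
  exact intervalIntegral.integral_mono_on zero_le_one
    (Continuous.intervalIntegrable (by fun_prop) _ _)
    (Continuous.intervalIntegrable (by fun_prop) _ _) fun t _ => norm_sub_midpoint_le _ _ _

lemma sideDist_midpoint_lt (P Q X Y : Plane) (h : ¬ SameRay ℝ (P - X) (P - Y)) :
    sideDist P Q (midpoint ℝ X Y) < (sideDist P Q X + sideDist P Q Y) / 2 := by
  rw [← integral_half_add]
  refine intervalIntegral.integral_lt_integral_of_continuousOn_of_le_of_exists_lt zero_lt_one
    (Continuous.continuousOn (by fun_prop)) (Continuous.continuousOn (by fun_prop))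
    (fun t _ => norm_sub_midpoint_le _ _ _) ⟨0, by simp, ?_⟩
  have := norm_add_lt_of_not_sameRay h
  simp only [sub_zero, one_smul, zero_smul, add_zero]
  rw [norm_sub_midpoint]
  linarith

/-- If `P - X` and `P - Y` lie on a common ray from the origin, then `P` lies on the line `XY`. -/
lemma exists_smul_add_of_sameRay {P X Y : Plane} (hXY : X ≠ Y)
    (h : SameRay ℝ (P - X) (P - Y)) : ∃ r : ℝ, P = r • (Y - X) + X := by
  obtain ⟨a, b, -, -, -, ha, hb⟩ := h.exists_eq_smul_add
  set w := (P - X) + (P - Y)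
  have hd : Y - X = (a - b) • w := by rw [sub_smul, ← ha, ← hb]; abel
  have hab : a - b ≠ 0 := by
    intro h0
    rw [h0, zero_smul, sub_eq_zero] at hd
    exact hXY hd.symm
  refine ⟨a / (a - b), ?_⟩
  rw [hd, smul_smul, div_mul_cancel₀ _ hab, ← ha]; abel

/-- For a nondegenerate triangle, the perimeter distance functional attains a global
minimum at exactly one point. -/
theorem median_perimeter_exists_unique
    (A B C : Plane) (hAI : AffineIndependent ℝ ![A, B, C]) :
    ∃! m : Plane, ∀ X : Plane, perimDist A B C m ≤ perimDist A B C X := by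
  have hne : ∀ i j : Fin 3, i ≠ j → 0 < ‖![A, B, C] i - ![A, B, C] j‖ := fun i j hij =>
    norm_pos_iff.2 (sub_ne_zero.2 fun h => hij (hAI.injective h))
  have hAB : 0 < ‖A - B‖ := hne 0 1 (by decide)
  have hBC : 0 < ‖B - C‖ := hne 1 2 (by decide)
  have hCA : 0 < ‖C - A‖ := hne 2 0 (by decide)
  have hex : ∃ m, ∀ X, perimDist A B C m ≤ perimDist A B C X := by
    apply Continuous.exists_forall_le
    · simp only [funext (perimDist_eq_s14 A B C)]
      have h1 := continuous_sideDist A B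
      have h2 := continuous_sideDist B C
      have h3 := continuous_sideDist C A
      fun_prop
    · have hlim : Tendsto (fun X : Plane => (‖A - B‖ + ‖B - C‖ + ‖C - A‖) *
          (‖X‖ + -(‖A‖ + ‖B‖ + ‖C‖))) (cocompact Plane) atTop :=
        (tendsto_atTop_add_const_right _ _ tendsto_norm_cocompact_atTop).const_mul_atTop
          (by positivity)
      refine tendsto_atTop_mono (fun X => ?_) hlim
      rw [perimDist_eq_s14, add_mul, add_mul]
      have a := norm_nonneg A
      have b := norm_nonneg B
      have c := norm_nonneg C
      gcongr
      · linarith [norm_sub_le_sideDist A B X]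
      · linarith [norm_sub_le_sideDist B C X]
      · linarith [norm_sub_le_sideDist C A X]
  obtain ⟨X, hX⟩ := hex
  refine ⟨X, hX, fun Y hY => ?_⟩
  by_contra hYX
  have hXY : X ≠ Y := Ne.symm hYX
  have hM := hX (midpoint ℝ X Y)
  have hM' := hY (midpoint ℝ X Y)
  simp only [perimDist_eq_s14] at hM hM'
  have key : ∀ {l P Q}, 0 < l →
      l * sideDist P Q (midpoint ℝ X Y) ≤ l * ((sideDist P Q X + sideDist P Q Y) / 2) :=
    fun hl => mul_le_mul_of_nonneg_left (sideDist_midpoint_le _ _ X Y) hl.le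
  have key' : ∀ {l P Q}, 0 < l → ¬ SameRay ℝ (P - X) (P - Y) →
      l * sideDist P Q (midpoint ℝ X Y) < l * ((sideDist P Q X + sideDist P Q Y) / 2) :=
    fun hl h => mul_lt_mul_of_pos_left (sideDist_midpoint_lt _ _ X Y h) hl
  have kA := key (P := A) (Q := B) hAB
  have kB := key (P := B) (Q := C) hBC
  have kC := key (P := C) (Q := A) hCA
  have rA : SameRay ℝ (A - X) (A - Y) := by
    by_contra h
    linarith [key' (Q := B) hAB h]
  have rB : SameRay ℝ (B - X) (B - Y) := by
    by_contra h
    linarith [key' (Q := C) hBC h]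
  have rC : SameRay ℝ (C - X) (C - Y) := by
    by_contra h
    linarith [key' (Q := A) hCA h]
  rw [affineIndependent_iff_not_collinear_set] at hAI
  apply hAI
  rw [collinear_iff_exists_forall_eq_smul_vadd]
  refine ⟨X, Y - X, ?_⟩
  rintro P (rfl | rfl | rfl)
  · exact exists_smul_add_of_sameRay hXY rA
  · exact exists_smul_add_of_sameRay hXY rB
  · exact exists_smul_add_of_sameRay hXY rC
end
end
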